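/- (Uniform upper bound on the temperature.) For all positive constants μ, κ, R, c_v and all M, m > 0 and K ≥ 1 there exists a constant C₃ > 0, depending only on μ, κ, R, c_v, M, m, K, such that: whenever (v,u,θ) is a classical solution of the one-dimensional compressible Navier–Stokes system on ℝ whose initial data are (M,m)-bounded and which is K-volume-bounded, then θ(x,t) ≤ C₃ for all (x,t) ∈ ℝ × [0,∞). -/

import Mathlib

/-!
The bound comes from four layers of a priori estimates, each with a constant depending only on the
physical parameters and on `M`, `m`, `K`. Norms are those of `L²(ℝ)`.

*Entropy* (`entropy_bounds`). The relative entropy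
`∫ u²/2 + R (v - 1 - log v) + c_v (θ - 1 - log θ)` decreases along the flow. Its dissipation is
bounded below by a multiple of `Dh u θ`, the integral `∫ u_x²/(1+θ) + θ_x²/(1+θ)²`, which is
therefore integrable over all times. Since no positive lower bound for `θ` is known, the logarithm
is regularised (`ps`), and the resulting error is removed by dominated convergence
(`Sol.er_small`). At each instant the dissipation controls the temperature:
`sup θ ≤ C (1 + Dh u θ)` (`sup_bounds`).

*Total energy* (`energy_bounds`). The functional
`∫ (c_v (θ - 1) + u²/2)²/2 + A u⁴/4 + u²/2`, with `A` large, satisfies a differential inequality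
whose coefficient is bounded by `1 + Dh u θ`. The uniform Gronwall lemma on windows of unit length
(`uniform_gronwall`) bounds `‖θ - 1‖` for all times and the integral of `‖θ_x‖² + ‖u_x‖²` over
every unit window.

*Effective flux* (`flux_bounds`). The flux `σ = (μ u_x - R θ)/v + R` satisfies `u_t = σ_x`. The
energy identity for `∫ v σ²/2` involves `u_{xt}`, which need not exist; it is derived with `u_x`
replaced by difference quotients, whose step is then sent to zero (`Sol.Z_energy`). The slice
inequality `Z_slice` and the uniform Gronwall lemma bound `‖σ‖` for all times and the integral of
`‖σ_x‖²` over unit windows. Hence `sup σ² ≤ ‖σ‖² + ‖σ_x‖²` is integrable over unit windows.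

*High powers* (`temperature_of_bounds`). In the temperature equation the heating term is `u_x` times
`σ - R`, at most linear in `θ` with a coefficient of size `1 + σ²` (`heat_le`). Every time is
preceded within one unit by a time at which `Dh u θ`, and so `θ`, is bounded (`Sol.good_time`).
From that time on, Gronwall's inequality gives `∫ (θ - 1)^p ≤ A Q^p` for even `p ≥ 4`, with `A` and
`Q` independent of `p`, and thus `θ - 1 ≤ Q` (`le_of_power_integrals`).

The hypotheses provide derivatives in `x` and in `t` separately, without joint continuity. Joint
measurability is recorded by `TM`, and all time derivatives of integrals are taken in integrated
form, using the integrable majorants `d0` and `dm` (`slab_ftc`, `Sol.energy`).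
-/

open MeasureTheory Filter Set

noncomputable section

/-- Partial derivative in the spatial variable. -/
def pdx (f : ℝ → ℝ → ℝ) (x t : ℝ) : ℝ := deriv (fun y => f y t) x

/-- Partial derivative in the time variable. -/
def pdt (f : ℝ → ℝ → ℝ) (x t : ℝ) : ℝ := deriv (fun s => f x s) t

/-- The `L²(ℝ)` norm, valued in `ℝ≥0∞`. -/
def L2 (f : ℝ → ℝ) : ENNReal := eLpNorm f 2 volume

/-- The `H¹(ℝ)` norm, valued in `ℝ≥0∞`. -/
def H1 (f : ℝ → ℝ) : ENNReal := L2 f + L2 (deriv f)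

/-- The `H²(ℝ)` norm, valued in `ℝ≥0∞`. -/
def H2 (f : ℝ → ℝ) : ENNReal := L2 f + L2 (deriv f) + L2 (deriv (deriv f))

/-- A classical solution of the 1-D compressible Navier–Stokes system in Lagrangian
coordinates on `ℝ`, together with the regularity and far-field conditions. -/
structure IsClassicalSolution (μ κ R cv : ℝ) (v u θ : ℝ → ℝ → ℝ) : Prop where
  v_pos : ∀ x t : ℝ, 0 ≤ t → 0 < v x t
  θ_pos : ∀ x t : ℝ, 0 ≤ t → 0 < θ x t
  smooth_x_v : ∀ t : ℝ, 0 ≤ t → ContDiff ℝ 2 (fun x => v x t)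
  smooth_x_u : ∀ t : ℝ, 0 ≤ t → ContDiff ℝ 2 (fun x => u x t)
  smooth_x_θ : ∀ t : ℝ, 0 ≤ t → ContDiff ℝ 2 (fun x => θ x t)
  smooth_t_v : ∀ x t : ℝ, 0 ≤ t → DifferentiableAt ℝ (fun s => v x s) t
  smooth_t_u : ∀ x t : ℝ, 0 ≤ t → DifferentiableAt ℝ (fun s => u x s) t
  smooth_t_θ : ∀ x t : ℝ, 0 ≤ t → DifferentiableAt ℝ (fun s => θ x s) t
  eq_mass : ∀ x t : ℝ, 0 ≤ t → pdt v x t = pdx u x t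
  eq_momentum : ∀ x t : ℝ, 0 ≤ t →
    pdt u x t + pdx (fun y s => R * θ y s / v y s) x t
      = μ * pdx (fun y s => pdx u y s / v y s) x t
  eq_energy : ∀ x t : ℝ, 0 ≤ t →
    cv * pdt θ x t + (R * θ x t / v x t) * pdx u x t
      = κ * pdx (fun y s => pdx θ y s / v y s) x t + μ * (pdx u x t) ^ 2 / v x t
  reg_H1 : ∀ T : ℝ, 0 ≤ T → ∃ B : ℝ, ∀ t ∈ Icc (0 : ℝ) T,
    H1 (fun x => v x t - 1) + H1 (fun x => u x t) + H1 (fun x => θ x t - 1)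
      ≤ ENNReal.ofReal B
  reg_H2 : ∀ T : ℝ, 0 < T →
    (∫⁻ t in Icc (0 : ℝ) T,
      (H2 (fun x => u x t) ^ 2 + H2 (fun x => θ x t - 1) ^ 2)) < ⊤
  farfield_v : ∀ t : ℝ, 0 ≤ t → Tendsto (fun x => v x t) (cocompact ℝ) (nhds 1)
  farfield_u : ∀ t : ℝ, 0 ≤ t → Tendsto (fun x => u x t) (cocompact ℝ) (nhds 0)
  farfield_θ : ∀ t : ℝ, 0 ≤ t → Tendsto (fun x => θ x t) (cocompact ℝ) (nhds 1)

/-- The initial data of `(v, u, θ)` are `(M, m)`-bounded. -/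
def InitBounded (M m : ℝ) (v u θ : ℝ → ℝ → ℝ) : Prop :=
  H1 (fun x => v x 0 - 1) + H1 (fun x => u x 0) + H1 (fun x => θ x 0 - 1)
      ≤ ENNReal.ofReal M
    ∧ (∀ x : ℝ, m ≤ v x 0) ∧ (∀ x : ℝ, m ≤ θ x 0)

/-- The solution is `K`-volume-bounded. -/
def VolBounded (K : ℝ) (v : ℝ → ℝ → ℝ) : Prop :=
  ∀ x t : ℝ, 0 ≤ t → K⁻¹ ≤ v x t ∧ v x t ≤ K

end

/-! ### Calculus on the line for square-integrable functions -/

/-- Integration by parts on `ℝ` for functions which are square integrable together with their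
derivatives; there are no boundary terms. -/
theorem ibp {f f' g g' : ℝ → ℝ} (hf : ∀ x, HasDerivAt f (f' x) x)
    (hg : ∀ x, HasDerivAt g (g' x) x) (mf : MemLp f 2 volume) (mf' : MemLp f' 2 volume)
    (mg : MemLp g 2 volume) (mg' : MemLp g' 2 volume) :
    ∫ x, f x * g' x = - ∫ x, f' x * g x :=
  integral_mul_deriv_eq_deriv_mul_of_integrable (fun x _ => hf x) (fun x _ => hg x)
    (mf.integrable_mul mg') (mf'.integrable_mul mg) (mf.integrable_mul mg)

theorem abs_le_integral_deriv {g g' : ℝ → ℝ} (hg : ∀ x, HasDerivAt g (g' x) x)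
    (ig : Integrable g) (ig' : Integrable g') (x : ℝ) : |g x| ≤ ∫ y, |g' y| := by
  have h0 : Tendsto g atBot (nhds 0) :=
    tendsto_zero_of_hasDerivAt_of_integrableOn_Iic (a := x) (fun y _ => hg y)
      ig'.integrableOn ig.integrableOn
  have h1 : ∫ y in Iic x, g' y = g x - 0 :=
    integral_Iic_of_hasDerivAt_of_tendsto' (fun y _ => hg y) ig'.integrableOn h0
  rw [sub_zero] at h1
  rw [← h1]
  calc |∫ y in Iic x, g' y| ≤ ∫ y in Iic x, |g' y| := abs_integral_le_integral_abs
    _ ≤ ∫ y, |g' y| := setIntegral_le_integral ig'.abs (ae_of_all _ fun y => abs_nonneg _)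

/-- Sobolev embedding `H¹(ℝ) ⊂ L^∞(ℝ)`. -/
theorem sq_le_of_memLp {f f' : ℝ → ℝ} (hf : ∀ x, HasDerivAt f (f' x) x)
    (mf : MemLp f 2 volume) (mf' : MemLp f' 2 volume) (x : ℝ) :
    f x ^ 2 ≤ (∫ y, f y ^ 2) + ∫ y, f' y ^ 2 := by
  have h1 : ∀ y, HasDerivAt (fun y => f y ^ 2) (2 * (f y * f' y)) y := fun y => by
    have := (hf y).pow 2
    convert! this using 1
    simp; ring
  have i2 : Integrable (fun y => 2 * (f y * f' y)) := (mf.integrable_mul mf').const_mul 2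
  have h2 := abs_le_integral_deriv h1 mf.integrable_sq i2 x
  rw [abs_of_nonneg (sq_nonneg _)] at h2
  refine h2.trans ?_
  rw [← integral_add mf.integrable_sq mf'.integrable_sq]
  refine integral_mono i2.abs (mf.integrable_sq.add mf'.integrable_sq) fun y => ?_
  simp only
  rw [abs_le]
  constructor <;> nlinarith [sq_nonneg (f y - f' y), sq_nonneg (f y + f' y)]

/-! ### Gronwall inequalities with integrable coefficients -/

theorem ac_exp_neg {A : ℝ → ℝ} {s t : ℝ} (hA : AbsolutelyContinuousOnInterval A s t)
    (hpos : ∀ τ ∈ uIcc s t, 0 ≤ A τ) :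
    AbsolutelyContinuousOnInterval (fun τ => Real.exp (-A τ)) s t := by
  have key : ∀ a b : ℝ, 0 ≤ a → 0 ≤ b → |Real.exp (-a) - Real.exp (-b)| ≤ |a - b| := by
    have : ∀ a b : ℝ, 0 ≤ a → a ≤ b → Real.exp (-a) - Real.exp (-b) ≤ b - a := by
      intro a b ha hab
      have e : Real.exp (-b) = Real.exp (-a) * Real.exp (a - b) := by
        rw [← Real.exp_add]; congr 1; ring
      have h1 := Real.add_one_le_exp (a - b)
      have h2 : Real.exp (-a) ≤ 1 := Real.exp_le_one_iff.mpr (by linarith)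
      have h3 := Real.exp_pos (-a)
      rw [e]
      nlinarith
    intro a b ha hb
    rcases le_total a b with h | h
    · rw [abs_of_nonneg (by have := Real.exp_le_exp.mpr (neg_le_neg h); linarith),
        abs_of_nonpos (by linarith)]
      linarith [this a b ha h]
    · rw [abs_of_nonpos (by have := Real.exp_le_exp.mpr (neg_le_neg h); linarith),
        abs_of_nonneg (by linarith)]
      linarith [this b a hb h]
  rw [absolutelyContinuousOnInterval_iff] at hA ⊢
  intro ε hε
  obtain ⟨δ, hδ, H⟩ := hA ε hε
  refine ⟨δ, hδ, fun E hE hE2 => lt_of_le_of_lt ?_ (H E hE hE2)⟩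
  refine Finset.sum_le_sum fun i hi => ?_
  have hm := hE.1 i hi
  simp only [Real.dist_eq]
  exact key _ _ (hpos _ hm.1) (hpos _ hm.2)

/-- Gronwall's inequality for an absolutely continuous function, in integrated form. -/
theorem gronwall_int {y h α : ℝ → ℝ} {c s t : ℝ} (hst : s ≤ t)
    (hy : ∀ τ ∈ Icc s t, y τ = y s + ∫ r in s..τ, h r)
    (hh : IntervalIntegrable h volume s t) (hα : IntervalIntegrable α volume s t)
    (hα0 : ∀ τ ∈ Icc s t, 0 ≤ α τ)
    (hle : ∀ᵐ τ, τ ∈ Icc s t → h τ ≤ α τ * (y τ + c)) :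
    y t + c ≤ (y s + c) * Real.exp (∫ τ in s..t, α τ) := by
  have us : uIcc s t = Icc s t := uIcc_of_le hst
  set A : ℝ → ℝ := fun τ => ∫ r in s..τ, α r with hA
  have acA : AbsolutelyContinuousOnInterval A s t :=
    hα.absolutelyContinuousOnInterval_intervalIntegral (by simp)
  have A0 : ∀ τ ∈ uIcc s t, 0 ≤ A τ := by
    intro τ hτ
    rw [us] at hτ
    exact intervalIntegral.integral_nonneg hτ.1 fun r hr => hα0 r ⟨hr.1, hr.2.trans hτ.2⟩
  set Y : ℝ → ℝ := fun τ => (y s + c) + ∫ r in s..τ, h r with hY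
  have acH : AbsolutelyContinuousOnInterval (fun τ => ∫ r in s..τ, h r) s t :=
    hh.absolutelyContinuousOnInterval_intervalIntegral (by simp)
  have acC : AbsolutelyContinuousOnInterval (fun _ : ℝ => y s + c) s t :=
    (contDiff_const.contDiffOn (n := 1)).absolutelyContinuousOnInterval
  have acY : AbsolutelyContinuousOnInterval Y s t := acC.add acH
  have acE := ac_exp_neg acA A0
  have acP := acY.fun_mul acE
  have e1 := acP.integral_deriv_eq_sub
  have hle2 : ∫ x in s..t, deriv (fun x => Y x * Real.exp (-A x)) x ≤ 0 := by
    rw [intervalIntegral.integral_of_le hst]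
    refine integral_nonpos_of_ae ?_
    rw [Filter.EventuallyLE, ae_restrict_iff' measurableSet_Ioc]
    filter_upwards [hle, hh.ae_hasDerivAt_integral, hα.ae_hasDerivAt_integral]
      with x hx1 hx2 hx3 hx
    have hxI : x ∈ Icc s t := Ioc_subset_Icc_self hx
    have hd1 : HasDerivAt Y (h x) x :=
      (hx2 (us ▸ hxI) s (by simp)).const_add _
    have hd2 : HasDerivAt A (α x) x := hx3 (us ▸ hxI) s (by simp)
    have hd := hd1.mul hd2.neg.exp
    have hd' : deriv (fun x => Y x * Real.exp (-A x)) x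
      = h x * Real.exp (-A x) + Y x * (Real.exp (-A x) * -α x) := hd.deriv
    rw [hd']
    have e : Y x = y x + c := by
      simp only [hY]; rw [hy x hxI]; ring
    have := hx1 hxI
    have hp := Real.exp_pos (-A x)
    rw [e]
    simp only [Pi.zero_apply]
    nlinarith
  have e2 : Y t * Real.exp (-A t) ≤ Y s * Real.exp (-A s) := by linarith
  have As : A s = 0 := by simp [hA]
  have Ys : Y s = y s + c := by simp [hY]
  have Yt : Y t = y t + c := by simp only [hY]; rw [hy t ⟨hst, le_rfl⟩]; ring
  rw [As, Ys, Yt, neg_zero, Real.exp_zero, mul_one, Real.exp_neg] at e2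
  rw [mul_inv_le_iff₀ (Real.exp_pos _)] at e2
  exact e2

/-- Uniform Gronwall lemma.  The coefficient and the unknown are only controlled on time
intervals of unit length; the bound obtained does not depend on time.  The dissipation `d` is
then also bounded on each unit interval. -/
theorem uniform_gronwall (C₁ : ℝ) :
    ∃ C₂ : ℝ, ∀ y h α d : ℝ → ℝ,
      (∀ t, 0 ≤ t → 0 ≤ y t) → (∀ t, 0 ≤ t → 0 ≤ α t) →
      (∀ s t, 0 ≤ s → s ≤ t → y t = y s + ∫ r in s..t, h r) →
      (∀ s t, 0 ≤ s → s ≤ t → IntervalIntegrable h volume s t) →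
      (∀ s t, 0 ≤ s → s ≤ t → IntervalIntegrable α volume s t) →
      (∀ s t, 0 ≤ s → s ≤ t → IntervalIntegrable d volume s t) →
      (∀ᵐ t, 0 ≤ t → 0 ≤ d t) →
      (∀ᵐ t, 0 ≤ t → h t + d t ≤ α t * (y t + 1)) →
      y 0 ≤ C₁ → (∀ s, 0 ≤ s → ∫ r in s..(s+1), y r ≤ C₁) →
      (∀ s, 0 ≤ s → ∫ r in s..(s+1), α r ≤ C₁) →
      ∀ t, 0 ≤ t → y t ≤ C₂ ∧ ∫ r in t..(t+1), d r ≤ C₂ := by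
  refine ⟨(C₁ + 1) * Real.exp C₁ + ((C₁ + 1) * Real.exp C₁ + 1) * C₁, ?_⟩
  intro y h α d hy0 hα0 hy hh hα hd hd0 hle hinit hyw hαw
  have hC : 0 ≤ C₁ := (hy0 0 le_rfl).trans hinit
  have base : ∀ s t, 0 ≤ s → s ≤ t → t ≤ s + 1 → y s ≤ C₁ →
      y t + 1 ≤ (C₁ + 1) * Real.exp C₁ := by
    intro s t hs hst ht hys
    have g := gronwall_int (y := y) (h := h) (α := α) (c := 1) hst
      (fun τ hτ => hy s τ hs hτ.1) (hh s t hs hst) (hα s t hs hst)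
      (fun τ hτ => hα0 τ (hs.trans hτ.1)) (by
        filter_upwards [hd0, hle] with τ h1 h2 hτ
        have := h1 (hs.trans hτ.1); have := h2 (hs.trans hτ.1); linarith)
    have m : ∫ τ in s..t, α τ ≤ C₁ := by
      refine le_trans ?_ (hαw s hs)
      rw [← intervalIntegral.integral_add_adjacent_intervals (hα s t hs hst)
        (hα t (s+1) (hs.trans hst) ht)]
      have := intervalIntegral.integral_nonneg (μ := volume) ht
        (fun r hr => hα0 r (hs.trans (hst.trans hr.1)))
      linarith
    refine g.trans ?_
    have := hy0 s hs
    gcongr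
  have yb : ∀ t, 0 ≤ t → y t ≤ (C₁ + 1) * Real.exp C₁ := by
    intro t ht
    rcases le_total t 1 with h1 | h1
    · have := base 0 t le_rfl ht (by linarith) hinit; linarith
    · have hs : 0 ≤ t - 1 := by linarith
      -- a time in the preceding unit window at which `y` is at most its mean
      have ci : ContinuousOn y (Icc (t-1) t) := by
        have : ContinuousOn (fun τ => y (t-1) + ∫ r in (t-1)..τ, h r) (Icc (t-1) t) := by
          have c := intervalIntegral.continuousOn_primitive_interval'
            (hh (t-1) t hs (by linarith)) (a := t-1) (by simp)
          rw [uIcc_of_le (by linarith)] at c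
          exact continuousOn_const.add c
        exact this.congr fun τ hτ => hy _ _ hs hτ.1
      have ii : IntervalIntegrable y volume (t-1) t :=
        ContinuousOn.intervalIntegrable (by rwa [uIcc_of_le (by linarith)])
      have hex : ∃ s ∈ Icc (t-1) t, y s ≤ C₁ := by
        by_contra! hcon
        have hw := hyw (t-1) hs
        rw [show t - 1 + 1 = t by ring] at hw
        obtain ⟨z, hz, hmin⟩ := isCompact_Icc.exists_isMinOn ⟨t, by constructor <;> linarith⟩ ci
        have l : ∫ r in (t-1)..t, y z ≤ ∫ r in (t-1)..t, y r :=
          intervalIntegral.integral_mono_on (by linarith) intervalIntegrable_const ii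
            fun r hr => hmin hr
        rw [intervalIntegral.integral_const] at l
        simp at l
        linarith [hcon z hz]
      obtain ⟨s, hsI, hsy⟩ := hex
      have := base s t (hs.trans hsI.1) hsI.2 (by linarith [hsI.1]) hsy
      linarith
  intro t ht
  set Q := (C₁ + 1) * Real.exp C₁
  have hQ : 0 ≤ Q := by positivity
  refine ⟨(yb t ht).trans (by nlinarith), ?_⟩
  have t1 : t ≤ t + 1 := by linarith
  have m : ∫ r in t..(t+1), (h r + d r) ≤ ∫ r in t..(t+1), α r * (Q + 1) := by
    refine intervalIntegral.integral_mono_ae_restrict t1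
      ((hh t _ ht t1).add (hd t _ ht t1)) ((hα t _ ht t1).mul_const _) ?_
    rw [Filter.EventuallyLE, ae_restrict_iff' measurableSet_Icc]
    filter_upwards [hle] with r hr hrI
    have r0 := ht.trans hrI.1
    refine (hr r0).trans (mul_le_mul_of_nonneg_left ?_ (hα0 r r0))
    linarith [yb r r0]
  rw [intervalIntegral.integral_add (hh t _ ht t1) (hd t _ ht t1),
    intervalIntegral.integral_mul_const] at m
  have e := hy t (t+1) ht t1
  have := hαw t ht
  have := hy0 (t+1) (by linarith)
  have := yb t ht
  nlinarith

/-! ### Functions of space and time -/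

/-- Joint Borel measurability of a function on `ℝ × [0,∞)`, encoded by freezing the function at
its value at time `0` for negative times. -/
def TM (F : ℝ → ℝ → ℝ) : Prop := Measurable fun p : ℝ × ℝ => F p.1 (max p.2 0)

theorem TM.of_cont {F : ℝ → ℝ → ℝ} (h1 : ∀ t, 0 ≤ t → Continuous fun x => F x t)
    (h2 : ∀ x t, 0 ≤ t → ContinuousAt (fun s => F x s) t) : TM F := by
  refine measurable_uncurry_of_continuous_of_measurable (u := fun x t => F x (max t 0))
    (fun t => h1 _ (le_max_right _ _)) fun x => ?_
  refine Continuous.measurable (continuous_iff_continuousAt.mpr fun t => ?_)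
  exact ContinuousAt.comp (f := fun t => max t 0) (g := fun s => F x s)
    (h2 x _ (le_max_right _ _)) (by fun_prop)

theorem TM.shift {F : ℝ → ℝ → ℝ} (h : TM F) (a : ℝ) : TM fun x t => F (x + a) t :=
  h.comp (g := fun p : ℝ × ℝ => F p.1 (max p.2 0)) (f := fun p : ℝ × ℝ => (p.1 + a, p.2))
    (by fun_prop)

theorem TM.pdx {F : ℝ → ℝ → ℝ} (h : TM F)
    (hd : ∀ t, 0 ≤ t → Differentiable ℝ fun x => F x t) : TM (pdx F) := by
  have lim : ∀ p : ℝ × ℝ, Tendsto (fun n : ℕ => ((n : ℝ) + 1) *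
      (F (p.1 + 1 / ((n : ℝ) + 1)) (max p.2 0) - F p.1 (max p.2 0))) atTop
      (nhds (_root_.pdx F p.1 (max p.2 0))) := by
    intro p
    have hda := (hd _ (le_max_right p.2 0) p.1).hasDerivAt
    have := hda.tendsto_slope_zero
    have hz : Tendsto (fun n : ℕ => 1 / ((n : ℝ) + 1)) atTop (nhdsWithin 0 {0}ᶜ) := by
      rw [tendsto_nhdsWithin_iff]
      refine ⟨tendsto_one_div_add_atTop_nhds_zero_nat, Eventually.of_forall fun n => ?_⟩
      simp only [mem_compl_iff, mem_singleton_iff]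
      positivity
    have := this.comp hz
    refine this.congr fun n => ?_
    simp
  refine measurable_of_tendsto_metrizable (fun n => ?_) (tendsto_pi_nhds.mpr lim)
  exact ((h.shift (1 / ((n : ℝ) + 1))).sub h).const_mul _

/-- Lebesgue measure on the slab `ℝ × [s,t]`. -/
noncomputable def slab (s t : ℝ) : Measure (ℝ × ℝ) :=
  (volume : Measure ℝ).prod ((volume : Measure ℝ).restrict (Icc s t))

instance (s t : ℝ) : SFinite (slab s t) := by unfold slab; infer_instance

theorem ae_Icc_of_ae {s t : ℝ} (hs : 0 ≤ s) {p : ℝ → Prop} (h : ∀ᵐ τ, 0 ≤ τ → p τ) :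
    ∀ᵐ τ ∂((volume : Measure ℝ).restrict (Icc s t)), p τ := by
  rw [ae_restrict_iff' measurableSet_Icc]
  filter_upwards [h] with τ h1 h2
  exact h1 (hs.trans h2.1)

theorem ae_slab {s t : ℝ} (hs : 0 ≤ s) {p : ℝ × ℝ → Prop} (h : ∀ x t, 0 ≤ t → p (x, t)) :
    ∀ᵐ z ∂(slab s t), p z := by
  have : ∀ᵐ z ∂(slab s t), z ∈ (univ : Set ℝ) ×ˢ Icc s t := by
    unfold slab
    rw [show (volume : Measure ℝ).prod ((volume : Measure ℝ).restrict (Icc s t))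
      = ((volume : Measure ℝ).prod volume).restrict (univ ×ˢ Icc s t) by
        rw [← Measure.prod_restrict, Measure.restrict_univ]]
    exact ae_restrict_mem (MeasurableSet.univ.prod measurableSet_Icc)
  filter_upwards [this] with z hz
  exact h z.1 z.2 (hs.trans hz.2.1)

theorem TM.aesm {F : ℝ → ℝ → ℝ} (h : TM F) {s t : ℝ} (hs : 0 ≤ s) :
    AEStronglyMeasurable (Function.uncurry F) (slab s t) := by
  refine ⟨_, h.stronglyMeasurable, ae_slab hs fun x t ht => ?_⟩
  simp [max_eq_left ht]

theorem TM.integrable {F : ℝ → ℝ → ℝ} (h : TM F) {s t : ℝ} (hs : 0 ≤ s) {φ : ℝ → ℝ}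
    (hφ : IntegrableOn φ (Icc s t))
    (hF : ∀ᵐ τ ∂((volume : Measure ℝ).restrict (Icc s t)),
      Integrable (fun x => F x τ) ∧ ∫ x, |F x τ| ≤ φ τ) :
    Integrable (Function.uncurry F) (slab s t) := by
  have m := h.aesm (t := t) hs
  unfold slab at m ⊢
  rw [integrable_prod_iff' m]
  refine ⟨hF.mono fun τ h => h.1, ?_⟩
  refine Integrable.mono' hφ m.norm.prod_swap.integral_prod_right' ?_
  refine hF.mono fun τ h => ?_
  rw [Real.norm_of_nonneg (integral_nonneg fun x => norm_nonneg _)]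
  exact h.2

theorem TM.memLp {F : ℝ → ℝ → ℝ} (h : TM F) {s t : ℝ} (hs : 0 ≤ s) {φ : ℝ → ℝ}
    (hφ : IntegrableOn φ (Icc s t))
    (hF : ∀ᵐ τ ∂((volume : Measure ℝ).restrict (Icc s t)),
      MemLp (fun x => F x τ) 2 volume ∧ ∫ x, F x τ ^ 2 ≤ φ τ) :
    MemLp (Function.uncurry F) 2 (slab s t) := by
  rw [memLp_two_iff_integrable_sq (h.aesm hs)]
  have h2 : TM fun x t => F x t ^ 2 := h.pow_const 2
  refine h2.integrable hs hφ (hF.mono fun τ h => ⟨h.1.integrable_sq, ?_⟩)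
  simpa using h.2

theorem intervalIntegrable_of_slab {F : ℝ → ℝ → ℝ} {s t : ℝ} (hst : s ≤ t)
    (h : Integrable (Function.uncurry F) (slab s t)) :
    IntervalIntegrable (fun τ => ∫ x, F x τ) volume s t := by
  rw [intervalIntegrable_iff_integrableOn_Icc_of_le hst]
  exact Integrable.integral_prod_right (f := Function.uncurry F) h

/-- Differentiation under the integral sign in integrated form: the time derivative only needs
to be integrable on the slab. -/
theorem slab_ftc {g h : ℝ → ℝ → ℝ} {s t : ℝ} (hs : 0 ≤ s) (hst : s ≤ t)
    (hd : ∀ x τ, 0 ≤ τ → HasDerivAt (fun r => g x r) (h x τ) τ)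
    (hi : Integrable (Function.uncurry h) (slab s t))
    (gs : Integrable fun x => g x s) (gt : Integrable fun x => g x t) :
    ∫ x, g x t = (∫ x, g x s) + ∫ τ in s..t, ∫ x, h x τ := by
  have h1 : ∀ᵐ x, Integrable (fun τ => h x τ) (volume.restrict (Icc s t)) :=
    Integrable.prod_right_ae (f := Function.uncurry h) hi
  have h2 : ∀ᵐ x, g x t - g x s = ∫ τ in Icc s t, h x τ := by
    filter_upwards [h1] with x hx
    rw [integral_Icc_eq_integral_Ioc, ← intervalIntegral.integral_of_le hst]
    rw [intervalIntegral.integral_eq_sub_of_hasDerivAt]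
    · intro τ hτ
      rw [uIcc_of_le hst] at hτ
      exact hd x τ (hs.trans hτ.1)
    · rw [intervalIntegrable_iff_integrableOn_Icc_of_le hst]
      exact hx
  have h3 := integral_congr_ae h2
  rw [integral_sub gt gs] at h3
  have h4 : (∫ x, ∫ τ in Icc s t, h x τ) = ∫ τ in Icc s t, ∫ x, h x τ :=
    integral_integral_swap hi
  rw [intervalIntegral.integral_of_le hst, ← integral_Icc_eq_integral_Ioc, ← h4, ← h3]
  ring

/-! ### States at a fixed time -/

/-- The squared `L²(ℝ)` norm. -/
noncomputable def nsq (f : ℝ → ℝ) : ℝ := ∫ x, f x ^ 2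

theorem nsq_nonneg (f : ℝ → ℝ) : 0 ≤ nsq f := integral_nonneg fun _ => sq_nonneg _

/-- The state of a `K`-volume-bounded solution at one instant: `C²` functions with `v - 1`, `u`,
`θ - 1` in `H¹(ℝ)`. -/
structure Sl (K : ℝ) (v u θ : ℝ → ℝ) : Prop where
  hK : 1 ≤ K
  cv : ContDiff ℝ 2 v
  cu : ContDiff ℝ 2 u
  cθ : ContDiff ℝ 2 θ
  v_lo : ∀ x, K⁻¹ ≤ v x
  v_hi : ∀ x, v x ≤ K
  θ_pos : ∀ x, 0 < θ x
  mv : MemLp (fun x => v x - 1) 2 volume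
  mv' : MemLp (deriv v) 2 volume
  mu : MemLp u 2 volume
  mu' : MemLp (deriv u) 2 volume
  mθ : MemLp (fun x => θ x - 1) 2 volume
  mθ' : MemLp (deriv θ) 2 volume

/-- A state for which moreover `u` and `θ - 1` belong to `H²(ℝ)`. -/
structure Sl2 (K : ℝ) (v u θ : ℝ → ℝ) : Prop extends Sl K v u θ where
  mu'' : MemLp (deriv (deriv u)) 2 volume
  mθ'' : MemLp (deriv (deriv θ)) 2 volume

/-- The effective viscous flux `μ u_x / v - R θ / v + R`, normalised to vanish at infinity. -/
noncomputable def sg (μ R : ℝ) (v u θ : ℝ → ℝ) (x : ℝ) : ℝ :=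
  (μ * deriv u x - R * (θ x - v x)) / v x

/-- The space derivative of `sg`; along a solution this is `u_t`. -/
noncomputable def sgx (μ R : ℝ) (v u θ : ℝ → ℝ) (x : ℝ) : ℝ :=
  ((μ * deriv (deriv u) x - R * (deriv θ x - deriv v x)) * v x
    - (μ * deriv u x - R * (θ x - v x)) * deriv v x) / v x ^ 2

/-- The derivative of `θ_x / v`. -/
noncomputable def qx (v θ : ℝ → ℝ) (x : ℝ) : ℝ :=
  (deriv (deriv θ) x * v x - deriv θ x * deriv v x) / v x ^ 2

/-- The value of `θ_t` prescribed by the energy equation. -/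
noncomputable def tt (μ κ R c : ℝ) (v u θ : ℝ → ℝ) (x : ℝ) : ℝ :=
  (κ * qx v θ x + (sg μ R v u θ x - R) * deriv u x) / c

theorem memLp_of_le {f g : ℝ → ℝ} (hg : MemLp g 2 volume) (hf : Continuous f) (c : ℝ)
    (h : ∀ x, |f x| ≤ c * |g x|) : MemLp f 2 volume :=
  MemLp.of_le_mul hg hf.aestronglyMeasurable (ae_of_all _ h)

theorem nsq_le_of_le {f g : ℝ → ℝ} (hf : MemLp f 2 volume) (hg : Integrable g)
    (h : ∀ x, f x ^ 2 ≤ g x) : nsq f ≤ ∫ x, g x :=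
  integral_mono hf.integrable_sq hg h

theorem contDiff_one_deriv {f : ℝ → ℝ} (h : ContDiff ℝ 2 f) : ContDiff ℝ 1 (deriv f) :=
  (show ContDiff ℝ (1 + 1) f by simpa [one_add_one_eq_two] using h).deriv'

namespace Sl
variable {K : ℝ} {v u θ : ℝ → ℝ}

section
variable (S : Sl K v u θ)
include S

theorem v_pos (x : ℝ) : 0 < v x := lt_of_lt_of_le (inv_pos.mpr (by linarith [S.hK])) (S.v_lo x)
theorem v_ne (x : ℝ) : v x ≠ 0 := (S.v_pos x).ne'
theorem K_pos : 0 < K := by linarith [S.hK]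
theorem inv_v (x : ℝ) : (v x)⁻¹ ≤ K := by
  rw [inv_le_comm₀ (S.v_pos x) S.K_pos]; exact S.v_lo x
theorem contv : Continuous v := S.cv.continuous
theorem contu : Continuous u := S.cu.continuous
theorem contθ : Continuous θ := S.cθ.continuous
theorem contv' : Continuous (deriv v) := S.cv.continuous_deriv (by norm_num)
theorem contu' : Continuous (deriv u) := S.cu.continuous_deriv (by norm_num)
theorem contθ' : Continuous (deriv θ) := S.cθ.continuous_deriv (by norm_num)
theorem contu'' : Continuous (deriv (deriv u)) :=
  (contDiff_one_deriv S.cu).continuous_deriv le_rfl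
theorem contθ'' : Continuous (deriv (deriv θ)) :=
  (contDiff_one_deriv S.cθ).continuous_deriv le_rfl
theorem dv (x : ℝ) : HasDerivAt v (deriv v x) x :=
  (S.cv.differentiable (by norm_num) x).hasDerivAt
theorem du (x : ℝ) : HasDerivAt u (deriv u x) x :=
  (S.cu.differentiable (by norm_num) x).hasDerivAt
theorem dθ (x : ℝ) : HasDerivAt θ (deriv θ x) x :=
  (S.cθ.differentiable (by norm_num) x).hasDerivAt
theorem du' (x : ℝ) : HasDerivAt (deriv u) (deriv (deriv u) x) x :=
  ((contDiff_one_deriv S.cu).differentiable (by norm_num) x).hasDerivAt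
theorem dθ' (x : ℝ) : HasDerivAt (deriv θ) (deriv (deriv θ) x) x :=
  ((contDiff_one_deriv S.cθ).differentiable (by norm_num) x).hasDerivAt

theorem dsg (μ R x : ℝ) : HasDerivAt (sg μ R v u θ) (sgx μ R v u θ x) x :=
  (((S.du' x).const_mul μ).sub (((S.dθ x).sub (S.dv x)).const_mul R)).div (S.dv x) (S.v_ne x)

theorem dq (x : ℝ) : HasDerivAt (fun y => deriv θ y / v y) (qx v θ x) x :=
  (S.dθ' x).div (S.dv x) (S.v_ne x)

theorem cont_sg (μ R : ℝ) : Continuous (sg μ R v u θ) :=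
  continuous_iff_continuousAt.mpr fun x => (S.dsg μ R x).continuousAt

theorem cont_sgx (μ R : ℝ) : Continuous (sgx μ R v u θ) := by
  have := S.contv; have := S.contv'; have := S.contu'; have := S.contu''
  have := S.contθ; have := S.contθ'
  unfold sgx
  exact Continuous.div (by fun_prop) (by fun_prop) fun x => pow_ne_zero 2 (S.v_ne x)

theorem cont_qx : Continuous (qx v θ) := by
  have := S.contv; have := S.contv'; have := S.contθ'; have := S.contθ''
  unfold qx
  exact Continuous.div (by fun_prop) (by fun_prop) fun x => pow_ne_zero 2 (S.v_ne x)

theorem cont_tt (μ κ R c : ℝ) : Continuous (tt μ κ R c v u θ) := by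
  have := S.cont_qx; have := S.cont_sg μ R; have := S.contu'
  unfold tt
  fun_prop

theorem u_sq_le (x : ℝ) : u x ^ 2 ≤ nsq u + nsq (deriv u) := sq_le_of_memLp S.du S.mu S.mu' x

theorem θ_sq_le (x : ℝ) : (θ x - 1) ^ 2 ≤ nsq (fun x => θ x - 1) + nsq (deriv θ) :=
  sq_le_of_memLp (f := fun x => θ x - 1) (fun y => (S.dθ y).sub_const 1) S.mθ S.mθ' x

theorem v_sub_sq (x : ℝ) : (v x - 1) ^ 2 ≤ K ^ 2 := by
  have h1 := S.v_hi x; have h2 := S.v_pos x; have h3 := S.hK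
  nlinarith

theorem θ_sub_v_mem : MemLp (fun x => θ x - v x) 2 volume := by
  have := S.mθ.sub S.mv
  refine this.ae_eq (ae_of_all _ fun x => ?_)
  simp

theorem mq : MemLp (fun y => deriv θ y / v y) 2 volume := by
  refine memLp_of_le S.mθ' (S.contθ'.div S.contv S.v_ne) K fun x => ?_
  rw [abs_div, abs_of_pos (S.v_pos x), div_eq_inv_mul]
  exact mul_le_mul_of_nonneg_right (S.inv_v x) (abs_nonneg _)

theorem msg (μ R : ℝ) : MemLp (sg μ R v u θ) 2 volume := by
  have h : MemLp (fun x => μ * deriv u x - R * (θ x - v x)) 2 volume :=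
    (S.mu'.const_mul μ).sub (S.θ_sub_v_mem.const_mul R)
  refine memLp_of_le h (S.cont_sg μ R) K fun x => ?_
  rw [sg, abs_div, abs_of_pos (S.v_pos x), div_eq_inv_mul]
  exact mul_le_mul_of_nonneg_right (S.inv_v x) (abs_nonneg _)

theorem sg_sq_le (μ R x : ℝ) :
    sg μ R v u θ x ^ 2 ≤ K ^ 2 * (2 * μ ^ 2 * deriv u x ^ 2 + 2 * R ^ 2 * (θ x - v x) ^ 2) := by
  have h := S.inv_v x
  have h0 : 0 < (v x)⁻¹ := inv_pos.mpr (S.v_pos x)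
  rw [sg, div_eq_inv_mul, mul_pow]
  have h2 : (v x)⁻¹ ^ 2 ≤ K ^ 2 := by gcongr
  refine mul_le_mul h2 ?_ (sq_nonneg _) (sq_nonneg _)
  nlinarith [sq_nonneg (μ * deriv u x + R * (θ x - v x))]

theorem nsq_θ_sub_v : nsq (fun x => θ x - v x) ≤
    2 * nsq (fun x => θ x - 1) + 2 * nsq (fun x => v x - 1) := by
  have i1 := S.mθ.integrable_sq
  have i2 := S.mv.integrable_sq
  refine (nsq_le_of_le S.θ_sub_v_mem ((i1.const_mul 2).add (i2.const_mul 2)) fun x => ?_).trans ?_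
  · simp only [Pi.add_apply]
    nlinarith [sq_nonneg (θ x - 1 + (v x - 1))]
  · rw [integral_add' (i1.const_mul 2) (i2.const_mul 2), integral_const_mul, integral_const_mul]
    rfl

theorem nsq_sg (μ R : ℝ) : nsq (sg μ R v u θ) ≤ K ^ 2 * (2 * μ ^ 2 * nsq (deriv u) +
    2 * R ^ 2 * nsq (fun x => θ x - v x)) := by
  have i1 := S.mu'.integrable_sq
  have i2 := S.θ_sub_v_mem.integrable_sq
  refine (nsq_le_of_le (S.msg μ R)
    (((i1.const_mul (2 * μ ^ 2)).add (i2.const_mul (2 * R ^ 2))).const_mul (K ^ 2))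
    (S.sg_sq_le μ R)).trans (le_of_eq ?_)
  rw [integral_const_mul, integral_add' (i1.const_mul _) (i2.const_mul _), integral_const_mul,
    integral_const_mul]
  rfl

end
end Sl

theorem tt_sq_le {v u θ : ℝ → ℝ} (μ κ R c x : ℝ) {A : ℝ} (hA : ∀ y, sg μ R v u θ y ^ 2 ≤ A) :
    tt μ κ R c v u θ x ^ 2 ≤ (c⁻¹) ^ 2 * (2 * κ ^ 2 * qx v θ x ^ 2
      + (4 * A + 4 * R ^ 2) * deriv u x ^ 2) := by
  have e : tt μ κ R c v u θ x = c⁻¹ * (κ * qx v θ x + (sg μ R v u θ x - R) * deriv u x) := by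
    unfold tt; rw [div_eq_inv_mul]
  have h1 : (sg μ R v u θ x - R) ^ 2 ≤ 2 * A + 2 * R ^ 2 := by
    nlinarith [hA x, sq_nonneg (sg μ R v u θ x + R)]
  rw [e, mul_pow]
  refine mul_le_mul_of_nonneg_left ?_ (sq_nonneg _)
  have h2 : ((sg μ R v u θ x - R) * deriv u x) ^ 2 ≤ (2 * A + 2 * R ^ 2) * deriv u x ^ 2 := by
    rw [mul_pow]; gcongr
  nlinarith [sq_nonneg (κ * qx v θ x - (sg μ R v u θ x - R) * deriv u x)]

namespace Sl2
variable {K : ℝ} {v u θ : ℝ → ℝ} (S : Sl2 K v u θ)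
include S

theorem u'_sq_le (x : ℝ) : deriv u x ^ 2 ≤ nsq (deriv u) + nsq (deriv (deriv u)) :=
  sq_le_of_memLp S.du' S.mu' S.mu'' x

theorem θ'_sq_le (x : ℝ) : deriv θ x ^ 2 ≤ nsq (deriv θ) + nsq (deriv (deriv θ)) :=
  sq_le_of_memLp S.dθ' S.mθ' S.mθ'' x

theorem qx_sq_le (x : ℝ) : qx v θ x ^ 2 ≤ 2 * K ^ 2 * deriv (deriv θ) x ^ 2 +
    2 * K ^ 4 * (nsq (deriv θ) + nsq (deriv (deriv θ))) * deriv v x ^ 2 := by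
  have h := S.inv_v x
  have h0 : 0 < (v x)⁻¹ := inv_pos.mpr (S.v_pos x)
  have e : qx v θ x = (v x)⁻¹ * deriv (deriv θ) x - (v x)⁻¹ ^ 2 * deriv θ x * deriv v x := by
    have := S.v_ne x
    unfold qx; field_simp
  have h2 : (v x)⁻¹ ^ 2 ≤ K ^ 2 := by gcongr
  have h4 : ((v x)⁻¹ ^ 2) ^ 2 ≤ K ^ 4 := by
    calc ((v x)⁻¹ ^ 2) ^ 2 ≤ (K ^ 2) ^ 2 := by gcongr
      _ = K ^ 4 := by ring
  have h5 := S.θ'_sq_le x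
  rw [e]
  calc _ ≤ 2 * ((v x)⁻¹ ^ 2 * deriv (deriv θ) x ^ 2) +
        2 * (((v x)⁻¹ ^ 2) ^ 2 * deriv θ x ^ 2 * deriv v x ^ 2) := by
        nlinarith [sq_nonneg ((v x)⁻¹ * deriv (deriv θ) x + (v x)⁻¹ ^ 2 * deriv θ x * deriv v x)]
    _ ≤ 2 * (K ^ 2 * deriv (deriv θ) x ^ 2) +
        2 * (K ^ 4 * (nsq (deriv θ) + nsq (deriv (deriv θ))) * deriv v x ^ 2) := by
        gcongr
    _ = _ := by ring

theorem mqx : MemLp (qx v θ) 2 volume := by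
  rw [memLp_two_iff_integrable_sq S.cont_qx.aestronglyMeasurable]
  refine Integrable.mono' (((S.mθ''.integrable_sq).const_mul (2 * K ^ 2)).add
    ((S.mv'.integrable_sq).const_mul
      (2 * K ^ 4 * (nsq (deriv θ) + nsq (deriv (deriv θ))))))
    (S.cont_qx.pow 2).aestronglyMeasurable (ae_of_all _ fun x => ?_)
  rw [Real.norm_of_nonneg (sq_nonneg _)]
  exact S.qx_sq_le x

theorem nsq_qx : nsq (qx v θ) ≤ 2 * K ^ 2 * nsq (deriv (deriv θ)) +
    2 * K ^ 4 * (nsq (deriv θ) + nsq (deriv (deriv θ))) * nsq (deriv v) := by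
  have i1 := S.mθ''.integrable_sq
  have i2 := S.mv'.integrable_sq
  refine (nsq_le_of_le S.mqx ((i1.const_mul _).add (i2.const_mul _)) S.qx_sq_le).trans (le_of_eq ?_)
  rw [integral_add' (i1.const_mul _) (i2.const_mul _), integral_const_mul, integral_const_mul]
  rfl

theorem sg_sup (μ R x : ℝ) : sg μ R v u θ x ^ 2 ≤ K ^ 2 * (2 * μ ^ 2 * (nsq (deriv u) +
    nsq (deriv (deriv u))) + 2 * R ^ 2 * (2 * (nsq (fun x => θ x - 1) + nsq (deriv θ)) +
      2 * K ^ 2)) := by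
  refine (S.sg_sq_le μ R x).trans ?_
  have h1 := S.u'_sq_le x
  have h2 : (θ x - v x) ^ 2 ≤ 2 * (nsq (fun x => θ x - 1) + nsq (deriv θ)) + 2 * K ^ 2 := by
    nlinarith [S.θ_sq_le x, S.v_sub_sq x, sq_nonneg (θ x - 1 + (v x - 1))]
  gcongr

theorem sgx_sq_le (μ R x : ℝ) {A : ℝ} (hA : ∀ y, sg μ R v u θ y ^ 2 ≤ A) :
    sgx μ R v u θ x ^ 2 ≤ 4 * K ^ 2 * μ ^ 2 * deriv (deriv u) x ^ 2
      + 4 * K ^ 2 * R ^ 2 * deriv θ x ^ 2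
      + (4 * K ^ 2 * R ^ 2 + 4 * K ^ 2 * A) * deriv v x ^ 2 := by
  have h := S.inv_v x
  have h0 : 0 < (v x)⁻¹ := inv_pos.mpr (S.v_pos x)
  have e : sgx μ R v u θ x = (v x)⁻¹ * (μ * deriv (deriv u) x - R * deriv θ x + R * deriv v x
      - sg μ R v u θ x * deriv v x) := by
    have := S.v_ne x
    unfold sgx sg; field_simp; ring
  have h2 : (v x)⁻¹ ^ 2 ≤ K ^ 2 := by gcongr
  have h4 : ∀ a b c d : ℝ, (a - b + c - d) ^ 2 ≤ 4 * (a ^ 2 + b ^ 2 + c ^ 2 + d ^ 2) := by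
    intro a b c d
    nlinarith [sq_nonneg (a + b), sq_nonneg (a - c), sq_nonneg (a + d), sq_nonneg (b + c),
      sq_nonneg (b - d), sq_nonneg (c + d)]
  have hA0 : 0 ≤ A := (sq_nonneg _).trans (hA x)
  rw [e, mul_pow]
  calc _ ≤ K ^ 2 * (4 * ((μ * deriv (deriv u) x) ^ 2 + (R * deriv θ x) ^ 2 +
        (R * deriv v x) ^ 2 + (sg μ R v u θ x * deriv v x) ^ 2)) :=
        mul_le_mul h2 (h4 _ _ _ _) (sq_nonneg _) (sq_nonneg _)
    _ ≤ K ^ 2 * (4 * ((μ * deriv (deriv u) x) ^ 2 + (R * deriv θ x) ^ 2 +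
        (R * deriv v x) ^ 2 + A * deriv v x ^ 2)) := by
        rw [mul_pow (sg μ R v u θ x)]
        gcongr
        exact hA x
    _ = _ := by ring

theorem msgx (μ R : ℝ) : MemLp (sgx μ R v u θ) 2 volume := by
  rw [memLp_two_iff_integrable_sq (S.cont_sgx μ R).aestronglyMeasurable]
  obtain ⟨A, hA⟩ : ∃ A, ∀ y, sg μ R v u θ y ^ 2 ≤ A := ⟨_, S.sg_sup μ R⟩
  refine Integrable.mono' ((((S.mu''.integrable_sq).const_mul (4 * K ^ 2 * μ ^ 2)).add
    ((S.mθ'.integrable_sq).const_mul (4 * K ^ 2 * R ^ 2))).add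
    ((S.mv'.integrable_sq).const_mul (4 * K ^ 2 * R ^ 2 + 4 * K ^ 2 * A)))
    ((S.cont_sgx μ R).pow 2).aestronglyMeasurable (ae_of_all _ fun x => ?_)
  rw [Real.norm_of_nonneg (sq_nonneg _)]
  exact S.sgx_sq_le μ R x hA

theorem nsq_sgx (μ R : ℝ) {A : ℝ} (hA : ∀ y, sg μ R v u θ y ^ 2 ≤ A) :
    nsq (sgx μ R v u θ) ≤ 4 * K ^ 2 * μ ^ 2 * nsq (deriv (deriv u))
      + 4 * K ^ 2 * R ^ 2 * nsq (deriv θ)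
      + (4 * K ^ 2 * R ^ 2 + 4 * K ^ 2 * A) * nsq (deriv v) := by
  have i1 := S.mu''.integrable_sq
  have i2 := S.mθ'.integrable_sq
  have i3 := S.mv'.integrable_sq
  refine (nsq_le_of_le (S.msgx μ R) (((i1.const_mul _).add (i2.const_mul _)).add
    (i3.const_mul _)) fun x => S.sgx_sq_le μ R x hA).trans (le_of_eq ?_)
  rw [integral_add' ((i1.const_mul _).add (i2.const_mul _)) (i3.const_mul _),
    integral_add' (i1.const_mul _) (i2.const_mul _), integral_const_mul, integral_const_mul,
    integral_const_mul]
  rfl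

theorem mtt (μ κ R c : ℝ) : MemLp (tt μ κ R c v u θ) 2 volume := by
  rw [memLp_two_iff_integrable_sq (S.cont_tt μ κ R c).aestronglyMeasurable]
  obtain ⟨A, hA⟩ : ∃ A, ∀ y, sg μ R v u θ y ^ 2 ≤ A := ⟨_, S.sg_sup μ R⟩
  refine Integrable.mono' ((((S.mqx.integrable_sq).const_mul (2 * κ ^ 2)).add
    ((S.mu'.integrable_sq).const_mul (4 * A + 4 * R ^ 2))).const_mul (c⁻¹ ^ 2))
    ((S.cont_tt μ κ R c).pow 2).aestronglyMeasurable (ae_of_all _ fun x => ?_)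
  rw [Real.norm_of_nonneg (sq_nonneg _)]
  exact tt_sq_le μ κ R c x hA

theorem nsq_tt (μ κ R c : ℝ) {A : ℝ} (hA : ∀ y, sg μ R v u θ y ^ 2 ≤ A) :
    nsq (tt μ κ R c v u θ) ≤ (c⁻¹) ^ 2 * (2 * κ ^ 2 * nsq (qx v θ)
      + (4 * A + 4 * R ^ 2) * nsq (deriv u)) := by
  have i1 := S.mqx.integrable_sq
  have i2 := S.mu'.integrable_sq
  refine (nsq_le_of_le (S.mtt μ κ R c) (((i1.const_mul _).add (i2.const_mul _)).const_mul _)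
    fun x => tt_sq_le μ κ R c x hA).trans (le_of_eq ?_)
  rw [integral_const_mul, integral_add' (i1.const_mul _) (i2.const_mul _), integral_const_mul,
    integral_const_mul]
  rfl

end Sl2

/-! ### From classical solutions to families of states -/

theorem L2_sq (f : ℝ → ℝ) : L2 f ^ 2 = ∫⁻ x, ‖f x‖ₑ ^ 2 := by
  have := eLpNorm_nnreal_pow_eq_lintegral (f := f) (μ := (volume : Measure ℝ)) (p := 2)
    (by norm_num)
  simpa [L2] using this

theorem nsq_eq {f : ℝ → ℝ} (hf : Continuous f) : nsq f = (L2 f ^ 2).toReal := by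
  rw [L2_sq, nsq, integral_eq_lintegral_of_nonneg_ae (ae_of_all _ fun x => sq_nonneg _)
    (hf.pow 2).aestronglyMeasurable]
  congr 1
  refine lintegral_congr fun x => ?_
  rw [← sq_abs, ← Real.norm_eq_abs, ENNReal.ofReal_pow (norm_nonneg _), ofReal_norm]

theorem memLp_of_L2 {f : ℝ → ℝ} (hf : Continuous f) (h : L2 f < ⊤) : MemLp f 2 volume :=
  ⟨hf.aestronglyMeasurable, h⟩

theorem L2_bound {f : ℝ → ℝ} (hf : Continuous f) {B : ℝ} (h : L2 f ≤ ENNReal.ofReal B) :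
    MemLp f 2 volume ∧ nsq f ≤ B ^ 2 := by
  refine ⟨memLp_of_L2 hf (h.trans_lt ENNReal.ofReal_lt_top), ?_⟩
  rw [nsq_eq hf, ENNReal.toReal_pow]
  rcases le_total 0 B with hB | hB
  · have : (L2 f).toReal ≤ B := by
      have := ENNReal.toReal_mono ENNReal.ofReal_ne_top h
      rwa [ENNReal.toReal_ofReal hB] at this
    gcongr
  · rw [ENNReal.ofReal_of_nonpos hB] at h
    rw [nonpos_iff_eq_zero.1 h]
    simpa using sq_nonneg B

/-- All six squared `L²` norms making up the `H¹` norm of a state are at most `B`. -/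
structure Bd (B : ℝ) (v u θ : ℝ → ℝ) : Prop where
  bv : nsq (fun x => v x - 1) ≤ B
  bv' : nsq (deriv v) ≤ B
  bu : nsq u ≤ B
  bu' : nsq (deriv u) ≤ B
  bθ : nsq (fun x => θ x - 1) ≤ B
  bθ' : nsq (deriv θ) ≤ B

/-- The part of the data of a classical solution that enters the estimates: states at every time,
`H²` states at almost every time with integrable squared `H²` norm, and the equations in the form
`v_t = u_x`, `u_t = sgx`, `θ_t = tt`. -/
structure Sol (μ κ R c K : ℝ) (v u θ : ℝ → ℝ → ℝ) : Prop where
  sl : ∀ t, 0 ≤ t → Sl K (fun x => v x t) (fun x => u x t) (fun x => θ x t)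
  sl2 : ∀ᵐ t, 0 ≤ t → Sl2 K (fun x => v x t) (fun x => u x t) (fun x => θ x t)
  tv : TM v
  tu : TM u
  tθ : TM θ
  bd : ∀ T, 0 ≤ T → ∃ B, 0 ≤ B ∧ ∀ t ∈ Icc 0 T,
    Bd B (fun x => v x t) (fun x => u x t) (fun x => θ x t)
  n2 : ∀ s t, 0 ≤ s → IntegrableOn (fun τ => nsq (deriv (deriv fun x => u x τ))
    + nsq (deriv (deriv fun x => θ x τ))) (Icc s t)
  dtv : ∀ x t, 0 ≤ t → HasDerivAt (fun s => v x s) (deriv (fun y => u y t) x) t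
  dtu : ∀ x t, 0 ≤ t → HasDerivAt (fun s => u x s)
    (sgx μ R (fun x => v x t) (fun x => u x t) (fun x => θ x t) x) t
  dtθ : ∀ x t, 0 ≤ t → HasDerivAt (fun s => θ x s)
    (tt μ κ R c (fun x => v x t) (fun x => u x t) (fun x => θ x t) x) t

theorem bd_of_H1 {v u θ : ℝ → ℝ} (cv : ContDiff ℝ 2 v) (cu : ContDiff ℝ 2 u)
    (cθ : ContDiff ℝ 2 θ) {B : ℝ}
    (h : H1 (fun x => v x - 1) + H1 u + H1 (fun x => θ x - 1) ≤ ENNReal.ofReal B) :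
    Bd (B ^ 2) v u θ ∧ MemLp (fun x => v x - 1) 2 volume ∧ MemLp (deriv v) 2 volume ∧
      MemLp u 2 volume ∧ MemLp (deriv u) 2 volume ∧ MemLp (fun x => θ x - 1) 2 volume ∧
      MemLp (deriv θ) 2 volume := by
  have d1 : deriv (fun x => v x - 1) = deriv v := by ext x; simp
  have d2 : deriv (fun x => θ x - 1) = deriv θ := by ext x; simp
  simp only [H1, d1, d2] at h
  have c1 := cv.continuous_deriv (by norm_num)
  have c2 := cu.continuous_deriv (by norm_num)
  have c3 := cθ.continuous_deriv (by norm_num)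
  have e1 := L2_bound (f := fun x => v x - 1) (cv.continuous.sub continuous_const)
    (le_trans (le_add_right (le_add_right le_self_add)) h)
  have e2 := L2_bound c1 (le_trans (le_add_right (le_add_right le_add_self)) h)
  have e3 := L2_bound cu.continuous (le_trans (le_add_right (le_add_left le_self_add)) h)
  have e4 := L2_bound c2 (le_trans (le_add_right (le_add_left le_add_self)) h)
  have e5 := L2_bound (f := fun x => θ x - 1) (cθ.continuous.sub continuous_const)
    (le_trans (le_add_left le_self_add) h)
  have e6 := L2_bound c3 (le_trans (le_add_left le_add_self) h)
  exact ⟨⟨e1.2, e2.2, e3.2, e4.2, e5.2, e6.2⟩, e1.1, e2.1, e3.1, e4.1, e5.1, e6.1⟩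

/-- Passing from an upper bound on the lower integral of the squared norm of a jointly measurable
function to square integrability at almost every time. -/
theorem ae_memLp_of_lintegral {F : ℝ → ℝ → ℝ} (hF : TM F)
    (hc : ∀ t, 0 ≤ t → Continuous fun x => F x t) {T : ℝ}
    (h : ∫⁻ t in Icc (0 : ℝ) T, L2 (fun x => F x t) ^ 2 < ⊤) :
    (∀ᵐ t ∂((volume : Measure ℝ).restrict (Icc 0 T)), MemLp (fun x => F x t) 2 volume) ∧
      IntegrableOn (fun t => nsq fun x => F x t) (Icc 0 T) := by
  have hm : Measurable fun t => ∫⁻ x, ‖F x (max t 0)‖ₑ ^ 2 := by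
    have : Measurable fun p : ℝ × ℝ => ‖F p.1 (max p.2 0)‖ₑ ^ 2 := hF.enorm.pow_const 2
    exact this.lintegral_prod_left'
  have hme : AEMeasurable (fun t => L2 (fun x => F x t) ^ 2)
      ((volume : Measure ℝ).restrict (Icc 0 T)) := by
    refine ⟨_, hm, ?_⟩
    rw [EventuallyEq, ae_restrict_iff' measurableSet_Icc]
    refine ae_of_all _ fun t ht => ?_
    rw [L2_sq, max_eq_left ht.1]
  constructor
  · have := ae_lt_top' hme h.ne
    filter_upwards [this, ae_restrict_mem measurableSet_Icc] with t ht ht2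
    refine memLp_of_L2 (hc t ht2.1) ?_
    by_contra hcon
    rw [not_lt, top_le_iff] at hcon
    simp [hcon] at ht
  · have := integrable_toReal_of_lintegral_ne_top hme h.ne
    refine this.congr ?_
    filter_upwards [ae_restrict_mem measurableSet_Icc] with t ht2
    rw [nsq_eq (hc t ht2.1)]

theorem IsClassicalSolution.sol {μ κ R c K : ℝ} {v u θ : ℝ → ℝ → ℝ} (hc : 0 < c) (hK : 1 ≤ K)
    (H : IsClassicalSolution μ κ R c v u θ) (HV : VolBounded K v) : Sol μ κ R c K v u θ := by
  have hsl : ∀ t, 0 ≤ t → Sl K (fun x => v x t) (fun x => u x t) (fun x => θ x t) := by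
    intro t ht
    obtain ⟨B, hB⟩ := H.reg_H1 t ht
    obtain ⟨-, h1, h2, h3, h4, h5, h6⟩ := bd_of_H1 (H.smooth_x_v t ht) (H.smooth_x_u t ht)
      (H.smooth_x_θ t ht) (hB t ⟨ht, le_rfl⟩)
    exact ⟨hK, H.smooth_x_v t ht, H.smooth_x_u t ht, H.smooth_x_θ t ht, fun x => (HV x t ht).1,
      fun x => (HV x t ht).2, fun x => H.θ_pos x t ht, h1, h2, h3, h4, h5, h6⟩
  have tv : TM v := TM.of_cont (fun t ht => (hsl t ht).contv)
    fun x t ht => (H.smooth_t_v x t ht).continuousAt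
  have tu : TM u := TM.of_cont (fun t ht => (hsl t ht).contu)
    fun x t ht => (H.smooth_t_u x t ht).continuousAt
  have tθ : TM θ := TM.of_cont (fun t ht => (hsl t ht).contθ)
    fun x t ht => (H.smooth_t_θ x t ht).continuousAt
  have tu2 : TM (pdx (pdx u)) :=
    (tu.pdx fun t ht x => ((hsl t ht).du x).differentiableAt).pdx
      fun t ht x => ((hsl t ht).du' x).differentiableAt
  have tθ2 : TM (pdx (pdx θ)) :=
    (tθ.pdx fun t ht x => ((hsl t ht).dθ x).differentiableAt).pdx
      fun t ht x => ((hsl t ht).dθ' x).differentiableAt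
  have key : ∀ T, 0 < T →
      ((∀ᵐ t ∂((volume : Measure ℝ).restrict (Icc 0 T)),
        MemLp (deriv (deriv fun x => u x t)) 2 volume) ∧
        IntegrableOn (fun t => nsq (deriv (deriv fun x => u x t))) (Icc 0 T)) ∧
      ((∀ᵐ t ∂((volume : Measure ℝ).restrict (Icc 0 T)),
        MemLp (deriv (deriv fun x => θ x t)) 2 volume) ∧
        IntegrableOn (fun t => nsq (deriv (deriv fun x => θ x t))) (Icc 0 T)) := by
    intro T hT
    have h := H.reg_H2 T hT
    constructor
    · refine ae_memLp_of_lintegral tu2 (fun t ht => (hsl t ht).contu'') (lt_of_le_of_lt ?_ h)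
      refine lintegral_mono fun t => le_add_right ?_
      gcongr
      exact le_add_self
    · refine ae_memLp_of_lintegral tθ2 (fun t ht => (hsl t ht).contθ'') (lt_of_le_of_lt ?_ h)
      refine lintegral_mono fun t => le_add_left ?_
      gcongr
      have d2 : deriv (fun x => θ x t - 1) = deriv (fun x => θ x t) := by ext x; simp
      unfold H2
      rw [d2]
      exact le_add_self
  refine ⟨hsl, ?_, tv, tu, tθ, ?_, ?_, ?_, ?_, ?_⟩
  · have : ∀ᵐ t : ℝ, ∀ n : ℕ, t ∈ Icc (0 : ℝ) ((n : ℝ) + 1) →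
        MemLp (deriv (deriv fun x => u x t)) 2 volume ∧
        MemLp (deriv (deriv fun x => θ x t)) 2 volume := by
      rw [ae_all_iff]
      intro n
      rw [← ae_restrict_iff' measurableSet_Icc]
      have := key ((n : ℝ) + 1) (by positivity)
      filter_upwards [this.1.1, this.2.1] with t h1 h2 using ⟨h1, h2⟩
    filter_upwards [this] with t h ht
    obtain ⟨n, hn⟩ := exists_nat_ge t
    obtain ⟨h1, h2⟩ := h n ⟨ht, by linarith⟩
    exact { toSl := hsl t ht, mu'' := h1, mθ'' := h2 }
  · intro T hT
    obtain ⟨B, hB⟩ := H.reg_H1 T hT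
    refine ⟨B ^ 2, sq_nonneg _, fun t ht => ?_⟩
    exact (bd_of_H1 (H.smooth_x_v t ht.1) (H.smooth_x_u t ht.1)
      (H.smooth_x_θ t ht.1) (hB t ht)).1
  · intro s t hs
    have := key (|t| + 1) (by positivity)
    refine (this.1.2.add this.2.2).mono_set (Icc_subset_Icc hs ?_)
    linarith [le_abs_self t]
  · intro x t ht
    have := (H.smooth_t_v x t ht).hasDerivAt
    rwa [show deriv (fun s => v x s) t = _ from H.eq_mass x t ht] at this
  · intro x t ht
    have := (H.smooth_t_u x t ht).hasDerivAt
    refine this.congr_deriv ?_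
    have S := hsl t ht
    have hv := S.v_ne x
    have e := H.eq_momentum x t ht
    have d1 : HasDerivAt (fun y => R * θ y t / v y t) _ x :=
      ((S.dθ x).const_mul R).div (S.dv x) (S.v_ne x)
    have d2 : HasDerivAt (fun y => pdx u y t / v y t) _ x := (S.du' x).div (S.dv x) (S.v_ne x)
    have e1 : pdx (fun y s => R * θ y s / v y s) x t = _ := d1.deriv
    have e2 : pdx (fun y s => pdx u y s / v y s) x t = _ := d2.deriv
    rw [e1, e2] at e
    have e3 := eq_sub_of_add_eq e
    rw [show deriv (fun s => u x s) t = pdt u x t from rfl, e3]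
    unfold sgx
    field_simp
    ring
  · intro x t ht
    have := (H.smooth_t_θ x t ht).hasDerivAt
    refine this.congr_deriv ?_
    have S := hsl t ht
    have hv := S.v_ne x
    have e := H.eq_energy x t ht
    have e2 : pdx (fun y s => pdx θ y s / v y s) x t = _ := (S.dq x).deriv
    rw [e2] at e
    have e3 : pdt θ x t = (κ * qx (fun x => v x t) (fun x => θ x t) x
      + μ * (pdx u x t) ^ 2 / v x t - (R * θ x t / v x t) * pdx u x t) / c := by
      rw [eq_div_iff hc.ne']; linarith
    rw [show deriv (fun s => θ x s) t = pdt θ x t from rfl, e3]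
    unfold tt sg
    rw [show pdx u x t = deriv (fun y => u y t) x from rfl]
    field_simp
    ring

/-! ### Integrable majorants and the energy principle -/

/-- The integrable majorant available at every time. -/
noncomputable def d0 (v u θ : ℝ → ℝ) (x : ℝ) : ℝ :=
  (v x - 1) ^ 2 + u x ^ 2 + (θ x - 1) ^ 2 + deriv u x ^ 2 + deriv θ x ^ 2

/-- The integrable majorant available at almost every time and on slabs. -/
noncomputable def dm (μ κ R c : ℝ) (v u θ : ℝ → ℝ) (x : ℝ) : ℝ :=
  d0 v u θ x + sg μ R v u θ x ^ 2 + sgx μ R v u θ x ^ 2 + qx v θ x ^ 2 + tt μ κ R c v u θ x ^ 2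

theorem d0_nonneg (v u θ : ℝ → ℝ) (x : ℝ) : 0 ≤ d0 v u θ x := by unfold d0; positivity

theorem dm_nonneg (μ κ R c : ℝ) (v u θ : ℝ → ℝ) (x : ℝ) : 0 ≤ dm μ κ R c v u θ x := by
  have := d0_nonneg v u θ x
  unfold dm; positivity

theorem Sl.d0_int {K : ℝ} {v u θ : ℝ → ℝ} (S : Sl K v u θ) : Integrable (d0 v u θ) :=
  (((S.mv.integrable_sq.add S.mu.integrable_sq).add S.mθ.integrable_sq).add
    S.mu'.integrable_sq).add S.mθ'.integrable_sq

theorem Sl.d0_integral {K : ℝ} {v u θ : ℝ → ℝ} (S : Sl K v u θ) :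
    ∫ x, d0 v u θ x = nsq (fun x => v x - 1) + nsq u + nsq (fun x => θ x - 1) + nsq (deriv u)
      + nsq (deriv θ) := by
  have i1 := S.mv.integrable_sq; have i2 := S.mu.integrable_sq; have i3 := S.mθ.integrable_sq
  have i4 := S.mu'.integrable_sq; have i5 := S.mθ'.integrable_sq
  unfold d0
  rw [integral_add (by exact ((i1.add i2).add i3).add i4) i5,
    integral_add (by exact (i1.add i2).add i3) i4, integral_add (by exact i1.add i2) i3,
    integral_add i1 i2]
  rfl

theorem Sl.int_of_d0 {K : ℝ} {v u θ : ℝ → ℝ} (S : Sl K v u θ) {f : ℝ → ℝ} (hf : Continuous f)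
    (C : ℝ) (h : ∀ x, |f x| ≤ C * d0 v u θ x) : Integrable f :=
  (S.d0_int.const_mul C).mono' hf.aestronglyMeasurable (ae_of_all _ h)

theorem Sl2.dm_int {K : ℝ} {v u θ : ℝ → ℝ} (S : Sl2 K v u θ) (μ κ R c : ℝ) :
    Integrable (dm μ κ R c v u θ) :=
  (((S.d0_int.add (S.msg μ R).integrable_sq).add (S.msgx μ R).integrable_sq).add
    S.mqx.integrable_sq).add (S.mtt μ κ R c).integrable_sq

theorem Sl2.dm_integral {K : ℝ} {v u θ : ℝ → ℝ} (S : Sl2 K v u θ) (μ κ R c : ℝ) :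
    ∫ x, dm μ κ R c v u θ x = (∫ x, d0 v u θ x) + nsq (sg μ R v u θ) + nsq (sgx μ R v u θ)
      + nsq (qx v θ) + nsq (tt μ κ R c v u θ) := by
  have i1 := S.d0_int; have i2 := (S.msg μ R).integrable_sq; have i3 := (S.msgx μ R).integrable_sq
  have i4 := S.mqx.integrable_sq; have i5 := (S.mtt μ κ R c).integrable_sq
  unfold dm
  rw [integral_add (by exact ((i1.add i2).add i3).add i4) i5,
    integral_add (by exact (i1.add i2).add i3) i4, integral_add (by exact i1.add i2) i3,
    integral_add i1 i2]
  rfl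

theorem Sl2.int_of_dm {K : ℝ} {v u θ : ℝ → ℝ} (S : Sl2 K v u θ) (μ κ R c : ℝ) {f : ℝ → ℝ}
    (hf : Continuous f) (C : ℝ) (h : ∀ x, |f x| ≤ C * dm μ κ R c v u θ x) : Integrable f :=
  ((S.dm_int μ κ R c).const_mul C).mono' hf.aestronglyMeasurable (ae_of_all _ h)

/-- For states bounded in `H¹`, the mass of the majorant is controlled linearly by the squared
norm of the second derivatives. -/
theorem dm_bound (μ κ R c K B : ℝ) (hB : 0 ≤ B) : ∃ a b : ℝ, ∀ v u θ : ℝ → ℝ, Sl2 K v u θ →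
    Bd B v u θ → ∫ x, dm μ κ R c v u θ x ≤
      a + b * (nsq (deriv (deriv u)) + nsq (deriv (deriv θ))) := by
  set a1 := K ^ 2 * (2 * μ ^ 2 * B + 2 * R ^ 2 * (4 * B + 2 * K ^ 2)) with ha1
  set b1 := K ^ 2 * (2 * μ ^ 2) with hb1
  refine ⟨5 * B + K ^ 2 * (2 * μ ^ 2 * B + 2 * R ^ 2 * (4 * B)) +
    (4 * K ^ 2 * R ^ 2 * B + (4 * K ^ 2 * R ^ 2 + 4 * K ^ 2 * a1) * B) + (2 * K ^ 4 * B * B) +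
    (c⁻¹) ^ 2 * (2 * κ ^ 2 * (2 * K ^ 4 * B * B) + (4 * a1 + 4 * R ^ 2) * B),
    (4 * K ^ 2 * μ ^ 2 + 4 * K ^ 2 * b1 * B) + (2 * K ^ 2 + 2 * K ^ 4 * B) +
    (c⁻¹) ^ 2 * (2 * κ ^ 2 * (2 * K ^ 2 + 2 * K ^ 4 * B) + 4 * b1 * B), ?_⟩
  intro v u θ S b
  obtain ⟨b1', b2, b3, b4, b5, b6⟩ := b
  have n1 := nsq_nonneg (deriv (deriv u))
  have n2 := nsq_nonneg (deriv (deriv θ))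
  set n := nsq (deriv (deriv u)) + nsq (deriv (deriv θ)) with hn
  have hA : ∀ y, sg μ R v u θ y ^ 2 ≤ a1 + b1 * n := by
    intro y
    refine (S.sg_sup μ R y).trans ?_
    calc _ ≤ K ^ 2 * (2 * μ ^ 2 * (B + n) + 2 * R ^ 2 * (2 * (B + B) + 2 * K ^ 2)) := by
          gcongr; linarith
      _ = _ := by rw [ha1, hb1]; ring
  have hA0 : 0 ≤ a1 + b1 * n := (sq_nonneg _).trans (hA 0)
  have e1 : nsq (sg μ R v u θ) ≤ K ^ 2 * (2 * μ ^ 2 * B + 2 * R ^ 2 * (4 * B)) := by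
    refine (S.nsq_sg μ R).trans ?_
    gcongr
    linarith [S.nsq_θ_sub_v]
  have e2 : nsq (sgx μ R v u θ) ≤ 4 * K ^ 2 * μ ^ 2 * n + 4 * K ^ 2 * R ^ 2 * B
      + (4 * K ^ 2 * R ^ 2 + 4 * K ^ 2 * (a1 + b1 * n)) * B := by
    refine (S.nsq_sgx μ R hA).trans ?_
    gcongr
    linarith
  have e3 : nsq (qx v θ) ≤ 2 * K ^ 2 * n + 2 * K ^ 4 * (B + n) * B := by
    refine S.nsq_qx.trans ?_
    have := nsq_nonneg (deriv θ)
    have := nsq_nonneg (deriv v)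
    gcongr <;> linarith
  have e4 : nsq (tt μ κ R c v u θ) ≤ (c⁻¹) ^ 2 * (2 * κ ^ 2 *
      (2 * K ^ 2 * n + 2 * K ^ 4 * (B + n) * B) + (4 * (a1 + b1 * n) + 4 * R ^ 2) * B) := by
    refine (S.nsq_tt μ κ R c hA).trans ?_
    gcongr
  rw [S.dm_integral, S.d0_integral]
  linarith

/-- Pointwise differential inequalities integrate: an exact derivative contributes nothing. -/
theorem int_le_of_flux {h g F F' : ℝ → ℝ} (ih : Integrable h) (ig : Integrable g)
    (iF : Integrable F) (iF' : Integrable F') (hF : ∀ x, HasDerivAt F (F' x) x)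
    (hle : ∀ x, h x ≤ g x + F' x) : ∫ x, h x ≤ ∫ x, g x := by
  have h0 := integral_eq_zero_of_hasDerivAt_of_integrable hF iF' iF
  calc ∫ x, h x ≤ ∫ x, (g x + F' x) := integral_mono ih (ig.add iF') hle
    _ = ∫ x, g x := by rw [integral_add ig iF', h0, add_zero]

theorem TM.pdt {g h : ℝ → ℝ → ℝ} (tg : TM g)
    (hd : ∀ x τ, 0 ≤ τ → HasDerivAt (fun r => g x r) (h x τ) τ) : TM h := by
  have lim : ∀ p : ℝ × ℝ, Tendsto (fun n : ℕ => ((n : ℝ) + 1) *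
      (g p.1 (max (max p.2 0 + 1 / ((n : ℝ) + 1)) 0) - g p.1 (max p.2 0))) atTop
      (nhds (h p.1 (max p.2 0))) := by
    intro p
    have := (hd p.1 _ (le_max_right p.2 0)).tendsto_slope_zero
    have hz : Tendsto (fun n : ℕ => 1 / ((n : ℝ) + 1)) atTop (nhdsWithin 0 {0}ᶜ) := by
      rw [tendsto_nhdsWithin_iff]
      refine ⟨tendsto_one_div_add_atTop_nhds_zero_nat, Eventually.of_forall fun n => ?_⟩
      simp only [mem_compl_iff, mem_singleton_iff]
      positivity
    refine (this.comp hz).congr fun n => ?_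
    have : 0 ≤ max p.2 0 + 1 / ((n : ℝ) + 1) := add_nonneg (le_max_right _ _) (by positivity)
    simp only [Function.comp_apply, smul_eq_mul, max_eq_left this]
    simp
  refine measurable_of_tendsto_metrizable (fun n => ?_) (tendsto_pi_nhds.mpr lim)
  refine Measurable.const_mul (Measurable.sub ?_ tg) _
  exact Measurable.comp (g := fun p : ℝ × ℝ => g p.1 (max p.2 0))
    (f := fun p : ℝ × ℝ => (p.1, max p.2 0 + 1 / ((n : ℝ) + 1))) tg (by fun_prop)

namespace Sol
variable {μ κ R c K : ℝ} {v u θ : ℝ → ℝ → ℝ} (H : Sol μ κ R c K v u θ)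
include H

theorem tu' : TM (pdx u) := H.tu.pdx fun t ht x => ((H.sl t ht).du x).differentiableAt
theorem tθ' : TM (pdx θ) := H.tθ.pdx fun t ht x => ((H.sl t ht).dθ x).differentiableAt
theorem tsgx : TM fun x t => sgx μ R (v · t) (u · t) (θ · t) x := H.tu.pdt H.dtu
theorem ttt : TM fun x t => tt μ κ R c (v · t) (u · t) (θ · t) x := H.tθ.pdt H.dtθ
theorem tsg : TM fun x t => sg μ R (v · t) (u · t) (θ · t) x :=
  ((H.tu'.const_mul μ).sub ((H.tθ.sub H.tv).const_mul R)).div H.tv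
theorem tqx : TM fun x t => qx (v · t) (θ · t) x := by
  have h : TM fun x t => pdx θ x t / v x t := H.tθ'.div H.tv
  have := h.pdx fun t ht x => ((H.sl t ht).dq x).differentiableAt
  unfold TM at this ⊢
  convert this using 2 with p
  exact ((H.sl _ (le_max_right p.2 0)).dq p.1).deriv.symm

theorem tdm : TM fun x t => dm μ κ R c (v · t) (u · t) (θ · t) x :=
  ((((((((H.tv.sub_const 1).pow_const 2).add (H.tu.pow_const 2)).add
    ((H.tθ.sub_const 1).pow_const 2)).add (H.tu'.pow_const 2)).add (H.tθ'.pow_const 2)).add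
    (H.tsg.pow_const 2)).add (H.tsgx.pow_const 2) |>.add (H.tqx.pow_const 2)).add
    (H.ttt.pow_const 2)

/-- In integrated form, the mass of the majorant is locally integrable in time. -/
theorem dm_slab {s t : ℝ} (hs : 0 ≤ s) :
    Integrable (Function.uncurry fun x t => dm μ κ R c (v · t) (u · t) (θ · t) x) (slab s t) := by
  obtain ⟨B, hB0, hB⟩ := H.bd (max t 0) (le_max_right _ _)
  obtain ⟨a, b, hab⟩ := dm_bound μ κ R c K B hB0
  have i : IntegrableOn (fun τ => a + b * (nsq (deriv (deriv fun x => u x τ))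
    + nsq (deriv (deriv fun x => θ x τ)))) (Icc s t) :=
    (integrableOn_const (by simp)).add ((H.n2 s t hs).const_mul b)
  refine H.tdm.integrable hs i ?_
  filter_upwards [ae_Icc_of_ae hs H.sl2, ae_restrict_mem measurableSet_Icc] with τ h hτ
  refine ⟨h.dm_int μ κ R c, ?_⟩
  simp only [abs_of_nonneg (dm_nonneg _ _ _ _ _ _ _ _)]
  exact hab _ _ _ h (hB τ ⟨hs.trans hτ.1, hτ.2.trans (le_max_left _ _)⟩)

theorem slab_int {F : ℝ → ℝ → ℝ} (hF : TM F) {s t : ℝ} (hs : 0 ≤ s) (C : ℝ)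
    (h : ∀ τ ∈ Icc s t, ∀ x, |F x τ| ≤ C * dm μ κ R c (v · τ) (u · τ) (θ · τ) x) :
    Integrable (Function.uncurry F) (slab s t) := by
  refine ((H.dm_slab hs).const_mul C).mono' (hF.aesm hs) ?_
  have : ∀ᵐ z ∂(slab s t), z ∈ (univ : Set ℝ) ×ˢ Icc s t := by
    unfold slab
    rw [show (volume : Measure ℝ).prod ((volume : Measure ℝ).restrict (Icc s t))
      = ((volume : Measure ℝ).prod volume).restrict (univ ×ˢ Icc s t) by
        rw [← Measure.prod_restrict, Measure.restrict_univ]]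
    exact ae_restrict_mem (MeasurableSet.univ.prod measurableSet_Icc)
  filter_upwards [this] with z hz
  exact h z.2 hz.2 z.1

theorem intervalIntegrable {F : ℝ → ℝ → ℝ} (hF : TM F) {s t : ℝ} (hs : 0 ≤ s) (hst : s ≤ t)
    (C : ℝ) (h : ∀ τ ∈ Icc s t, ∀ x, |F x τ| ≤ C * dm μ κ R c (v · τ) (u · τ) (θ · τ) x) :
    IntervalIntegrable (fun τ => ∫ x, F x τ) volume s t :=
  intervalIntegrable_of_slab hst (H.slab_int hF hs C h)

/-- The energy principle: the integral of a density is absolutely continuous in time as soon as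
the density and its time derivative have locally uniform bounds by the majorants. -/
theorem energy {g h : ℝ → ℝ → ℝ} (hg : ∀ t, 0 ≤ t → Continuous (g · t))
    (hd : ∀ x τ, 0 ≤ τ → HasDerivAt (fun r => g x r) (h x τ) τ)
    (bg : ∀ t, 0 ≤ t → ∃ C, ∀ x, |g x t| ≤ C * d0 (v · t) (u · t) (θ · t) x)
    (bh : ∀ T, 0 ≤ T → ∃ C, ∀ τ ∈ Icc 0 T, ∀ x,
      |h x τ| ≤ C * dm μ κ R c (v · τ) (u · τ) (θ · τ) x) {s t : ℝ} (hs : 0 ≤ s) (hst : s ≤ t) :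
    (∫ x, g x t = (∫ x, g x s) + ∫ τ in s..t, ∫ x, h x τ) ∧
      IntervalIntegrable (fun τ => ∫ x, h x τ) volume s t := by
  have th : TM h := (TM.of_cont hg fun x t ht => (hd x t ht).continuousAt).pdt hd
  obtain ⟨C, hC⟩ := bh t (hs.trans hst)
  have hC' : ∀ τ ∈ Icc s t, ∀ x, |h x τ| ≤ C * dm μ κ R c (v · τ) (u · τ) (θ · τ) x :=
    fun τ hτ => hC τ ⟨hs.trans hτ.1, hτ.2⟩
  obtain ⟨C1, h1⟩ := bg s hs
  obtain ⟨C2, h2⟩ := bg t (hs.trans hst)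
  exact ⟨slab_ftc hs hst hd (H.slab_int th hs C hC')
    ((H.sl s hs).int_of_d0 (hg s hs) C1 h1)
    ((H.sl t (hs.trans hst)).int_of_d0 (hg t (hs.trans hst)) C2 h2),
    H.intervalIntegrable th hs hst C hC'⟩

end Sol

/-! ### The entropy estimate -/

theorem abs_mul_le_of_sq {a b D : ℝ} (ha : a ^ 2 ≤ D) (hb : b ^ 2 ≤ D) : |a * b| ≤ D := by
  rw [abs_le]
  constructor <;> nlinarith [sq_nonneg (a + b), sq_nonneg (a - b)]

theorem abs_mul_le_of_sq' {k a b D k' : ℝ} (ha : a ^ 2 ≤ D) (hb : b ^ 2 ≤ D) (hk : |k| ≤ k') :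
    |k * (a * b)| ≤ k' * D := by
  rw [abs_mul]
  exact mul_le_mul hk (abs_mul_le_of_sq ha hb) (abs_nonneg _) ((abs_nonneg _).trans hk)

theorem dm_ge (μ κ R c : ℝ) (v u θ : ℝ → ℝ) (x : ℝ) :
    (v x - 1) ^ 2 ≤ dm μ κ R c v u θ x ∧ u x ^ 2 ≤ dm μ κ R c v u θ x ∧
    (θ x - 1) ^ 2 ≤ dm μ κ R c v u θ x ∧ deriv u x ^ 2 ≤ dm μ κ R c v u θ x ∧
    deriv θ x ^ 2 ≤ dm μ κ R c v u θ x ∧ sg μ R v u θ x ^ 2 ≤ dm μ κ R c v u θ x ∧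
    sgx μ R v u θ x ^ 2 ≤ dm μ κ R c v u θ x ∧ qx v θ x ^ 2 ≤ dm μ κ R c v u θ x ∧
    tt μ κ R c v u θ x ^ 2 ≤ dm μ κ R c v u θ x := by
  have h1 := sq_nonneg (v x - 1); have h2 := sq_nonneg (u x); have h3 := sq_nonneg (θ x - 1)
  have h4 := sq_nonneg (deriv u x); have h5 := sq_nonneg (deriv θ x)
  have h6 := sq_nonneg (sg μ R v u θ x); have h7 := sq_nonneg (sgx μ R v u θ x)
  have h8 := sq_nonneg (qx v θ x); have h9 := sq_nonneg (tt μ κ R c v u θ x)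
  unfold dm d0
  refine ⟨?_, ?_, ?_, ?_, ?_, ?_, ?_, ?_, ?_⟩ <;> linarith

theorem d0_ge (v u θ : ℝ → ℝ) (x : ℝ) :
    (v x - 1) ^ 2 ≤ d0 v u θ x ∧ u x ^ 2 ≤ d0 v u θ x ∧
    (θ x - 1) ^ 2 ≤ d0 v u θ x ∧ deriv u x ^ 2 ≤ d0 v u θ x ∧ deriv θ x ^ 2 ≤ d0 v u θ x := by
  have h1 := sq_nonneg (v x - 1); have h2 := sq_nonneg (u x); have h3 := sq_nonneg (θ x - 1)
  have h4 := sq_nonneg (deriv u x); have h5 := sq_nonneg (deriv θ x)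
  unfold d0
  refine ⟨?_, ?_, ?_, ?_, ?_⟩ <;> linarith

theorem d0_le_dm (μ κ R c : ℝ) (v u θ : ℝ → ℝ) (x : ℝ) : d0 v u θ x ≤ dm μ κ R c v u θ x := by
  have h6 := sq_nonneg (sg μ R v u θ x); have h7 := sq_nonneg (sgx μ R v u θ x)
  have h8 := sq_nonneg (qx v θ x); have h9 := sq_nonneg (tt μ κ R c v u θ x)
  unfold dm; linarith

theorem log_lower {x : ℝ} (hx : 0 < x) : (x - 1) ^ 2 / (2 * (x + 1)) ≤ x - 1 - Real.log x := by
  obtain ⟨s, hs, rfl⟩ : ∃ s : ℝ, 0 < s ∧ x = s ^ 2 :=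
    ⟨Real.sqrt x, Real.sqrt_pos.mpr hx, (Real.sq_sqrt hx.le).symm⟩
  have h1 : Real.log (s ^ 2) ≤ 2 * (s - 1) := by
    rw [Real.log_pow]
    have := Real.log_le_sub_one_of_pos hs
    push_cast; linarith
  have h2 : (s ^ 2 - 1) ^ 2 / (2 * (s ^ 2 + 1)) ≤ (s - 1) ^ 2 := by
    rw [div_le_iff₀ (by positivity)]
    nlinarith [mul_nonneg (sq_nonneg (s - 1)) (sq_nonneg (s - 1))]
  nlinarith

theorem log_upper {x : ℝ} (hx : 0 < x) : x - 1 - Real.log x ≤ (x - 1) ^ 2 / x := by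
  have h1 := Real.one_sub_inv_le_log_of_pos hx
  have : (x - 1) ^ 2 / x = x - 1 - (1 - x⁻¹) := by field_simp
  linarith

/-- The regularised thermal entropy `(θ - 1) - (1 + δ) log ((θ + δ) / (1 + δ))`, whose derivative
`(θ - 1) / (θ + δ)` stays bounded as `θ → 0`. -/
noncomputable def ps (δ y : ℝ) : ℝ :=
  (1 + δ) * ((y + δ) / (1 + δ) - 1 - Real.log ((y + δ) / (1 + δ)))

theorem ps_lower {δ y : ℝ} (hδ : 0 < δ) (hδ1 : δ ≤ 1) (hy : 0 < y) :
    (y - 1) ^ 2 / (2 * (y + 3)) ≤ ps δ y := by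
  have hX : 0 < (y + δ) / (1 + δ) := by positivity
  have h := log_lower hX
  have : (1 + δ) * (((y + δ) / (1 + δ) - 1) ^ 2 / (2 * ((y + δ) / (1 + δ) + 1))) =
      (y - 1) ^ 2 / (2 * (y + 1 + 2 * δ)) := by
    have : (y + δ) / (1 + δ) + 1 = (y + 1 + 2 * δ) / (1 + δ) := by field_simp; ring
    have h2 : (y + δ) / (1 + δ) - 1 = (y - 1) / (1 + δ) := by field_simp; ring
    rw [this, h2]
    field_simp
  calc (y - 1) ^ 2 / (2 * (y + 3)) ≤ (y - 1) ^ 2 / (2 * (y + 1 + 2 * δ)) := by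
        gcongr (y - 1) ^ 2 / (2 * ?_); linarith
    _ ≤ ps δ y := by
      rw [← this]; unfold ps; gcongr

theorem ps_upper {δ y : ℝ} (hδ : 0 < δ) (hy : 0 < y) : ps δ y ≤ (y - 1) ^ 2 / (y + δ) := by
  have hX : 0 < (y + δ) / (1 + δ) := by positivity
  have h := log_upper hX
  have : (1 + δ) * (((y + δ) / (1 + δ) - 1) ^ 2 / ((y + δ) / (1 + δ))) =
      (y - 1) ^ 2 / (y + δ) := by
    have h2 : (y + δ) / (1 + δ) - 1 = (y - 1) / (1 + δ) := by field_simp; ring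
    rw [h2]
    field_simp
  rw [← this]; unfold ps; gcongr

theorem ps_nonneg {δ y : ℝ} (hδ : 0 < δ) (hδ1 : δ ≤ 1) (hy : 0 < y) : 0 ≤ ps δ y :=
  le_trans (by positivity) (ps_lower hδ hδ1 hy)

theorem ps_deriv {δ y : ℝ} (hδ : 0 < δ) (hy : 0 < y) :
    HasDerivAt (ps δ) ((y - 1) / (y + δ)) y := by
  have hX : (y + δ) / (1 + δ) ≠ 0 := by positivity
  have h1 : HasDerivAt (fun y => (y + δ) / (1 + δ)) (1 / (1 + δ)) y :=
    ((hasDerivAt_id y).add_const δ).div_const _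
  have := ((h1.sub_const 1).sub (h1.log hX)).const_mul (1 + δ)
  refine this.congr_deriv ?_
  field_simp
  ring

/-- Density of the entropy dissipation. -/
noncomputable def dd (u θ : ℝ → ℝ) (x : ℝ) : ℝ :=
  deriv u x ^ 2 / (1 + θ x) + deriv θ x ^ 2 / (1 + θ x) ^ 2

/-- The entropy dissipation. -/
noncomputable def Dh (u θ : ℝ → ℝ) : ℝ := ∫ x, dd u θ x

namespace Sl
variable {K : ℝ} {v u θ : ℝ → ℝ} (S : Sl K v u θ)
include S

theorem dd_nonneg (x : ℝ) : 0 ≤ dd u θ x := by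
  have := S.θ_pos x
  unfold dd; positivity

theorem Dh_nonneg : 0 ≤ Dh u θ := integral_nonneg S.dd_nonneg

theorem dd_le (x : ℝ) : dd u θ x ≤ deriv u x ^ 2 + deriv θ x ^ 2 := by
  have := S.θ_pos x
  unfold dd
  gcongr
  · exact div_le_self (sq_nonneg _) (by linarith)
  · exact div_le_self (sq_nonneg _) (by nlinarith)

theorem dd_le_d0 (x : ℝ) : dd u θ x ≤ d0 v u θ x := by
  refine (S.dd_le x).trans ?_
  have h1 := sq_nonneg (v x - 1); have h2 := sq_nonneg (u x); have h3 := sq_nonneg (θ x - 1)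
  unfold d0; linarith

theorem cont_dd : Continuous (dd u θ) := by
  have := S.contu'; have := S.contθ'; have := S.contθ
  have h : ∀ x, 1 + θ x ≠ 0 := fun x => by have := S.θ_pos x; positivity
  unfold dd
  exact (Continuous.div (by fun_prop) (by fun_prop) h).add
    (Continuous.div (by fun_prop) (by fun_prop) fun x => pow_ne_zero 2 (h x))

theorem dd_int : Integrable (dd u θ) := by
  refine S.int_of_d0 S.cont_dd 1 fun x => ?_
  rw [abs_of_nonneg (S.dd_nonneg x), one_mul]
  exact S.dd_le_d0 x

theorem Dh_le : Dh u θ ≤ nsq (deriv u) + nsq (deriv θ) := by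
  have i1 := S.mu'.integrable_sq; have i2 := S.mθ'.integrable_sq
  unfold Dh nsq
  rw [← integral_add i1 i2]
  exact integral_mono S.dd_int (i1.add i2) S.dd_le

end Sl

/-- Time derivative of the regularised entropy density. -/
noncomputable def h1 (μ κ R c δ : ℝ) (v u θ : ℝ → ℝ) (x : ℝ) : ℝ :=
  u x * sgx μ R v u θ x + R / v x * ((v x - 1) * deriv u x)
    + c / (θ x + δ) * ((θ x - 1) * tt μ κ R c v u θ x)

/-- The error caused by the regularisation of the entropy. -/
noncomputable def er (R K δ : ℝ) (u θ : ℝ → ℝ) (x : ℝ) : ℝ :=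
  R * K * (|deriv u x * (θ x - 1)| * (δ / (θ x + δ)))

theorem entropy_pointwise {μ κ R c K δ V T ux tx s s' q' : ℝ} (hμ : 0 < μ) (hκ : 0 < κ)
    (hR : 0 < R) (hc : 0 < c)
    (hδ : 0 < δ) (hV0 : 0 < V) (hV : V⁻¹ ≤ K) (hV2 : V ≤ K) (hT : 0 < T)
    (hδ1 : δ ≤ 1) (U : ℝ) (hs : s = (μ * ux - R * (T - V)) / V) :
    U * s' + R / V * ((V - 1) * ux) + c / (T + δ) * ((T - 1) * ((κ * q' + (s - R) * ux) / c)) ≤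
    (-(min μ κ / K) * (ux ^ 2 / (1 + T) + tx ^ 2 / (1 + T) ^ 2)
      + R * K * (|ux * (T - 1)| * (δ / (T + δ))))
      + ((ux * s + U * s') + κ * ((tx * (T + δ) - (T - 1) * tx) / (T + δ) ^ 2 * (tx / V) +
        (T - 1) / (T + δ) * q')) := by
  have hTδ : 0 < T + δ := by positivity
  have e : U * s' + R / V * ((V - 1) * ux)
      + c / (T + δ) * ((T - 1) * ((κ * q' + (s - R) * ux) / c)) =
      ((ux * s + U * s') + κ * ((tx * (T + δ) - (T - 1) * tx) / (T + δ) ^ 2 * (tx / V) +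
        (T - 1) / (T + δ) * q')) + (-(μ * V⁻¹ * (ux ^ 2 * ((1 + δ) / (T + δ))))
        - κ * V⁻¹ * (tx ^ 2 * ((1 + δ) / (T + δ) ^ 2))
        + R * V⁻¹ * (ux * (T - 1) * (δ / (T + δ)))) := by
    rw [hs]
    field_simp
    ring
  rw [e]
  have hK0 : 0 < K := lt_of_lt_of_le (inv_pos.mpr hV0) hV
  have hKV : K⁻¹ ≤ V⁻¹ := by gcongr
  have a1 : 1 / (1 + T) ≤ (1 + δ) / (T + δ) := by
    rw [div_le_div_iff₀ (by positivity) hTδ]; nlinarith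
  have a2 : 1 / (1 + T) ^ 2 ≤ (1 + δ) / (T + δ) ^ 2 := by
    rw [div_le_div_iff₀ (by positivity) (by positivity)]
    have : (T + δ) ^ 2 ≤ (1 + T) ^ 2 := by gcongr ?_ ^ 2; linarith
    nlinarith [sq_nonneg (1 + T)]
  have b1 : min μ κ * K⁻¹ * (ux ^ 2 * (1 / (1 + T))) ≤
      μ * V⁻¹ * (ux ^ 2 * ((1 + δ) / (T + δ))) := by
    gcongr
    exact min_le_left _ _
  have b2 : min μ κ * K⁻¹ * (tx ^ 2 * (1 / (1 + T) ^ 2)) ≤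
      κ * V⁻¹ * (tx ^ 2 * ((1 + δ) / (T + δ) ^ 2)) := by
    gcongr
    exact min_le_right _ _
  have b3 : R * V⁻¹ * (ux * (T - 1) * (δ / (T + δ))) ≤
      R * K * (|ux * (T - 1)| * (δ / (T + δ))) := by
    have := le_abs_self (ux * (T - 1))
    calc _ ≤ R * V⁻¹ * (|ux * (T - 1)| * (δ / (T + δ))) := by gcongr
      _ ≤ _ := by gcongr
  have e2 : -(min μ κ / K) * (ux ^ 2 / (1 + T) + tx ^ 2 / (1 + T) ^ 2) =
    -(min μ κ * K⁻¹ * (ux ^ 2 * (1 / (1 + T))))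
      - min μ κ * K⁻¹ * (tx ^ 2 * (1 / (1 + T) ^ 2)) := by
    rw [div_eq_mul_inv]; ring
  rw [e2]
  linarith

theorem er_nonneg {R K δ : ℝ} (hR : 0 < R) (hK : 1 ≤ K) (hδ : 0 < δ) {u θ : ℝ → ℝ} {x : ℝ}
    (h : 0 < θ x) : 0 ≤ er R K δ u θ x := by
  unfold er; positivity

theorem er_le {R K δ : ℝ} (hR : 0 < R) (hK : 1 ≤ K) (hδ : 0 < δ) {v u θ : ℝ → ℝ} {x : ℝ}
    (h : 0 < θ x) : er R K δ u θ x ≤ R * K * d0 v u θ x := by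
  unfold er
  obtain ⟨-, -, e3, e4, -⟩ := d0_ge v u θ x
  have h1 := abs_mul_le_of_sq e4 e3
  have h2 : δ / (θ x + δ) ≤ 1 := by rw [div_le_one (by positivity)]; linarith
  gcongr
  calc _ ≤ d0 v u θ x * 1 := by gcongr; exact d0_nonneg _ _ _ _
    _ = _ := mul_one _

theorem Sl.er_int {R K δ : ℝ} (hR : 0 < R) (hδ : 0 < δ) {v u θ : ℝ → ℝ} (S : Sl K v u θ) :
    Integrable (er R K δ u θ) := by
  have := S.contu'; have := S.contθ
  have h : ∀ x, θ x + δ ≠ 0 := fun x => by have := S.θ_pos x; positivity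
  refine S.int_of_d0 ?_ (R * K) fun x => ?_
  · unfold er
    exact continuous_const.mul ((by fun_prop : Continuous _).mul
      (Continuous.div (by fun_prop) (by fun_prop) h))
  · rw [abs_of_nonneg (er_nonneg hR S.hK hδ (S.θ_pos x))]
    exact er_le hR S.hK hδ (S.θ_pos x)

theorem h1_bound {μ κ R c K δ : ℝ} (hR : 0 < R) (hc : 0 < c) (hδ : 0 < δ) {v u θ : ℝ → ℝ}
    (S : Sl K v u θ) (x : ℝ) :
    |h1 μ κ R c δ v u θ x| ≤ (1 + R * K + c / δ) * dm μ κ R c v u θ x := by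
  obtain ⟨e1, e2, e3, e4, e5, e6, e7, e8, e9⟩ := dm_ge μ κ R c v u θ x
  have hv := S.v_pos x; have hθ := S.θ_pos x; have hiv := S.inv_v x
  have a1 := abs_mul_le_of_sq e2 e7
  have a2 := abs_mul_le_of_sq' (k := R / v x) (k' := R * K) e1 e4
    (by rw [abs_of_pos (by positivity), div_eq_mul_inv]; gcongr)
  have a3 := abs_mul_le_of_sq' (k := c / (θ x + δ)) (k' := c / δ) e3 e9
    (by rw [abs_of_pos (by positivity)]; gcongr; linarith)
  unfold h1
  refine (abs_add_three _ _ _).trans ?_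
  linarith

theorem h1_slice {μ κ R c K δ : ℝ} (hμ : 0 < μ) (hκ : 0 < κ) (hR : 0 < R) (hc : 0 < c)
    (hδ : 0 < δ) (hδ1 : δ ≤ 1) {v u θ : ℝ → ℝ} (S : Sl2 K v u θ) :
    ∫ x, h1 μ κ R c δ v u θ x ≤ -(min μ κ / K) * Dh u θ + ∫ x, er R K δ u θ x := by
  have hne : ∀ x, θ x + δ ≠ 0 := fun x => by have := S.θ_pos x; positivity
  have c1 := S.contv; have c2 := S.contu; have c3 := S.contθ; have c4 := S.contu'
  have c5 := S.contθ'; have c6 := S.cont_sg μ R; have c7 := S.cont_sgx μ R; have c8 := S.cont_qx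
  have c9 := S.cont_tt μ κ R c
  have ih : Integrable (h1 μ κ R c δ v u θ) := by
    refine S.int_of_dm μ κ R c ?_ _ (h1_bound hR hc hδ S.toSl)
    unfold h1
    exact ((by fun_prop : Continuous _).add ((continuous_const.div c1 S.v_ne).mul
      (by fun_prop))).add ((continuous_const.div (by fun_prop) hne).mul (by fun_prop))
  have hF : ∀ x, HasDerivAt (fun y => u y * sg μ R v u θ y
      + κ * ((θ y - 1) / (θ y + δ) * (deriv θ y / v y)))
      ((deriv u x * sg μ R v u θ x + u x * sgx μ R v u θ x) +
      κ * ((deriv θ x * (θ x + δ) - (θ x - 1) * deriv θ x) / (θ x + δ) ^ 2 * (deriv θ x / v x) +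
        (θ x - 1) / (θ x + δ) * qx v θ x)) x := fun x =>
    ((S.du x).mul (S.dsg μ R x)).add
      (((((S.dθ x).sub_const 1).div ((S.dθ x).add_const δ) (hne x)).mul (S.dq x)).const_mul κ)
  have i1 := S.dd_int.const_mul (-(min μ κ / K))
  have i2 := S.er_int (R := R) hR hδ
  have key := int_le_of_flux ih (i1.add i2) ?_ ?_ hF ?_
  · refine key.trans (le_of_eq ?_)
    rw [integral_add' i1 i2, integral_const_mul]
    rfl
  · refine S.int_of_dm μ κ R c (continuous_iff_continuousAt.mpr fun x => (hF x).continuousAt)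
      (1 + κ * (1 / δ * K)) fun x => ?_
    obtain ⟨e1, e2, e3, e4, e5, e6, e7, e8, e9⟩ := dm_ge μ κ R c v u θ x
    have hv := S.v_pos x; have hθ := S.θ_pos x; have hiv := S.inv_v x
    have a1 := abs_mul_le_of_sq e2 e6
    have a3 := abs_mul_le_of_sq' (k := κ * (1 / (θ x + δ) * (v x)⁻¹)) (k' := κ * (1 / δ * K)) e3 e5
      (by rw [abs_of_pos (by positivity)]; gcongr; linarith)
    have e : κ * ((θ x - 1) / (θ x + δ) * (deriv θ x / v x)) =
      κ * (1 / (θ x + δ) * (v x)⁻¹) * ((θ x - 1) * deriv θ x) := by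
      field_simp
    rw [e]
    refine (abs_add_le _ _).trans ?_
    linarith
  · refine S.int_of_dm μ κ R c ?_
      (2 + κ * ((1 + δ) / δ ^ 2 * K) + κ * (1 / δ)) fun x => ?_
    · exact (by fun_prop : Continuous _).add (continuous_const.mul
        (((Continuous.div (by fun_prop) (by fun_prop) fun x => pow_ne_zero 2 (hne x)).mul
          (c5.div c1 S.v_ne)).add ((Continuous.div (by fun_prop) (by fun_prop) hne).mul c8)))
    obtain ⟨e1, e2, e3, e4, e5, e6, e7, e8, e9⟩ := dm_ge μ κ R c v u θ x
    have hv := S.v_pos x; have hθ := S.θ_pos x; have hiv := S.inv_v x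
    have a1 := abs_mul_le_of_sq e4 e6
    have a2 := abs_mul_le_of_sq e2 e7
    have a3 := abs_mul_le_of_sq' (k := κ * ((1 + δ) / (θ x + δ) ^ 2 * (v x)⁻¹))
      (k' := κ * ((1 + δ) / δ ^ 2 * K)) e5 e5
      (by rw [abs_of_pos (by positivity)]; gcongr; linarith)
    have a4 := abs_mul_le_of_sq' (k := κ * (1 / (θ x + δ))) (k' := κ * (1 / δ)) e3 e8
      (by rw [abs_of_pos (by positivity)]; gcongr; linarith)
    have e : (deriv u x * sg μ R v u θ x + u x * sgx μ R v u θ x) +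
      κ * ((deriv θ x * (θ x + δ) - (θ x - 1) * deriv θ x) / (θ x + δ) ^ 2 * (deriv θ x / v x) +
        (θ x - 1) / (θ x + δ) * qx v θ x) =
      deriv u x * sg μ R v u θ x + u x * sgx μ R v u θ x +
      (κ * ((1 + δ) / (θ x + δ) ^ 2 * (v x)⁻¹) * (deriv θ x * deriv θ x) +
      κ * (1 / (θ x + δ)) * ((θ x - 1) * qx v θ x)) := by
      field_simp
      ring
    rw [e]
    refine (abs_add_three _ _ _).trans ?_
    linarith [abs_add_le (κ * ((1 + δ) / (θ x + δ) ^ 2 * (v x)⁻¹) *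
        (deriv θ x * deriv θ x)) (κ * (1 / (θ x + δ)) * ((θ x - 1) * qx v θ x))]
  · intro x
    exact entropy_pointwise hμ hκ hR hc hδ (S.v_pos x) (S.inv_v x) (S.v_hi x) (S.θ_pos x) hδ1
      (u x) rfl

theorem mem_slab (s t : ℝ) : ∀ᵐ z ∂(slab s t), z ∈ (univ : Set ℝ) ×ˢ Icc s t := by
  unfold slab
  rw [show (volume : Measure ℝ).prod ((volume : Measure ℝ).restrict (Icc s t))
    = ((volume : Measure ℝ).prod volume).restrict (univ ×ˢ Icc s t) by
      rw [← Measure.prod_restrict, Measure.restrict_univ]]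
  exact ae_restrict_mem (MeasurableSet.univ.prod measurableSet_Icc)

theorem interval_eq_slab {F : ℝ → ℝ → ℝ} {s t : ℝ} (hst : s ≤ t)
    (h : Integrable (Function.uncurry F) (slab s t)) :
    ∫ τ in s..t, ∫ x, F x τ = ∫ z, Function.uncurry F z ∂(slab s t) := by
  rw [intervalIntegral.integral_of_le hst, ← integral_Icc_eq_integral_Ioc]
  exact (integral_prod_symm (Function.uncurry F) h).symm

namespace Sol
variable {μ κ R c K : ℝ} {v u θ : ℝ → ℝ → ℝ} (H : Sol μ κ R c K v u θ)
include H

theorem ter (δ : ℝ) : TM fun x t => er R K δ (u · t) (θ · t) x := by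
  have h1 : TM fun x t => |deriv (u · t) x * (θ x t - 1)| := by
    have := H.tu'.mul (H.tθ.sub_const 1)
    exact continuous_abs.measurable.comp this
  exact (h1.mul (measurable_const.div (H.tθ.add_const δ))).const_mul (R * K)

theorem tdd : TM fun x t => dd (u · t) (θ · t) x :=
  ((H.tu'.pow_const 2).div (H.tθ.const_add 1)).add
    ((H.tθ'.pow_const 2).div ((H.tθ.const_add 1).pow_const 2))

theorem Dh_intervalIntegrable {s t : ℝ} (hs : 0 ≤ s) (hst : s ≤ t) :
    IntervalIntegrable (fun τ => Dh (u · τ) (θ · τ)) volume s t := by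
  refine H.intervalIntegrable H.tdd hs hst 1 fun τ hτ x => ?_
  have S := H.sl τ (hs.trans hτ.1)
  rw [abs_of_nonneg (S.dd_nonneg x), one_mul]
  exact (S.dd_le_d0 x).trans (d0_le_dm _ _ _ _ _ _ _ _)

theorem er_slab (hR : 0 < R) {δ : ℝ} (hδ : 0 < δ) {s t : ℝ} (hs : 0 ≤ s) :
    Integrable (Function.uncurry fun x t => er R K δ (u · t) (θ · t) x) (slab s t) := by
  refine H.slab_int (H.ter δ) hs (R * K) fun τ hτ x => ?_
  have S := H.sl τ (hs.trans hτ.1)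
  rw [abs_of_nonneg (er_nonneg (u := (u · τ)) (θ := (θ · τ)) (x := x) hR S.hK hδ (S.θ_pos x))]
  refine (er_le (v := (v · τ)) (u := (u · τ)) (θ := (θ · τ)) (x := x) hR S.hK hδ
    (S.θ_pos x)).trans ?_
  have := S.K_pos
  gcongr
  exact d0_le_dm _ _ _ _ _ _ _ _

/-- The regularisation error vanishes in the limit `δ → 0`, by dominated convergence; no lower
bound on the temperature enters. -/
theorem er_small (hR : 0 < R) {T : ℝ} (hT : 0 ≤ T) : ∃ δ, 0 < δ ∧ δ ≤ 1 ∧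
    ∫ τ in (0 : ℝ)..T, ∫ x, er R K δ (u · τ) (θ · τ) x ≤ 1 := by
  have hK := (H.sl 0 le_rfl).K_pos
  have hδ : ∀ n : ℕ, 0 < 1 / ((n : ℝ) + 1) := fun n => by positivity
  have lim : Tendsto (fun n : ℕ => ∫ z, Function.uncurry
      (fun x t => er R K (1 / ((n : ℝ) + 1)) (u · t) (θ · t) x) z ∂(slab 0 T)) atTop
      (nhds (∫ z, (0 : ℝ) ∂(slab 0 T))) := by
    refine tendsto_integral_of_dominated_convergence
      (fun z => R * K * Function.uncurry (fun x t => dm μ κ R c (v · t) (u · t) (θ · t) x) z)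
      (fun n => (H.ter _).aesm le_rfl) ((H.dm_slab le_rfl).const_mul _) (fun n => ?_) ?_
    · filter_upwards [mem_slab 0 T] with z hz
      have S := H.sl z.2 hz.2.1
      simp only [Function.uncurry, Real.norm_eq_abs]
      rw [abs_of_nonneg (er_nonneg (u := (u · z.2)) (θ := (θ · z.2)) (x := z.1) hR S.hK (hδ n)
        (S.θ_pos z.1))]
      refine (er_le (v := (v · z.2)) (u := (u · z.2)) (θ := (θ · z.2)) (x := z.1) hR S.hK (hδ n)
        (S.θ_pos z.1)).trans ?_
      gcongr
      exact d0_le_dm _ _ _ _ _ _ _ _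
    · filter_upwards [mem_slab 0 T] with z hz
      have hθ := (H.sl z.2 hz.2.1).θ_pos z.1
      simp only [Function.uncurry, er]
      have h0 := tendsto_one_div_add_atTop_nhds_zero_nat (𝕜 := ℝ)
      have h1 : Tendsto (fun n : ℕ => 1 / ((n : ℝ) + 1) / (θ z.1 z.2 + 1 / ((n : ℝ) + 1))) atTop
          (nhds (0 / (θ z.1 z.2 + 0))) := h0.div (h0.const_add _) (by simpa using hθ.ne')
      have := (h1.const_mul |deriv (u · z.2) z.1 * (θ z.1 z.2 - 1)|).const_mul (R * K)
      simpa using this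
  rw [integral_zero] at lim
  obtain ⟨n, hn⟩ := (lim.eventually (eventually_le_nhds (zero_lt_one))).exists
  refine ⟨1 / ((n : ℝ) + 1), hδ n, ?_, ?_⟩
  · rw [div_le_one (by positivity)]; linarith [(Nat.cast_nonneg n : (0 : ℝ) ≤ n)]
  · rwa [interval_eq_slab hT (H.er_slab hR (hδ n) le_rfl)]

/-- The regularised entropy inequality; `er` is the price of the regularisation. -/
theorem entropy_ineq (hμ : 0 < μ) (hκ : 0 < κ) (hR : 0 < R) (hc : 0 < c) {δ : ℝ}
    (hδ : 0 < δ) (hδ1 : δ ≤ 1) {T : ℝ} (hT : 0 ≤ T) :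
    (∫ x, (u x T ^ 2 / 2 + R * (v x T - 1 - Real.log (v x T)) + c * ps δ (θ x T)))
      + min μ κ / K * (∫ τ in (0 : ℝ)..T, Dh (u · τ) (θ · τ)) ≤
    (∫ x, (u x 0 ^ 2 / 2 + R * (v x 0 - 1 - Real.log (v x 0)) + c * ps δ (θ x 0)))
      + ∫ τ in (0 : ℝ)..T, ∫ x, er R K δ (u · τ) (θ · τ) x := by
  have en := H.energy
    (g := fun x t => u x t ^ 2 / 2 + R * (v x t - 1 - Real.log (v x t)) + c * ps δ (θ x t))
    (h := fun x t => h1 μ κ R c δ (v · t) (u · t) (θ · t) x) ?_ ?_ ?_ ?_ le_rfl hT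
  · obtain ⟨e1, e2⟩ := en
    have i1 := H.Dh_intervalIntegrable le_rfl hT
    have i2 := intervalIntegrable_of_slab hT (H.er_slab hR hδ (t := T) le_rfl)
    have : ∫ τ in (0 : ℝ)..T, ∫ x, h1 μ κ R c δ (v · τ) (u · τ) (θ · τ) x ≤
        ∫ τ in (0 : ℝ)..T, (-(min μ κ / K) * Dh (u · τ) (θ · τ)
          + ∫ x, er R K δ (u · τ) (θ · τ) x) := by
      refine intervalIntegral.integral_mono_ae_restrict hT e2 ((i1.const_mul _).add i2) ?_
      filter_upwards [ae_Icc_of_ae le_rfl H.sl2] with τ S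
      exact h1_slice hμ hκ hR hc hδ hδ1 S
    rw [intervalIntegral.integral_add (i1.const_mul _) i2,
      intervalIntegral.integral_const_mul] at this
    rw [e1]
    linarith
  · intro t ht
    have S := H.sl t ht
    have c1 := S.contv; have c2 := S.contu; have c3 := S.contθ
    refine ((by fun_prop : Continuous _).add (continuous_const.mul ((by fun_prop :
      Continuous _).sub (c1.log S.v_ne)))).add (continuous_const.mul ?_)
    exact continuous_iff_continuousAt.mpr fun x =>
      ContinuousAt.comp (f := fun x => θ x t) (g := ps δ) (ps_deriv hδ (S.θ_pos x)).continuousAt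
        c3.continuousAt
  · intro x t ht
    have S := H.sl t ht
    have d1 := ((H.dtu x t ht).pow 2).div_const 2
    have d2 := ((((H.dtv x t ht).sub_const 1).sub ((H.dtv x t ht).log (S.v_ne x)))).const_mul R
    have d3 := ((ps_deriv hδ (S.θ_pos x)).comp t (H.dtθ x t ht)).const_mul c
    refine ((d1.add d2).add d3).congr_deriv ?_
    have hv := S.v_ne x
    have hθ : θ x t + δ ≠ 0 := by have := S.θ_pos x; positivity
    simp only [h1]
    field_simp
    ring
  · intro t ht
    have S := H.sl t ht
    refine ⟨1 + R * K + c / δ, fun x => ?_⟩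
    have hv := S.v_pos x; have hθ := S.θ_pos x; have hiv := S.inv_v x
    obtain ⟨e1, e2, e3, e4, e5⟩ := d0_ge (v · t) (u · t) (θ · t) x
    have a1 := log_upper hv
    have a2 := log_lower hv
    have a3 := ps_upper hδ hθ
    have a4 := ps_nonneg hδ hδ1 hθ
    have a2' : 0 ≤ (v x t - 1) ^ 2 / (2 * (v x t + 1)) := by positivity
    rw [abs_of_nonneg (by have := a2'.trans a2; positivity)]
    have b1 : (v x t - 1) ^ 2 / v x t ≤ K * d0 (v · t) (u · t) (θ · t) x := by
      rw [div_eq_inv_mul]; exact mul_le_mul hiv e1 (sq_nonneg _) S.K_pos.le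
    have b2 : (θ x t - 1) ^ 2 / (θ x t + δ) ≤ 1 / δ * d0 (v · t) (u · t) (θ · t) x := by
      rw [div_eq_inv_mul, inv_eq_one_div]
      refine mul_le_mul ?_ e3 (sq_nonneg _) (by positivity)
      gcongr; linarith
    calc _ ≤ d0 (v · t) (u · t) (θ · t) x + R * (K * d0 (v · t) (u · t) (θ · t) x)
        + c * (1 / δ * d0 (v · t) (u · t) (θ · t) x) := by
          gcongr
          · linarith [sq_nonneg (u x t)]
          · linarith
          · linarith
      _ = _ := by ring
  · intro T hT
    exact ⟨_, fun τ hτ x => h1_bound hR hc hδ (H.sl τ hτ.1) x⟩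

end Sol

/-- The basic estimate: energy, entropy and total dissipation are bounded for all times. -/
theorem entropy_bounds {μ κ R c K : ℝ} (hμ : 0 < μ) (hκ : 0 < κ) (hR : 0 < R) (hc : 0 < c)
    (hK : 1 ≤ K) {B m : ℝ} (hB : 0 ≤ B) (hm : 0 < m) : ∃ C0 : ℝ, 0 ≤ C0 ∧
    ∀ v u θ : ℝ → ℝ → ℝ, Sol μ κ R c K v u θ → Bd B (v · 0) (u · 0) (θ · 0) →
    (∀ x, m ≤ θ x 0) → ∀ t, 0 ≤ t → nsq (u · t) ≤ C0 ∧ nsq (fun x => v x t - 1) ≤ C0 ∧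
      ∫ x, (θ x t - 1) ^ 2 / (θ x t + 3) ≤ C0 ∧ ∫ τ in (0 : ℝ)..t, Dh (u · τ) (θ · τ) ≤ C0 := by
  have hK0 : 0 < K := by linarith
  have hmin : 0 < min μ κ := lt_min hμ hκ
  set E0 := B / 2 + R * K * B + c / m * B + 1 with hE0
  have hE : 0 < E0 := by positivity
  refine ⟨E0 * (2 + 2 * (K + 1) / R + 2 / c + K / min μ κ), by positivity, ?_⟩
  intro v u θ H hb hθ0 t ht
  obtain ⟨δ, hδ, hδ1, her⟩ := H.er_small hR ht
  have en := H.entropy_ineq hμ hκ hR hc hδ hδ1 ht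
  have ini : ∫ x, (u x 0 ^ 2 / 2 + R * (v x 0 - 1 - Real.log (v x 0)) + c * ps δ (θ x 0)) ≤
      B / 2 + R * K * B + c / m * B := by
    have S := H.sl 0 le_rfl
    have i1 := S.mu.integrable_sq; have i2 := S.mv.integrable_sq; have i3 := S.mθ.integrable_sq
    calc _ ≤ ∫ x, (1 / 2 * u x 0 ^ 2 + R * K * (v x 0 - 1) ^ 2 + c / m * (θ x 0 - 1) ^ 2) := by
          refine integral_mono_of_nonneg (ae_of_all _ fun x => ?_)
            (((i1.const_mul _).add (i2.const_mul _)).add (i3.const_mul _)) (ae_of_all _ fun x => ?_)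
          · have a2 := log_lower (S.v_pos x)
            have hv := S.v_pos x
            have a2' : 0 ≤ (v x 0 - 1) ^ 2 / (2 * (v x 0 + 1)) := by positivity
            have := a2'.trans a2
            have := ps_nonneg hδ hδ1 (S.θ_pos x)
            simp only [Pi.zero_apply]
            positivity
          · have hv := S.v_pos x; have hθ := S.θ_pos x; have hiv := S.inv_v x
            have a1 := log_upper hv
            have a3 := ps_upper hδ hθ
            have b1 : (v x 0 - 1) ^ 2 / v x 0 ≤ K * (v x 0 - 1) ^ 2 := by
              rw [div_eq_inv_mul]; gcongr
            have b2 : (θ x 0 - 1) ^ 2 / (θ x 0 + δ) ≤ (θ x 0 - 1) ^ 2 / m := by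
              gcongr; linarith [hθ0 x]
            have a1' := mul_le_mul_of_nonneg_left (a1.trans b1) hR.le
            have a3' := mul_le_mul_of_nonneg_left (a3.trans b2) hc.le
            simp only
            have e1 : c / m * (θ x 0 - 1) ^ 2 = c * ((θ x 0 - 1) ^ 2 / m) := by ring
            rw [e1]
            linarith
      _ = 1 / 2 * nsq (u · 0) + R * K * nsq (fun x => v x 0 - 1)
          + c / m * nsq (fun x => θ x 0 - 1) := by
          rw [integral_add (by exact (i1.const_mul _).add (i2.const_mul _)) (i3.const_mul _),
            integral_add (i1.const_mul _) (i2.const_mul _), integral_const_mul,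
            integral_const_mul, integral_const_mul]
          rfl
      _ ≤ 1 / 2 * B + R * K * B + c / m * B := by
          gcongr
          · exact hb.bu
          · exact hb.bv
          · exact hb.bθ
      _ = _ := by ring
  have S := H.sl t ht
  have i1 := S.mu.integrable_sq; have i2 := S.mv.integrable_sq
  have i3 : Integrable fun x => (θ x t - 1) ^ 2 / (θ x t + 3) := by
    refine S.mθ.integrable_sq.mono' ?_ (ae_of_all _ fun x => ?_)
    · have := S.contθ
      exact (Continuous.div (by fun_prop) (by fun_prop) fun x => by
        have := S.θ_pos x; positivity).aestronglyMeasurable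
    · have := S.θ_pos x
      rw [Real.norm_of_nonneg (by positivity)]
      exact div_le_self (sq_nonneg _) (by linarith)
  have fin : 1 / 2 * nsq (u · t) + R / (2 * (K + 1)) * nsq (fun x => v x t - 1) +
      c / 2 * (∫ x, (θ x t - 1) ^ 2 / (θ x t + 3)) ≤
      ∫ x, (u x t ^ 2 / 2 + R * (v x t - 1 - Real.log (v x t)) + c * ps δ (θ x t)) := by
    calc _ = ∫ x, (1 / 2 * u x t ^ 2 + R / (2 * (K + 1)) * (v x t - 1) ^ 2
          + c / 2 * ((θ x t - 1) ^ 2 / (θ x t + 3))) := by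
          rw [integral_add (by exact (i1.const_mul _).add (i2.const_mul _)) (i3.const_mul _),
            integral_add (i1.const_mul _) (i2.const_mul _), integral_const_mul,
            integral_const_mul, integral_const_mul]
          rfl
      _ ≤ _ := by
          refine integral_mono_of_nonneg (ae_of_all _ fun x => ?_) ?_ (ae_of_all _ fun x => ?_)
          · have := S.θ_pos x
            simp only [Pi.zero_apply]
            positivity
          · -- integrability of the entropy density follows from the upper bounds on it
            refine S.int_of_d0 (f := fun x => u x t ^ 2 / 2 + R * (v x t - 1 - Real.log (v x t))
              + c * ps δ (θ x t)) ?_ (1 + R * K + c / δ) fun x => ?_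
            · have c1 := S.contv; have c2 := S.contu; have c3 := S.contθ
              refine ((by fun_prop : Continuous _).add (continuous_const.mul ((by fun_prop :
                Continuous _).sub (c1.log S.v_ne)))).add (continuous_const.mul ?_)
              exact continuous_iff_continuousAt.mpr fun x =>
                ContinuousAt.comp (f := fun x => θ x t) (g := ps δ)
                  (ps_deriv hδ (S.θ_pos x)).continuousAt c3.continuousAt
            · have hv := S.v_pos x; have hθ := S.θ_pos x; have hiv := S.inv_v x
              obtain ⟨e1, e2, e3, e4, e5⟩ := d0_ge (v · t) (u · t) (θ · t) x
              have a1 := log_upper hv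
              have a2 := log_lower hv
              have a3 := ps_upper hδ hθ
              have a4 := ps_nonneg hδ hδ1 hθ
              have a2' : 0 ≤ (v x t - 1) ^ 2 / (2 * (v x t + 1)) := by positivity
              rw [abs_of_nonneg (by have := a2'.trans a2; positivity)]
              have b1 : (v x t - 1) ^ 2 / v x t ≤ K * d0 (v · t) (u · t) (θ · t) x := by
                rw [div_eq_inv_mul]; exact mul_le_mul hiv e1 (sq_nonneg _) S.K_pos.le
              have b2 : (θ x t - 1) ^ 2 / (θ x t + δ) ≤
                  1 / δ * d0 (v · t) (u · t) (θ · t) x := by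
                rw [div_eq_inv_mul, inv_eq_one_div]
                refine mul_le_mul ?_ e3 (sq_nonneg _) (by positivity)
                gcongr; linarith
              calc _ ≤ d0 (v · t) (u · t) (θ · t) x + R * (K * d0 (v · t) (u · t) (θ · t) x)
                  + c * (1 / δ * d0 (v · t) (u · t) (θ · t) x) := by
                    gcongr
                    · linarith [sq_nonneg (u x t)]
                    · linarith
                    · linarith
                _ = _ := by ring
          · have hv := S.v_pos x; have hθ := S.θ_pos x; have hvK := S.v_hi x
            have a2 := log_lower hv
            have a4 := ps_lower hδ hδ1 hθ
            have b1 : (v x t - 1) ^ 2 / (2 * (K + 1)) ≤ (v x t - 1) ^ 2 / (2 * (v x t + 1)) := by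
              gcongr
            have a2' := mul_le_mul_of_nonneg_left (b1.trans a2) hR.le
            have a4' := mul_le_mul_of_nonneg_left a4 hc.le
            have e1 : R / (2 * (K + 1)) * (v x t - 1) ^ 2
              = R * ((v x t - 1) ^ 2 / (2 * (K + 1))) := by ring
            have e2 : c / 2 * ((θ x t - 1) ^ 2 / (θ x t + 3))
              = c * ((θ x t - 1) ^ 2 / (2 * (θ x t + 3))) := by
              field_simp
            simp only
            rw [e1, e2]
            linarith
  have n1 := nsq_nonneg (u · t)
  have n2 := nsq_nonneg (fun x => v x t - 1)
  have n3 : 0 ≤ ∫ x, (θ x t - 1) ^ 2 / (θ x t + 3) := integral_nonneg fun x => by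
    have := S.θ_pos x
    positivity
  have n4 : 0 ≤ ∫ τ in (0 : ℝ)..t, Dh (u · τ) (θ · τ) :=
    intervalIntegral.integral_nonneg ht fun τ hτ => (H.sl τ hτ.1).Dh_nonneg
  have p2 : 0 ≤ R / (2 * (K + 1)) * nsq (fun x => v x t - 1) := by positivity
  have p3 : 0 ≤ c / 2 * (∫ x, (θ x t - 1) ^ 2 / (θ x t + 3)) := by positivity
  have p4 : 0 ≤ min μ κ / K * (∫ τ in (0 : ℝ)..t, Dh (u · τ) (θ · τ)) := by positivity
  have q1 : 0 ≤ E0 * (2 * (K + 1) / R) := by positivity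
  have q2 : 0 ≤ E0 * (2 / c) := by positivity
  have q3 : 0 ≤ E0 * (K / min μ κ) := by positivity
  refine ⟨by linarith, ?_, ?_, ?_⟩
  · have : R / (2 * (K + 1)) * nsq (fun x => v x t - 1) ≤ E0 := by linarith
    have h := mul_le_mul_of_nonneg_left this (show 0 ≤ 2 * (K + 1) / R by positivity)
    rw [← mul_assoc, show 2 * (K + 1) / R * (R / (2 * (K + 1))) = 1 by field_simp] at h
    linarith
  · have : c / 2 * (∫ x, (θ x t - 1) ^ 2 / (θ x t + 3)) ≤ E0 := by linarith
    have h := mul_le_mul_of_nonneg_left this (show 0 ≤ 2 / c by positivity)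
    rw [← mul_assoc, show 2 / c * (c / 2) = 1 by field_simp] at h
    linarith
  · have : min μ κ / K * (∫ τ in (0 : ℝ)..t, Dh (u · τ) (θ · τ)) ≤ E0 := by linarith
    have h := mul_le_mul_of_nonneg_left this (show 0 ≤ K / min μ κ by positivity)
    rw [← mul_assoc, show K / min μ κ * (min μ κ / K) = 1 by field_simp] at h
    linarith

/-! ### Bounds on the state by the entropy dissipation -/

theorem memLp_bdd_mul {f g : ℝ → ℝ} (hf : Continuous f) (cg : Continuous g) (hg : MemLp g 2 volume)
    (C : ℝ) (h : ∀ x, |f x| ≤ C) : MemLp (fun x => f x * g x) 2 volume := by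
  refine memLp_of_le hg (hf.mul cg) C fun x => ?_
  rw [abs_mul]
  exact mul_le_mul_of_nonneg_right (h x) (abs_nonneg _)

namespace Sl
variable {K : ℝ} {v u θ : ℝ → ℝ} (S : Sl K v u θ)
include S

theorem ent_int : Integrable fun x => (θ x - 1) ^ 2 / (θ x + 3) := by
  refine S.mθ.integrable_sq.mono' ?_ (ae_of_all _ fun x => ?_)
  · have := S.contθ
    exact (Continuous.div (by fun_prop) (by fun_prop) fun x => by
      have := S.θ_pos x; positivity).aestronglyMeasurable
  · have := S.θ_pos x
    rw [Real.norm_of_nonneg (by positivity)]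
    exact div_le_self (sq_nonneg _) (by linarith)

theorem θ_bdd : BddAbove (range θ) := by
  refine ⟨1 + Real.sqrt (nsq (fun x => θ x - 1) + nsq (deriv θ)), ?_⟩
  rintro _ ⟨x, rfl⟩
  have := Real.le_sqrt_of_sq_le (S.θ_sq_le x)
  linarith

/-- The supremum of the temperature is controlled by the entropy dissipation: apply the
fundamental theorem of calculus to `(θ - 1)² / (θ + 1)` and absorb. -/
theorem θ_sup {C0 : ℝ} (hC : 0 ≤ C0) (h : ∫ x, (θ x - 1) ^ 2 / (θ x + 3) ≤ C0) (x : ℝ) :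
    θ x ≤ 5 + 12 * (C0 + 1) * Dh u θ := by
  set N := ⨆ x, θ x with hN
  have leN : ∀ x, θ x ≤ N := fun x => le_ciSup S.θ_bdd x
  have hN0 : 0 < N := (S.θ_pos 0).trans_le (leN 0)
  have hd : ∀ x, HasDerivAt (fun x => (θ x - 1) ^ 2 / (θ x + 1))
      (deriv θ x * ((θ x - 1) * (θ x + 3) / (θ x + 1) ^ 2)) x := fun x => by
    have hp : θ x + 1 ≠ 0 := by have := S.θ_pos x; positivity
    refine ((((S.dθ x).sub_const 1).pow 2).div ((S.dθ x).add_const 1) hp).congr_deriv ?_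
    field_simp
    simp
    ring
  have hc' : Continuous fun x => deriv θ x * ((θ x - 1) * (θ x + 3) / (θ x + 1) ^ 2) := by
    have := S.contθ; have := S.contθ'
    exact (by fun_prop : Continuous _).mul (Continuous.div (by fun_prop) (by fun_prop)
      fun x => by have := S.θ_pos x; positivity)
  have b : ∀ x, |deriv θ x * ((θ x - 1) * (θ x + 3) / (θ x + 1) ^ 2)| ≤
      3 * (|deriv θ x| / (1 + θ x)) * |θ x - 1| := fun x => by
    have hp := S.θ_pos x
    rw [abs_mul, abs_div, abs_mul, abs_of_pos (show 0 < θ x + 3 by linarith),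
      abs_of_pos (show 0 < (θ x + 1) ^ 2 by positivity)]
    have : (θ x + 3) / (θ x + 1) ^ 2 ≤ 3 / (1 + θ x) := by
      rw [div_le_div_iff₀ (by positivity) (by positivity)]
      nlinarith
    calc _ = |deriv θ x| * |θ x - 1| * ((θ x + 3) / (θ x + 1) ^ 2) := by ring
      _ ≤ |deriv θ x| * |θ x - 1| * (3 / (1 + θ x)) := by gcongr
      _ = _ := by ring
  have i0 : Integrable fun x => (θ x - 1) ^ 2 / (θ x + 1) := by
    refine S.mθ.integrable_sq.mono' (continuous_iff_continuousAt.mpr fun x =>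
      (hd x).continuousAt).aestronglyMeasurable (ae_of_all _ fun x => ?_)
    have := S.θ_pos x
    rw [Real.norm_of_nonneg (by positivity)]
    exact div_le_self (sq_nonneg _) (by linarith)
  have i1 : Integrable fun x => deriv θ x * ((θ x - 1) * (θ x + 3) / (θ x + 1) ^ 2) := by
    refine S.int_of_d0 hc' 3 fun x => (b x).trans ?_
    obtain ⟨-, -, e3, -, e5⟩ := d0_ge v u θ x
    have h1 := abs_mul_le_of_sq e5 e3
    rw [abs_mul] at h1
    have : |deriv θ x| / (1 + θ x) ≤ |deriv θ x| :=
      div_le_self (abs_nonneg _) (by linarith [S.θ_pos x])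
    calc _ ≤ 3 * |deriv θ x| * |θ x - 1| := by gcongr
      _ ≤ _ := by linarith
  have key : ∀ x, θ x ≤ 3 + (N + 3) / 4 + 9 * (C0 + 1) * Dh u θ := by
    intro x
    have h1 := abs_le_integral_deriv hd i0 i1 x
    have h2 : ∫ x, |deriv θ x * ((θ x - 1) * (θ x + 3) / (θ x + 1) ^ 2)| ≤
        ∫ x, (9 * (C0 + 1) * dd u θ x + 1 / (4 * (C0 + 1)) * ((N + 3) *
          ((θ x - 1) ^ 2 / (θ x + 3)))) := by
      refine integral_mono i1.abs ((S.dd_int.const_mul _).add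
        ((S.ent_int.const_mul _).const_mul _)) fun y => (b y).trans ?_
      have hp := S.θ_pos y
      have e1 : (|deriv θ y| / (1 + θ y)) ^ 2 ≤ dd u θ y := by
        rw [div_pow, sq_abs]; unfold dd
        have : 0 ≤ deriv u y ^ 2 / (1 + θ y) := by positivity
        linarith
      have e2 : (θ y - 1) ^ 2 ≤ (N + 3) * ((θ y - 1) ^ 2 / (θ y + 3)) := by
        rw [← mul_div_assoc, le_div_iff₀ (by positivity), mul_comm]
        have := leN y
        gcongr
      have e3 : 3 * (|deriv θ y| / (1 + θ y)) * |θ y - 1| ≤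
          9 * (C0 + 1) * (|deriv θ y| / (1 + θ y)) ^ 2 + 1 / (4 * (C0 + 1)) * (θ y - 1) ^ 2 := by
        rw [← sq_abs (θ y - 1)]
        set p := |deriv θ y| / (1 + θ y)
        set q := |θ y - 1|
        have : 9 * (C0 + 1) * p ^ 2 + 1 / (4 * (C0 + 1)) * q ^ 2 - 3 * p * q =
          (6 * (C0 + 1) * p - q) ^ 2 / (4 * (C0 + 1)) := by field_simp; ring
        have h' : 0 ≤ (6 * (C0 + 1) * p - q) ^ 2 / (4 * (C0 + 1)) := by positivity
        linarith
      refine e3.trans ?_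
      gcongr
    rw [integral_add (S.dd_int.const_mul _) ((S.ent_int.const_mul _).const_mul _),
      integral_const_mul, integral_const_mul, integral_const_mul] at h2
    have h3 : 1 / (4 * (C0 + 1)) * ((N + 3) * ∫ x, (θ x - 1) ^ 2 / (θ x + 3)) ≤ (N + 3) / 4 := by
      calc _ ≤ 1 / (4 * (C0 + 1)) * ((N + 3) * (C0 + 1)) := by gcongr; linarith
        _ = _ := by field_simp
    have h4 : θ x - 3 ≤ (θ x - 1) ^ 2 / (θ x + 1) := by
      have := S.θ_pos x
      rw [le_div_iff₀ (by linarith)]; nlinarith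
    have h5 := le_abs_self ((θ x - 1) ^ 2 / (θ x + 1))
    have h6 : Dh u θ = ∫ x, dd u θ x := rfl
    rw [h6]
    linarith
  have hN' : N ≤ 3 + (N + 3) / 4 + 9 * (C0 + 1) * Dh u θ := ciSup_le key
  have := leN x
  linarith

theorem u_sup {C0 N : ℝ} (h : nsq u ≤ C0) (hN : ∀ x, θ x ≤ N) (x : ℝ) :
    u x ^ 2 ≤ Dh u θ + (1 + N) * C0 := by
  have hd : ∀ x, HasDerivAt (fun x => u x ^ 2) (2 * (u x * deriv u x)) x := fun x => by
    refine ((S.du x).pow 2).congr_deriv ?_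
    simp; ring
  have i1 : Integrable fun x => 2 * (u x * deriv u x) := (S.mu.integrable_mul S.mu').const_mul 2
  have h1 := abs_le_integral_deriv hd S.mu.integrable_sq i1 x
  have hN0 : 0 < N := (S.θ_pos 0).trans_le (hN 0)
  have h2 : ∫ x, |2 * (u x * deriv u x)| ≤ ∫ x, (dd u θ x + (1 + N) * u x ^ 2) := by
    refine integral_mono i1.abs (S.dd_int.add (S.mu.integrable_sq.const_mul _)) fun y => ?_
    have hp := S.θ_pos y
    have hn := hN y
    have e1 : deriv u y ^ 2 / (1 + θ y) ≤ dd u θ y := by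
      unfold dd
      have : 0 ≤ deriv θ y ^ 2 / (1 + θ y) ^ 2 := by positivity
      linarith
    have e2 : |2 * (u y * deriv u y)| ≤ deriv u y ^ 2 / (1 + θ y) + (1 + θ y) * u y ^ 2 := by
      have a1 : deriv u y ^ 2 / (1 + θ y) + (1 + θ y) * u y ^ 2 - 2 * (u y * deriv u y) =
        (deriv u y - (1 + θ y) * u y) ^ 2 / (1 + θ y) := by field_simp; ring
      have a2 : deriv u y ^ 2 / (1 + θ y) + (1 + θ y) * u y ^ 2 + 2 * (u y * deriv u y) =
        (deriv u y + (1 + θ y) * u y) ^ 2 / (1 + θ y) := by field_simp; ring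
      have b1 : 0 ≤ (deriv u y - (1 + θ y) * u y) ^ 2 / (1 + θ y) := by positivity
      have b2 : 0 ≤ (deriv u y + (1 + θ y) * u y) ^ 2 / (1 + θ y) := by positivity
      rw [abs_le]; constructor <;> linarith
    have e3 : (1 + θ y) * u y ^ 2 ≤ (1 + N) * u y ^ 2 := by gcongr
    simp only
    linarith
  rw [integral_add S.dd_int (S.mu.integrable_sq.const_mul _), integral_const_mul] at h2
  rw [abs_of_nonneg (sq_nonneg _)] at h1
  have h3 : (1 + N) * ∫ x, u x ^ 2 ≤ (1 + N) * C0 := by gcongr; exact h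
  have h6 : Dh u θ = ∫ x, dd u θ x := rfl
  rw [h6]
  linarith

theorem nsq_θ_le {C0 N : ℝ} (h : ∫ x, (θ x - 1) ^ 2 / (θ x + 3) ≤ C0) (hN : ∀ x, θ x ≤ N) :
    nsq (fun x => θ x - 1) ≤ (N + 3) * C0 := by
  have hN0 : 0 < N := (S.θ_pos 0).trans_le (hN 0)
  refine (nsq_le_of_le S.mθ (S.ent_int.const_mul (N + 3)) fun y => ?_).trans ?_
  · have hp := S.θ_pos y
    rw [← mul_div_assoc, le_div_iff₀ (by positivity), mul_comm]
    have := hN y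
    gcongr
  · rw [integral_const_mul]; gcongr

end Sl

/-- At one instant, the entropy dissipation controls the suprema of `θ` and `u²` and the norm of
`θ - 1`, given the bounds on energy and entropy. -/
theorem sup_bounds {C0 : ℝ} (hC : 0 ≤ C0) : ∃ C1 : ℝ, 1 ≤ C1 ∧ ∀ (K : ℝ) (v u θ : ℝ → ℝ),
    Sl K v u θ → nsq u ≤ C0 → ∫ x, (θ x - 1) ^ 2 / (θ x + 3) ≤ C0 →
    (∀ x, θ x ≤ C1 * (1 + Dh u θ)) ∧ (∀ x, u x ^ 2 ≤ C1 * (1 + Dh u θ)) ∧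
      nsq (fun x => θ x - 1) ≤ C1 * (1 + Dh u θ) := by
  refine ⟨5 + 12 * (C0 + 1) + (1 + (12 * (C0 + 1) + 8) * C0), ?_, ?_⟩
  · have : 0 ≤ (12 * (C0 + 1) + 8) * C0 := by positivity
    linarith
  intro K v u θ S h1 h2
  have hD := S.Dh_nonneg
  have a1 := S.θ_sup hC h2
  have p : 0 ≤ C0 * Dh u θ := by positivity
  have p' : 0 ≤ C0 * C0 := by positivity
  have p'' : 0 ≤ C0 * C0 * Dh u θ := by positivity
  refine ⟨fun x => ?_, fun x => ?_, ?_⟩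
  · have := a1 x; nlinarith
  · have := S.u_sup h1 a1 x; nlinarith
  · have := S.nsq_θ_le h2 a1; nlinarith

/-! ### The estimate of the total energy in `L²` -/

/-- Excess of the total energy density. -/
noncomputable def wE (c : ℝ) (u θ : ℝ → ℝ) (x : ℝ) : ℝ := c * (θ x - 1) + u x ^ 2 / 2

/-- The density of the second functional; the quartic term absorbs the cross terms produced by the
difference between viscosity and heat conductivity. -/
noncomputable def yg (c A : ℝ) (u θ : ℝ → ℝ) (x : ℝ) : ℝ :=
  wE c u θ x ^ 2 / 2 + A * u x ^ 4 / 4 + u x ^ 2 / 2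

/-- Time derivative of `yg`. -/
noncomputable def yh (μ κ R c A : ℝ) (v u θ : ℝ → ℝ) (x : ℝ) : ℝ :=
  wE c u θ x * (c * tt μ κ R c v u θ x + u x * sgx μ R v u θ x)
    + (A * u x ^ 3 + u x) * sgx μ R v u θ x

set_option maxHeartbeats 1000000 in
theorem y_pointwise {μ κ R c K A : ℝ} (hμ : 0 < μ) (hκ : 0 < κ) (hR : 0 < R) (hc : 0 < c)
    (hK : 1 ≤ K) (hA : A = (c * μ + κ) ^ 2 / (c * κ * μ) + 1) : ∃ c0 C : ℝ, 0 < c0 ∧ 0 ≤ C ∧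
    ∀ V T U a b s : ℝ, 0 < V → V⁻¹ ≤ K → V ≤ K → s = (μ * b - R * (T - V)) / V →
    -((c * a + U * b) * (κ * (a / V) + U * (s - R))) - (3 * A * U ^ 2 + 1) * b * s ≤
      -c0 * (a ^ 2 + b ^ 2)
        + C * (U ^ 2 * (T - 1) ^ 2 + U ^ 2 + (T - 1) ^ 2 + (V - 1) ^ 2) := by
  have hA1 : 0 < A := by rw [hA]; positivity
  have hK0 : 0 < K := by linarith
  set α := c * R ^ 2 / κ + R ^ 2 / (4 * μ) with hα
  set β := 9 * A * R ^ 2 / (4 * μ) with hβ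
  set γ := R ^ 2 / (2 * μ) with hγ
  have hα0 : 0 < α := by positivity
  have hβ0 : 0 < β := by positivity
  have hγ0 : 0 < γ := by positivity
  set C' := 2 * α + β * (2 + 2 * K ^ 2) + 2 * γ with hC'
  refine ⟨min (c * κ / 2) (μ / 2) / K, K * C', by positivity, by positivity, ?_⟩
  intro V T U a b s hV hVi hVK hs
  have step : -((c * a + U * b) * (κ * a + U * (μ * b - R * T)))
      - (3 * A * U ^ 2 + 1) * b * (μ * b - R * (T - V)) ≤
      -(c * κ / 2 * a ^ 2) - μ / 2 * b ^ 2
        + (α * (T ^ 2 * U ^ 2) + β * (U ^ 2 * (T - V) ^ 2) + γ * (T - V) ^ 2) := by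
    have y1 : -((c * μ + κ) * (U * a * b)) ≤
        c * κ / 4 * a ^ 2 + (c * μ + κ) ^ 2 / (c * κ) * (U ^ 2 * b ^ 2) := by
      have : c * κ / 4 * a ^ 2 + (c * μ + κ) ^ 2 / (c * κ) * (U ^ 2 * b ^ 2)
        + ((c * μ + κ) * (U * a * b)) =
        (c * κ * a / 2 + (c * μ + κ) * (U * b)) ^ 2 / (c * κ) := by field_simp; ring
      have h' : 0 ≤ (c * κ * a / 2 + (c * μ + κ) * (U * b)) ^ 2 / (c * κ) := by positivity
      linarith
    have y2 : c * R * (T * U * a) ≤ c * κ / 4 * a ^ 2 + c * R ^ 2 / κ * (T ^ 2 * U ^ 2) := by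
      have : c * κ / 4 * a ^ 2 + c * R ^ 2 / κ * (T ^ 2 * U ^ 2) - c * R * (T * U * a) =
        c * (κ * a / 2 - R * (T * U)) ^ 2 / κ := by field_simp; ring
      have h' : 0 ≤ c * (κ * a / 2 - R * (T * U)) ^ 2 / κ := by positivity
      linarith
    have y3 : R * (T * U ^ 2 * b) ≤ μ * (U ^ 2 * b ^ 2) + R ^ 2 / (4 * μ) * (T ^ 2 * U ^ 2) := by
      have : μ * (U ^ 2 * b ^ 2) + R ^ 2 / (4 * μ) * (T ^ 2 * U ^ 2) - R * (T * U ^ 2 * b) =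
        (2 * μ * (U * b) - R * (T * U)) ^ 2 / (4 * μ) := by field_simp; ring
      have h' : 0 ≤ (2 * μ * (U * b) - R * (T * U)) ^ 2 / (4 * μ) := by positivity
      linarith
    have y4 : 3 * A * R * (U ^ 2 * b * (T - V)) ≤
        A * μ * (U ^ 2 * b ^ 2) + β * (U ^ 2 * (T - V) ^ 2) := by
      have : A * μ * (U ^ 2 * b ^ 2) + β * (U ^ 2 * (T - V) ^ 2)
        - 3 * A * R * (U ^ 2 * b * (T - V)) =
        A * U ^ 2 * (2 * μ * b - 3 * R * (T - V)) ^ 2 / (4 * μ) := by rw [hβ]; field_simp; ring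
      have h' : 0 ≤ A * U ^ 2 * (2 * μ * b - 3 * R * (T - V)) ^ 2 / (4 * μ) := by positivity
      linarith
    have y5 : R * (b * (T - V)) ≤ μ / 2 * b ^ 2 + γ * (T - V) ^ 2 := by
      have : μ / 2 * b ^ 2 + γ * (T - V) ^ 2 - R * (b * (T - V)) =
        (μ * b - R * (T - V)) ^ 2 / (2 * μ) := by rw [hγ]; field_simp; ring
      have h' : 0 ≤ (μ * b - R * (T - V)) ^ 2 / (2 * μ) := by positivity
      linarith
    have y6 : (c * μ + κ) ^ 2 / (c * κ) * (U ^ 2 * b ^ 2) ≤ 2 * (A * μ) * (U ^ 2 * b ^ 2) := by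
      gcongr
      have : A * μ = (c * μ + κ) ^ 2 / (c * κ) + μ := by rw [hA]; field_simp
      have h' : 0 ≤ (c * μ + κ) ^ 2 / (c * κ) := by positivity
      linarith
    rw [hα]
    linarith
  have hG : α * (T ^ 2 * U ^ 2) + β * (U ^ 2 * (T - V) ^ 2) + γ * (T - V) ^ 2 ≤
      C' * (U ^ 2 * (T - 1) ^ 2 + U ^ 2 + (T - 1) ^ 2 + (V - 1) ^ 2) := by
    have t1 : T ^ 2 ≤ 2 * (T - 1) ^ 2 + 2 := by nlinarith [sq_nonneg (T - 2)]
    have t2 : (T - V) ^ 2 ≤ 2 * (T - 1) ^ 2 + 2 * (V - 1) ^ 2 := by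
      nlinarith [sq_nonneg (T - 1 + (V - 1))]
    have t3 : (V - 1) ^ 2 ≤ K ^ 2 := by
      exact sq_le_sq' (by linarith) (by linarith)
    have z1 : T ^ 2 * U ^ 2 ≤ 2 * (U ^ 2 * (T - 1) ^ 2) + 2 * U ^ 2 := by
      have := mul_le_mul_of_nonneg_left t1 (sq_nonneg U)
      linarith
    have z2 : U ^ 2 * (T - V) ^ 2 ≤ 2 * (U ^ 2 * (T - 1) ^ 2) + 2 * K ^ 2 * U ^ 2 := by
      have := mul_le_mul_of_nonneg_left (t2.trans (add_le_add_right
        (mul_le_mul_of_nonneg_left t3 zero_le_two) _)) (sq_nonneg U)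
      linarith
    have w1 := mul_le_mul_of_nonneg_left z1 hα0.le
    have w2 := mul_le_mul_of_nonneg_left z2 hβ0.le
    have w3 := mul_le_mul_of_nonneg_left t2 hγ0.le
    have n1 : 0 ≤ U ^ 2 * (T - 1) ^ 2 := by positivity
    have n2 := sq_nonneg U
    have n3 := sq_nonneg (T - 1)
    have n4 := sq_nonneg (V - 1)
    have e : C' * (U ^ 2 * (T - 1) ^ 2 + U ^ 2 + (T - 1) ^ 2 + (V - 1) ^ 2) =
      α * (2 * (U ^ 2 * (T - 1) ^ 2) + 2 * U ^ 2)
      + β * (2 * (U ^ 2 * (T - 1) ^ 2) + 2 * K ^ 2 * U ^ 2)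
      + γ * (2 * (T - 1) ^ 2 + 2 * (V - 1) ^ 2)
      + (2 * α * ((T - 1) ^ 2 + (V - 1) ^ 2) + β * (2 * K ^ 2 * (U ^ 2 * (T - 1) ^ 2) + 2 * U ^ 2
        + (2 + 2 * K ^ 2) * ((T - 1) ^ 2 + (V - 1) ^ 2))
        + 2 * γ * (U ^ 2 * (T - 1) ^ 2 + U ^ 2)) := by rw [hC']; ring
    have e' : 0 ≤ (2 * α * ((T - 1) ^ 2 + (V - 1) ^ 2) + β * (2 * K ^ 2 * (U ^ 2 * (T - 1) ^ 2)
        + 2 * U ^ 2 + (2 + 2 * K ^ 2) * ((T - 1) ^ 2 + (V - 1) ^ 2))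
        + 2 * γ * (U ^ 2 * (T - 1) ^ 2 + U ^ 2)) := by positivity
    linarith
  set W := U ^ 2 * (T - 1) ^ 2 + U ^ 2 + (T - 1) ^ 2 + (V - 1) ^ 2 with hW
  have hW0 : 0 ≤ W := by positivity
  have e : -((c * a + U * b) * (κ * (a / V) + U * (s - R))) - (3 * A * U ^ 2 + 1) * b * s =
      V⁻¹ * (-((c * a + U * b) * (κ * a + U * (μ * b - R * T)))
      - (3 * A * U ^ 2 + 1) * b * (μ * b - R * (T - V))) := by
    rw [hs]; field_simp; ring
  rw [e]
  have hKV : K⁻¹ ≤ V⁻¹ := by gcongr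
  set m0 := min (c * κ / 2) (μ / 2) with hm0
  have hm : 0 < m0 := by positivity
  have m1 : m0 ≤ c * κ / 2 := min_le_left _ _
  have m2 : m0 ≤ μ / 2 := min_le_right _ _
  have f1 : K⁻¹ * (m0 * (a ^ 2 + b ^ 2)) ≤ V⁻¹ * (c * κ / 2 * a ^ 2 + μ / 2 * b ^ 2) := by
    gcongr
    have := mul_le_mul_of_nonneg_right m1 (sq_nonneg a)
    have := mul_le_mul_of_nonneg_right m2 (sq_nonneg b)
    linarith
  have f2 : V⁻¹ * (C' * W) ≤ K * (C' * W) := by gcongr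
  have f3 := mul_le_mul_of_nonneg_left (step.trans (add_le_add_right hG _))
    (inv_pos.mpr hV).le
  rw [div_eq_mul_inv]
  linarith

theorem yg_lower {c A : ℝ} (hc : 0 < c) (hA : 1 ≤ A) {u θ : ℝ → ℝ} (x : ℝ) :
    (θ x - 1) ^ 2 ≤ 8 / c ^ 2 * yg c A u θ x := by
  have : c ^ 2 * (θ x - 1) ^ 2 ≤ 8 * yg c A u θ x := by
    unfold yg wE
    have h4 : u x ^ 4 ≤ A * u x ^ 4 := by nlinarith [sq_nonneg (u x ^ 2)]
    nlinarith [sq_nonneg (c * (θ x - 1) + u x ^ 2), sq_nonneg (u x),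
      sq_nonneg (c * (θ x - 1)), sq_nonneg (u x ^ 2)]
  rw [div_mul_eq_mul_div, le_div_iff₀ (by positivity)]
  linarith

namespace Sl
variable {K : ℝ} {v u θ : ℝ → ℝ} (S : Sl K v u θ)
include S

theorem u_abs : ∃ P, 0 ≤ P ∧ ∀ x, |u x| ≤ P :=
  ⟨_, Real.sqrt_nonneg _, fun x => Real.abs_le_sqrt (S.u_sq_le x)⟩

theorem θ_abs : ∃ P, 0 ≤ P ∧ ∀ x, |θ x - 1| ≤ P :=
  ⟨_, Real.sqrt_nonneg _, fun x => Real.abs_le_sqrt (S.θ_sq_le x)⟩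

theorem cont_wE (c : ℝ) : Continuous (wE c u θ) := by
  have := S.contu; have := S.contθ
  unfold wE; fun_prop

theorem mwE (c : ℝ) : MemLp (wE c u θ) 2 volume := by
  obtain ⟨P, hP, h⟩ := S.u_abs
  have h1 : MemLp (fun x => u x * u x) 2 volume := memLp_bdd_mul S.contu S.contu S.mu P h
  have h2 := (S.mθ.const_mul c).add (h1.const_mul (1 / 2))
  refine (memLp_congr_ae (ae_of_all _ fun x => ?_)).mp h2
  simp only [Pi.add_apply, wE]
  ring

theorem dwE (c x : ℝ) : HasDerivAt (wE c u θ) (c * deriv θ x + u x * deriv u x) x := by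
  refine ((((S.dθ x).sub_const 1).const_mul c).add (((S.du x).pow 2).div_const 2)).congr_deriv ?_
  simp; ring

end Sl

namespace Sl2
variable {K : ℝ} {v u θ : ℝ → ℝ} (S : Sl2 K v u θ)
include S

theorem msq : MemLp (fun x => u x * (θ x - 1)) 2 volume := by
  obtain ⟨P, hP, h⟩ := S.u_abs
  have := S.contθ
  exact memLp_bdd_mul S.contu (by fun_prop) S.mθ P h

/-- The flux estimate for the second functional at one instant. -/
theorem y_slice {μ κ R c A c0 C : ℝ}
    (h : ∀ V T U a b s : ℝ, 0 < V → V⁻¹ ≤ K → V ≤ K → s = (μ * b - R * (T - V)) / V →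
      -((c * a + U * b) * (κ * (a / V) + U * (s - R))) - (3 * A * U ^ 2 + 1) * b * s ≤
      -c0 * (a ^ 2 + b ^ 2) + C * (U ^ 2 * (T - 1) ^ 2 + U ^ 2 + (T - 1) ^ 2 + (V - 1) ^ 2))
    (hc : 0 < c) :
    ∫ x, yh μ κ R c A v u θ x ≤ -c0 * (nsq (deriv θ) + nsq (deriv u)) +
      C * (nsq (fun x => u x * (θ x - 1)) + nsq u + nsq (fun x => θ x - 1)
        + nsq (fun x => v x - 1)) := by
  have c1 := S.contv; have c2 := S.contu; have c3 := S.contθ; have c4 := S.contu'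
  have c5 := S.contθ'; have c6 := S.cont_sg μ R; have c7 := S.cont_sgx μ R; have c8 := S.cont_qx
  have c9 := S.cont_tt μ κ R c
  have cq : Continuous fun x => deriv θ x / v x := c5.div c1 S.v_ne
  obtain ⟨P, hP, hu⟩ := S.u_abs
  obtain ⟨Q, hQ⟩ : ∃ Q, ∀ x, |sg μ R v u θ x| ≤ Q :=
    ⟨_, fun x => Real.abs_le_sqrt (S.sg_sup μ R x)⟩
  have mw := S.mwE c
  have mw' : MemLp (fun x => c * deriv θ x + u x * deriv u x) 2 volume :=
    (S.mθ'.const_mul c).add (memLp_bdd_mul c2 c4 S.mu' P hu)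
  have mUs : MemLp (fun x => u x * sg μ R v u θ x) 2 volume :=
    memLp_bdd_mul c2 c6 (S.msg μ R) P hu
  have mΦ : MemLp (fun x => κ * (deriv θ x / v x) + u x * (sg μ R v u θ x - R)) 2 volume := by
    have := (S.mq.const_mul κ).add (mUs.sub (S.mu.const_mul R))
    refine (memLp_congr_ae (ae_of_all _ fun x => ?_)).mp this
    simp only [Pi.add_apply, Pi.sub_apply]
    ring
  have mΦ' : MemLp (fun x => κ * qx v θ x + (deriv u x * (sg μ R v u θ x - R)
      + u x * sgx μ R v u θ x)) 2 volume := by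
    have h1 : MemLp (fun x => sg μ R v u θ x * deriv u x) 2 volume :=
      memLp_bdd_mul c6 c4 S.mu' Q hQ
    have := (S.mqx.const_mul κ).add ((h1.sub (S.mu'.const_mul R)).add
      (memLp_bdd_mul c2 c7 (S.msgx μ R) P hu))
    refine (memLp_congr_ae (ae_of_all _ fun x => ?_)).mp this
    simp only [Pi.add_apply, Pi.sub_apply]
    ring
  have cP : Continuous fun x => A * u x ^ 3 + u x := by fun_prop
  have hu2 : ∀ x, u x ^ 2 ≤ P ^ 2 := fun x => by
    rw [← sq_abs]; gcongr; exact hu x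
  have mP : MemLp (fun x => A * u x ^ 3 + u x) 2 volume := by
    refine memLp_of_le S.mu cP (|A| * P ^ 2 + 1) fun x => ?_
    rw [show A * u x ^ 3 + u x = (A * u x ^ 2 + 1) * u x by ring, abs_mul]
    refine mul_le_mul_of_nonneg_right ((abs_add_le _ _).trans ?_) (abs_nonneg _)
    rw [abs_mul, abs_one, abs_of_nonneg (sq_nonneg (u x))]
    have := hu2 x
    gcongr |A| * ?_ + 1
  have mP' : MemLp (fun x => (3 * A * u x ^ 2 + 1) * deriv u x) 2 volume := by
    refine memLp_bdd_mul (by fun_prop) c4 S.mu' (3 * |A| * P ^ 2 + 1) fun x => ?_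
    refine (abs_add_le _ _).trans ?_
    rw [abs_mul, abs_mul, abs_one, abs_of_nonneg (sq_nonneg (u x)), abs_of_pos (three_pos (α := ℝ))]
    have := hu2 x
    gcongr 3 * |A| * ?_ + 1
  have ih : Integrable (yh μ κ R c A v u θ) := by
    have h1 : MemLp (fun x => c * tt μ κ R c v u θ x + u x * sgx μ R v u θ x) 2 volume :=
      ((S.mtt μ κ R c).const_mul c).add (memLp_bdd_mul c2 c7 (S.msgx μ R) P hu)
    exact (mw.integrable_mul h1).add (mP.integrable_mul (S.msgx μ R))
  have hF : ∀ x, HasDerivAt (fun x => wE c u θ x * (κ * (deriv θ x / v x)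
        + u x * (sg μ R v u θ x - R)) + (A * u x ^ 3 + u x) * sg μ R v u θ x)
      (((c * deriv θ x + u x * deriv u x) * (κ * (deriv θ x / v x)
        + u x * (sg μ R v u θ x - R)) + wE c u θ x * (κ * qx v θ x
        + (deriv u x * (sg μ R v u θ x - R) + u x * sgx μ R v u θ x)))
        + ((3 * A * u x ^ 2 + 1) * deriv u x * sg μ R v u θ x
          + (A * u x ^ 3 + u x) * sgx μ R v u θ x)) x := fun x => by
    have hp : HasDerivAt (fun x => A * u x ^ 3 + u x) ((3 * A * u x ^ 2 + 1) * deriv u x) x := by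
      refine ((((S.du x).pow 3).const_mul A).add (S.du x)).congr_deriv ?_
      simp; ring
    exact ((S.dwE c x).mul (((S.dq x).const_mul κ).add ((S.du x).mul
      ((S.dsg μ R x).sub_const R)))).add (hp.mul (S.dsg μ R x))
  have iF : Integrable fun x => wE c u θ x * (κ * (deriv θ x / v x)
        + u x * (sg μ R v u θ x - R)) + (A * u x ^ 3 + u x) * sg μ R v u θ x :=
    (mw.integrable_mul mΦ).add (mP.integrable_mul (S.msg μ R))
  have iF' : Integrable fun x => ((c * deriv θ x + u x * deriv u x) * (κ * (deriv θ x / v x)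
        + u x * (sg μ R v u θ x - R)) + wE c u θ x * (κ * qx v θ x
        + (deriv u x * (sg μ R v u θ x - R) + u x * sgx μ R v u θ x)))
        + ((3 * A * u x ^ 2 + 1) * deriv u x * sg μ R v u θ x
          + (A * u x ^ 3 + u x) * sgx μ R v u θ x) :=
    ((mw'.integrable_mul mΦ).add (mw.integrable_mul mΦ')).add
      ((mP'.integrable_mul (S.msg μ R)).add (mP.integrable_mul (S.msgx μ R)))
  have j1 := S.mθ'.integrable_sq; have j2 := S.mu'.integrable_sq
  have j3 := S.msq.integrable_sq; have j4 := S.mu.integrable_sq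
  have j5 := S.mθ.integrable_sq; have j6 := S.mv.integrable_sq
  have k1 := (j1.add j2).const_mul (-c0)
  have k2 := (((j3.add j4).add j5).add j6).const_mul C
  have key := int_le_of_flux ih (k1.add k2) iF iF' hF ?_
  · refine key.trans (le_of_eq ?_)
    rw [integral_add' k1 k2, integral_const_mul, integral_const_mul, integral_add' j1 j2,
      integral_add' ((j3.add j4).add j5) j6, integral_add' (j3.add j4) j5, integral_add' j3 j4]
    rfl
  · intro x
    have hh := h (v x) (θ x) (u x) (deriv θ x) (deriv u x) (sg μ R v u θ x) (S.v_pos x)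
      (S.inv_v x) (S.v_hi x) rfl
    have e : c * tt μ κ R c v u θ x = κ * qx v θ x + (sg μ R v u θ x - R) * deriv u x := by
      unfold tt; field_simp
    simp only [yh, Pi.add_apply]
    rw [e]
    nlinarith

end Sl2

theorem yg_le {c A P : ℝ} (hA : 1 ≤ A) (u θ : ℝ → ℝ) (x : ℝ) (h : u x ^ 2 ≤ P) :
    yg c A u θ x ≤ c ^ 2 * (θ x - 1) ^ 2 + (A * P + 1) * u x ^ 2 := by
  have h1 : u x ^ 4 ≤ P * u x ^ 2 := by nlinarith [sq_nonneg (u x)]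
  have h2 : A * u x ^ 4 ≤ A * (P * u x ^ 2) := by gcongr
  have h3 : P * u x ^ 2 ≤ A * (P * u x ^ 2) := by
    have : 0 ≤ P * u x ^ 2 := mul_nonneg ((sq_nonneg _).trans h) (sq_nonneg _)
    nlinarith
  unfold yg wE
  nlinarith [sq_nonneg (c * (θ x - 1) - u x ^ 2 / 2), sq_nonneg (u x)]

theorem yg_nonneg {c A : ℝ} (hA : 1 ≤ A) (u θ : ℝ → ℝ) (x : ℝ) : 0 ≤ yg c A u θ x := by
  unfold yg; positivity

theorem Sl.yg_int {K c A : ℝ} (hA : 1 ≤ A) {v u θ : ℝ → ℝ} (S : Sl K v u θ) :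
    Integrable (yg c A u θ) := by
  refine ((S.mθ.integrable_sq.const_mul (c ^ 2)).add (S.mu.integrable_sq.const_mul
    (A * (nsq u + nsq (deriv u)) + 1))).mono' ?_ (ae_of_all _ fun x => ?_)
  · have := S.cont_wE c; have := S.contu
    unfold yg
    exact (by fun_prop : Continuous _).aestronglyMeasurable
  · rw [Real.norm_of_nonneg (yg_nonneg hA u θ x)]
    exact yg_le hA u θ x (S.u_sq_le x)

theorem Sl.yg_integral_le {K c A P : ℝ} (hA : 1 ≤ A) {v u θ : ℝ → ℝ} (S : Sl K v u θ)
    (h : ∀ x, u x ^ 2 ≤ P) :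
    ∫ x, yg c A u θ x ≤ c ^ 2 * nsq (fun x => θ x - 1) + (A * P + 1) * nsq u := by
  have j1 := S.mθ.integrable_sq.const_mul (c ^ 2)
  have j2 := S.mu.integrable_sq.const_mul (A * P + 1)
  refine (integral_mono (S.yg_int hA) (j1.add j2) fun x => yg_le hA u θ x (h x)).trans
    (le_of_eq ?_)
  rw [integral_add' j1 j2, integral_const_mul, integral_const_mul]
  rfl

theorem yh_bound {μ κ R c A P : ℝ} (hc : 0 < c) (hA : 1 ≤ A) {v u θ : ℝ → ℝ} {x : ℝ}
    (hu : |u x| ≤ P) (hθ : |θ x - 1| ≤ P) : |yh μ κ R c A v u θ x| ≤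
      (c ^ 2 + c * P / 2 + (c * P + P ^ 2 / 2 + A * P ^ 2 + 1)) * dm μ κ R c v u θ x := by
  obtain ⟨e1, e2, e3, e4, e5, e6, e7, e8, e9⟩ := dm_ge μ κ R c v u θ x
  have hu2 : u x ^ 2 ≤ P ^ 2 := by rw [← sq_abs]; gcongr
  have a1 := abs_mul_le_of_sq' (k := c ^ 2) (k' := c ^ 2) e3 e9 (by rw [abs_of_pos (by positivity)])
  have a2 := abs_mul_le_of_sq' (k := c * u x / 2) (k' := c * P / 2) e2 e9
    (by rw [abs_div, abs_mul, abs_of_pos hc, abs_of_pos (two_pos (α := ℝ))]; gcongr)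
  have a3 := abs_mul_le_of_sq' (k := c * (θ x - 1) + u x ^ 2 / 2 + A * u x ^ 2 + 1)
    (k' := c * P + P ^ 2 / 2 + A * P ^ 2 + 1) e2 e7 (by
      have t1 : |c * (θ x - 1)| ≤ c * P := by rw [abs_mul, abs_of_pos hc]; gcongr
      have t2 : A * u x ^ 2 ≤ A * P ^ 2 := by gcongr
      have t3 : 0 ≤ A * u x ^ 2 := by positivity
      have t4 := sq_nonneg (u x)
      rw [abs_le] at t1 ⊢
      constructor <;> linarith)
  have e : yh μ κ R c A v u θ x = c ^ 2 * ((θ x - 1) * tt μ κ R c v u θ x)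
      + c * u x / 2 * (u x * tt μ κ R c v u θ x) + (c * (θ x - 1) + u x ^ 2 / 2 + A * u x ^ 2 + 1)
        * (u x * sgx μ R v u θ x) := by
    unfold yh wE; ring
  rw [e]
  refine (abs_add_three _ _ _).trans ?_
  linarith

theorem Sol.abs_bounds {μ κ R c K : ℝ} {v u θ : ℝ → ℝ → ℝ} (H : Sol μ κ R c K v u θ) {T : ℝ}
    (hT : 0 ≤ T) : ∃ P, 0 ≤ P ∧ ∀ τ ∈ Icc 0 T, ∀ x, |u x τ| ≤ P ∧ |θ x τ - 1| ≤ P := by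
  obtain ⟨B, hB, hb⟩ := H.bd T hT
  refine ⟨Real.sqrt (2 * B), Real.sqrt_nonneg _, fun τ hτ x => ⟨?_, ?_⟩⟩
  · have := (H.sl τ hτ.1).u_sq_le x
    exact Real.abs_le_sqrt (by linarith [(hb τ hτ).bu, (hb τ hτ).bu'])
  · have := (H.sl τ hτ.1).θ_sq_le x
    exact Real.abs_le_sqrt (by linarith [(hb τ hτ).bθ, (hb τ hτ).bθ'])

theorem Sol.y_energy {μ κ R c K A : ℝ} (hc : 0 < c) (hA : 1 ≤ A) {v u θ : ℝ → ℝ → ℝ}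
    (H : Sol μ κ R c K v u θ) {s t : ℝ} (hs : 0 ≤ s) (hst : s ≤ t) :
    (∫ x, yg c A (u · t) (θ · t) x = (∫ x, yg c A (u · s) (θ · s) x)
      + ∫ τ in s..t, ∫ x, yh μ κ R c A (v · τ) (u · τ) (θ · τ) x) ∧
      IntervalIntegrable (fun τ => ∫ x, yh μ κ R c A (v · τ) (u · τ) (θ · τ) x) volume s t := by
  refine H.energy (g := fun x t => yg c A (u · t) (θ · t) x)
    (h := fun x t => yh μ κ R c A (v · t) (u · t) (θ · t) x) ?_ ?_ ?_ ?_ hs hst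
  · intro t ht
    have S := H.sl t ht
    have := S.cont_wE c; have := S.contu
    unfold yg
    fun_prop
  · intro x t ht
    have d1 := H.dtu x t ht
    have d2 := H.dtθ x t ht
    unfold yg wE yh wE
    refine (((((((d2.sub_const 1).const_mul c).add ((d1.pow 2).div_const 2)).pow 2).div_const 2).add
      (((d1.pow 4).const_mul A).div_const 4)).add ((d1.pow 2).div_const 2)).congr_deriv ?_
    simp
    ring
  · intro t ht
    have S := H.sl t ht
    set P := nsq (u · t) + nsq (deriv (u · t)) with hP
    have hP0 : 0 ≤ P := add_nonneg (nsq_nonneg _) (nsq_nonneg _)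
    refine ⟨c ^ 2 + (A * P + 1), fun x => ?_⟩
    obtain ⟨e1, e2, e3, e4, e5⟩ := d0_ge (v · t) (u · t) (θ · t) x
    rw [abs_of_nonneg (yg_nonneg hA _ _ _), add_mul]
    refine (yg_le hA (u · t) (θ · t) x (S.u_sq_le x)).trans ?_
    gcongr
  · intro T hT
    obtain ⟨P, -, hb⟩ := H.abs_bounds hT
    exact ⟨_, fun τ hτ x => yh_bound hc hA (hb τ hτ x).1 (hb τ hτ x).2⟩

/-- Monotonicity of the integral against a nonnegative majorant; when the minorant is not
integrable its integral is zero by convention. -/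
theorem interval_mono {f g : ℝ → ℝ} {s t : ℝ} (hst : s ≤ t)
    (hg : IntervalIntegrable g volume s t) (h0 : ∀ τ ∈ Icc s t, 0 ≤ g τ)
    (h : ∀ τ ∈ Icc s t, f τ ≤ g τ) : ∫ τ in s..t, f τ ≤ ∫ τ in s..t, g τ := by
  by_cases hf : IntervalIntegrable f volume s t
  · exact intervalIntegral.integral_mono_on hst hf hg h
  · rw [intervalIntegral.integral_undef hf]
    exact intervalIntegral.integral_nonneg hst h0

namespace Sol
variable {μ κ R c K : ℝ} {v u θ : ℝ → ℝ → ℝ} (H : Sol μ κ R c K v u θ)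
include H

theorem Dh_window {C0 : ℝ} (h : ∀ t, 0 ≤ t → ∫ τ in (0 : ℝ)..t, Dh (u · τ) (θ · τ) ≤ C0) {s : ℝ}
    (hs : 0 ≤ s) : ∫ τ in s..(s + 1), Dh (u · τ) (θ · τ) ≤ C0 := by
  have h1 := intervalIntegral.integral_add_adjacent_intervals
    (H.Dh_intervalIntegrable le_rfl hs) (H.Dh_intervalIntegrable hs (by linarith : s ≤ s + 1))
  have h2 := h (s + 1) (by linarith)
  have h3 : 0 ≤ ∫ τ in (0 : ℝ)..s, Dh (u · τ) (θ · τ) :=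
    intervalIntegral.integral_nonneg hs fun τ hτ => (H.sl τ hτ.1).Dh_nonneg
  linarith

theorem window_one_add {C0 C : ℝ} (hC : 0 ≤ C)
    (h : ∀ t, 0 ≤ t → ∫ τ in (0 : ℝ)..t, Dh (u · τ) (θ · τ) ≤ C0) {s : ℝ} (hs : 0 ≤ s) :
    ∫ τ in s..(s + 1), C * (1 + Dh (u · τ) (θ · τ)) ≤ C * (1 + C0) := by
  rw [intervalIntegral.integral_const_mul, intervalIntegral.integral_add (by simp)
    (H.Dh_intervalIntegrable hs (by linarith))]
  have := H.Dh_window h hs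
  simp only [intervalIntegral.integral_const, smul_eq_mul]
  gcongr
  linarith

theorem nsq_u'_intervalIntegrable {s t : ℝ} (hs : 0 ≤ s) (hst : s ≤ t) :
    IntervalIntegrable (fun τ => nsq (deriv (u · τ))) volume s t := by
  refine H.intervalIntegrable (F := fun x t => deriv (u · t) x ^ 2) (H.tu'.pow_const 2) hs hst 1 fun τ hτ x => ?_
  rw [abs_of_nonneg (sq_nonneg _), one_mul]
  exact (dm_ge μ κ R c (v · τ) (u · τ) (θ · τ) x).2.2.2.1

theorem nsq_θ'_intervalIntegrable {s t : ℝ} (hs : 0 ≤ s) (hst : s ≤ t) :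
    IntervalIntegrable (fun τ => nsq (deriv (θ · τ))) volume s t := by
  refine H.intervalIntegrable (F := fun x t => deriv (θ · t) x ^ 2) (H.tθ'.pow_const 2) hs hst 1 fun τ hτ x => ?_
  rw [abs_of_nonneg (sq_nonneg _), one_mul]
  exact (dm_ge μ κ R c (v · τ) (u · τ) (θ · τ) x).2.2.2.2.1

end Sol

/-- The uniform `L²` bound on the temperature deviation, with its dissipation on unit windows. The
hypotheses on the solution are the conclusions of `entropy_bounds`. -/
theorem energy_bounds {μ κ R c K : ℝ} (hμ : 0 < μ) (hκ : 0 < κ) (hR : 0 < R) (hc : 0 < c)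
    (hK : 1 ≤ K) {B C0 : ℝ} (hB : 0 ≤ B) (hC0 : 0 ≤ C0) : ∃ C : ℝ, 0 ≤ C ∧
    ∀ v u θ : ℝ → ℝ → ℝ, Sol μ κ R c K v u θ → Bd B (v · 0) (u · 0) (θ · 0) →
    (∀ t, 0 ≤ t → nsq (u · t) ≤ C0 ∧ nsq (fun x => v x t - 1) ≤ C0 ∧
      ∫ x, (θ x t - 1) ^ 2 / (θ x t + 3) ≤ C0 ∧ ∫ τ in (0 : ℝ)..t, Dh (u · τ) (θ · τ) ≤ C0) →
    ∀ t, 0 ≤ t → nsq (fun x => θ x t - 1) ≤ C ∧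
      ∫ τ in t..(t + 1), (nsq (deriv (θ · τ)) + nsq (deriv (u · τ))) ≤ C := by
  obtain ⟨A, hA'⟩ : ∃ A, A = (c * μ + κ) ^ 2 / (c * κ * μ) + 1 := ⟨_, rfl⟩
  have hA : 1 ≤ A := by
    rw [hA']; have : 0 ≤ (c * μ + κ) ^ 2 / (c * κ * μ) := by positivity
    linarith
  obtain ⟨c0, C, hc0, hC, hpt⟩ := y_pointwise hμ hκ hR hc hK hA'
  obtain ⟨C1, hC1, hsup⟩ := sup_bounds hC0
  set C7 := c ^ 2 * C1 + (A * C1 + 1) * C0 with hC7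
  have hC70 : 0 ≤ C7 := by positivity
  set C6 := C * (C1 * (8 / c ^ 2) + 2 * C0 + 8 / c ^ 2) with hC6
  have hC60 : 0 ≤ C6 := by positivity
  set L := C7 * (1 + 2 * B) + C7 * (1 + C0) + C6 * (1 + C0) with hL
  obtain ⟨C2, hgr⟩ := uniform_gronwall L
  refine ⟨8 / c ^ 2 * |C2| + |C2| / c0, by positivity, ?_⟩
  intro v u θ H hb hE t ht
  have hD : ∀ t, 0 ≤ t → 0 ≤ Dh (u · t) (θ · t) := fun t ht => (H.sl t ht).Dh_nonneg
  have hY : ∀ t, 0 ≤ t → ∫ x, yg c A (u · t) (θ · t) x ≤ C7 * (1 + Dh (u · t) (θ · t)) := by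
    intro t ht
    have S := H.sl t ht
    obtain ⟨s1, s2, s3⟩ := hsup K _ _ _ S (hE t ht).1 (hE t ht).2.2.1
    refine (S.yg_integral_le hA s2).trans ?_
    have hd := hD t ht
    have n1 := (hE t ht).1
    have : (A * (C1 * (1 + Dh (u · t) (θ · t))) + 1) * nsq (u · t) ≤
        (A * (C1 * (1 + Dh (u · t) (θ · t))) + 1) * C0 := by gcongr
    have p2 := mul_le_mul_of_nonneg_left s3 (sq_nonneg c)
    have p3 : 0 ≤ C0 * Dh (u · t) (θ · t) := by positivity
    rw [hC7]
    linarith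
  have hw : ∀ t, 0 ≤ t → ∫ τ in (0 : ℝ)..t, Dh (u · τ) (θ · τ) ≤ C0 := fun t ht =>
    (hE t ht).2.2.2
  have hθ : ∀ t, 0 ≤ t → nsq (fun x => θ x t - 1) ≤
      8 / c ^ 2 * ∫ x, yg c A (u · t) (θ · t) x := by
    intro t ht
    have S := H.sl t ht
    rw [← integral_const_mul]
    exact integral_mono S.mθ.integrable_sq ((S.yg_int hA).const_mul _) fun x =>
      yg_lower (u := (u · t)) (θ := (θ · t)) hc hA x
  have L1 : 0 ≤ C7 * (1 + 2 * B) := by positivity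
  have L2 : 0 ≤ C7 * (1 + C0) := by positivity
  have L3 : 0 ≤ C6 * (1 + C0) := by positivity
  have key := hgr (fun t => ∫ x, yg c A (u · t) (θ · t) x)
    (fun τ => ∫ x, yh μ κ R c A (v · τ) (u · τ) (θ · τ) x)
    (fun τ => C6 * (1 + Dh (u · τ) (θ · τ)))
    (fun τ => c0 * (nsq (deriv (θ · τ)) + nsq (deriv (u · τ))))
    (fun t ht => integral_nonneg fun x => yg_nonneg hA _ _ x)
    (fun t ht => mul_nonneg hC60 (by linarith [hD t ht]))
    (fun s t hs hst => (H.y_energy hc hA hs hst).1)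
    (fun s t hs hst => (H.y_energy hc hA hs hst).2)
    (fun s t hs hst => ((IntervalIntegrable.add (by simp)
      (H.Dh_intervalIntegrable hs hst))).const_mul _)
    (fun s t hs hst => ((H.nsq_θ'_intervalIntegrable hs hst).add
      (H.nsq_u'_intervalIntegrable hs hst)).const_mul _)
    (ae_of_all _ fun t ht => mul_nonneg hc0.le (add_nonneg (nsq_nonneg _) (nsq_nonneg _)))
    ?_ ?_ ?_ ?_ t ht
  · obtain ⟨k1, k2⟩ := key
    have n0 : 0 ≤ |C2| / c0 := by positivity
    have n1 : 0 ≤ 8 / c ^ 2 * |C2| := by positivity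
    refine ⟨?_, ?_⟩
    · have := mul_le_mul_of_nonneg_left (k1.trans (le_abs_self C2))
        (show 0 ≤ 8 / c ^ 2 by positivity)
      linarith [hθ t ht]
    · rw [intervalIntegral.integral_const_mul] at k2
      have : ∫ τ in t..(t + 1), (nsq (deriv (θ · τ)) + nsq (deriv (u · τ))) ≤ |C2| / c0 := by
        rw [le_div_iff₀ hc0]; linarith [le_abs_self C2]
      linarith
  · filter_upwards [H.sl2] with t h2 ht
    have S := h2 ht
    obtain ⟨s1, s2, s3⟩ := hsup K _ _ _ S.toSl (hE t ht).1 (hE t ht).2.2.1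
    have h := S.y_slice (A := A) hpt hc
    have hd := hD t ht
    have hx : nsq (fun x => u x t * (θ x t - 1)) ≤
        C1 * (1 + Dh (u · t) (θ · t)) * nsq (fun x => θ x t - 1) := by
      refine (nsq_le_of_le S.msq (S.mθ.integrable_sq.const_mul
        (C1 * (1 + Dh (u · t) (θ · t)))) fun x => ?_).trans (le_of_eq (integral_const_mul _ _))
      rw [mul_pow]
      exact mul_le_mul_of_nonneg_right (s2 x) (sq_nonneg _)
    have hy0 : 0 ≤ ∫ x, yg c A (u · t) (θ · t) x := integral_nonneg fun x => yg_nonneg hA _ _ x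
    have hθt := hθ t ht
    obtain ⟨n1, n2, -, -⟩ := hE t ht
    set Y := ∫ x, yg c A (u · t) (θ · t) x with hYdef
    set D := Dh (u · t) (θ · t) with hDdef
    have q1 : C1 * (1 + D) * nsq (fun x => θ x t - 1) ≤ C1 * (1 + D) * (8 / c ^ 2 * Y) := by
      gcongr
    have q2 : nsq (fun x => u x t * (θ x t - 1)) + nsq (u · t) + nsq (fun x => θ x t - 1)
        + nsq (fun x => v x t - 1) ≤ (C1 * (8 / c ^ 2) + 2 * C0 + 8 / c ^ 2)
          * (1 + D) * (Y + 1) := by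
      have z1 : 0 ≤ C1 * (8 / c ^ 2) * (1 + D) := by positivity
      have z2 : 0 ≤ C0 * (D + Y + D * Y) := by positivity
      have z3 : 0 ≤ 8 / c ^ 2 * (1 + D + D * Y) := by positivity
      have e : (C1 * (8 / c ^ 2) + 2 * C0 + 8 / c ^ 2) * (1 + D) * (Y + 1) =
        C1 * (1 + D) * (8 / c ^ 2 * Y) + 2 * C0 + 8 / c ^ 2 * Y + (C1 * (8 / c ^ 2) * (1 + D))
        + 2 * (C0 * (D + Y + D * Y)) + 8 / c ^ 2 * (1 + D + D * Y) := by ring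
      rw [e]
      linarith
    have q3 := mul_le_mul_of_nonneg_left q2 hC
    rw [hC6]
    linarith
  · have S := H.sl 0 le_rfl
    have h1 := S.Dh_le
    have : C7 * (1 + Dh (u · 0) (θ · 0)) ≤ C7 * (1 + 2 * B) := by
      gcongr
      linarith [hb.bu', hb.bθ']
    have := hY 0 le_rfl
    linarith
  · intro s hs
    refine (interval_mono (by linarith) (((IntervalIntegrable.add (by simp)
      (H.Dh_intervalIntegrable hs (by linarith)))).const_mul C7)
      (fun τ hτ => mul_nonneg hC70 (by linarith [hD τ (hs.trans hτ.1)]))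
      fun τ hτ => hY τ (hs.trans hτ.1)).trans ?_
    linarith [H.window_one_add hC70 hw hs]
  · intro s hs
    linarith [H.window_one_add hC60 hw hs]

/-! ### Difference quotients in `L²` -/

/-- The difference quotient of `g` with step `h`. -/
noncomputable def Dq (h : ℝ) (g : ℝ → ℝ) (x : ℝ) : ℝ := (g (x + h) - g x) / h

theorem int_mul {f g : ℝ → ℝ} (hf : MemLp f 2 volume) (hg : MemLp g 2 volume) :
    Integrable fun x => f x * g x := hf.integrable_mul hg

theorem cauchy_schwarz {f g : ℝ → ℝ} (hf : MemLp f 2 volume) (hg : MemLp g 2 volume) :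
    (∫ x, f x * g x) ^ 2 ≤ nsq f * nsq g := by
  have ifg := int_mul hf hg
  have key : ∀ s : ℝ, 0 ≤ nsq g * (s * s) + 2 * (∫ x, f x * g x) * s + nsq f := by
    intro s
    have h0 : 0 ≤ ∫ x, (f x + s * g x) ^ 2 := integral_nonneg fun x => sq_nonneg _
    have e : ∫ x, (f x + s * g x) ^ 2 =
        nsq g * (s * s) + 2 * (∫ x, f x * g x) * s + nsq f := by
      have e1 : (fun x => (f x + s * g x) ^ 2) =
          fun x => (s * s * g x ^ 2 + 2 * s * (f x * g x)) + f x ^ 2 := by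
        funext x; ring
      rw [e1, integral_add (f := fun x => s * s * g x ^ 2 + 2 * s * (f x * g x))
          ((hg.integrable_sq.const_mul _).add (ifg.const_mul _)) hf.integrable_sq,
        integral_add (hg.integrable_sq.const_mul _) (ifg.const_mul _), integral_const_mul,
        integral_const_mul]
      unfold nsq
      ring
    linarith
  have := discrim_le_zero key
  unfold discrim at this
  nlinarith

theorem nsq_add_le {f g : ℝ → ℝ} (hf : MemLp f 2 volume) (hg : MemLp g 2 volume) :
    nsq (fun x => f x + g x) ≤ 2 * nsq f + 2 * nsq g := by
  refine (nsq_le_of_le (f := fun x => f x + g x) (hf.add hg)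
    ((hf.integrable_sq.const_mul 2).add (hg.integrable_sq.const_mul 2)) fun x => ?_).trans
    (le_of_eq ?_)
  · simp only [Pi.add_apply]
    nlinarith [sq_nonneg (f x - g x)]
  · rw [integral_add' (hf.integrable_sq.const_mul 2) (hg.integrable_sq.const_mul 2),
      integral_const_mul, integral_const_mul]
    rfl

theorem nsq_sub_le {f g : ℝ → ℝ} (hf : MemLp f 2 volume) (hg : MemLp g 2 volume) :
    nsq (fun x => f x - g x) ≤ 2 * nsq f + 2 * nsq g := by
  have := nsq_add_le hf hg.neg
  have e : nsq (-g) = nsq g := by simp [nsq]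
  rw [e] at this
  simpa [sub_eq_add_neg] using this

theorem tendsto_int_mul {g : ℝ → ℝ} {en : ℕ → ℝ → ℝ} (he : ∀ n, MemLp (en n) 2 volume)
    (hg : MemLp g 2 volume) (h : Tendsto (fun n => nsq (en n)) atTop (nhds 0)) :
    Tendsto (fun n => ∫ x, en n x * g x) atTop (nhds 0) := by
  have h1 : Tendsto (fun n => Real.sqrt (nsq (en n) * nsq g)) atTop (nhds 0) := by
    have := (h.mul_const (nsq g)).sqrt
    simpa using this
  refine squeeze_zero_norm (fun n => ?_) h1
  exact Real.abs_le_sqrt (cauchy_schwarz (he n) hg)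

/-- If a sequence converges pointwise and its norms do not exceed the norm of the limit, then it
converges strongly in `L²` (Fatou's lemma applied to `(φₙ + g)²`). -/
theorem nsq_sub_tendsto {φ : ℕ → ℝ → ℝ} {g : ℝ → ℝ} (cφ : ∀ n, Continuous (φ n))
    (cg : Continuous g) (hφ : ∀ n, MemLp (φ n) 2 volume) (hg : MemLp g 2 volume)
    (hl : ∀ x, Tendsto (fun n => φ n x) atTop (nhds (g x))) (hn : ∀ n, nsq (φ n) ≤ nsq g) :
    Tendsto (fun n => nsq (fun x => φ n x - g x)) atTop (nhds 0) := by
  have par : ∀ n, nsq (fun x => φ n x - g x) + nsq (fun x => φ n x + g x) ≤ 4 * nsq g := by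
    intro n
    have i1 : Integrable fun x => (φ n x - g x) ^ 2 := ((hφ n).sub hg).integrable_sq
    have i2 : Integrable fun x => (φ n x + g x) ^ 2 := ((hφ n).add hg).integrable_sq
    have : nsq (fun x => φ n x - g x) + nsq (fun x => φ n x + g x) =
        2 * nsq (φ n) + 2 * nsq g := by
      unfold nsq
      rw [← integral_const_mul, ← integral_const_mul, ← integral_add i1 i2,
        ← integral_add ((hφ n).integrable_sq.const_mul 2) (hg.integrable_sq.const_mul 2)]
      congr 1; funext x; ring
    linarith [hn n]
  rcases (nsq_nonneg g).eq_or_lt with h0 | h0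
  · refine squeeze_zero (fun n => nsq_nonneg _) (fun n => ?_) tendsto_const_nhds
    linarith [par n, nsq_nonneg (fun x => φ n x + g x)]
  have lof : ∀ f : ℝ → ℝ, MemLp f 2 volume → ∫⁻ x, ENNReal.ofReal (f x ^ 2) =
      ENNReal.ofReal (nsq f) := fun f hf =>
    (ofReal_integral_eq_lintegral_ofReal hf.integrable_sq (ae_of_all _ fun x => sq_nonneg _)).symm
  have fatou : ENNReal.ofReal (4 * nsq g) ≤
      liminf (fun n => ENNReal.ofReal (nsq (fun x => φ n x + g x))) atTop := by
    have h1 := lintegral_liminf_le (μ := volume)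
      (u := atTop) (f := fun n x => ENNReal.ofReal ((φ n x + g x) ^ 2)) fun n =>
        (((cφ n).add cg).pow 2).measurable.ennreal_ofReal
    have h2 : ∀ x, liminf (fun n => ENNReal.ofReal ((φ n x + g x) ^ 2)) atTop =
        ENNReal.ofReal ((2 * g x) ^ 2) := by
      intro x
      refine Tendsto.liminf_eq (ENNReal.tendsto_ofReal ?_)
      have := ((hl x).add_const (g x)).pow 2
      rwa [← two_mul] at this
    simp only [h2] at h1
    rw [lof (fun x => 2 * g x) (hg.const_mul 2)] at h1
    have h3 : nsq (fun x => 2 * g x) = 4 * nsq g := by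
      unfold nsq; rw [← integral_const_mul]; congr 1; funext x; ring
    rw [h3] at h1
    refine h1.trans (le_of_eq ?_)
    congr 1; funext n
    exact lof _ ((hφ n).add hg)
  rw [Metric.tendsto_atTop]
  intro ε hε
  have h5 : ENNReal.ofReal (4 * nsq g - ε) <
      liminf (fun n => ENNReal.ofReal (nsq (fun x => φ n x + g x))) atTop :=
    lt_of_lt_of_le ((ENNReal.ofReal_lt_ofReal_iff (by linarith)).mpr (by linarith)) fatou
  obtain ⟨N, hN⟩ := eventually_atTop.mp (eventually_lt_of_lt_liminf h5)
  refine ⟨N, fun n hn' => ?_⟩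
  have h6 := lt_of_not_ge fun h => (not_le.mpr (hN n hn')) (ENNReal.ofReal_le_ofReal h)
  rw [Real.dist_eq, sub_zero, abs_of_nonneg (nsq_nonneg _)]
  linarith [par n]

theorem continuous_Dq {g : ℝ → ℝ} (hg : Continuous g) (h : ℝ) : Continuous (Dq h g) := by
  unfold Dq; fun_prop

theorem memLp_shift {g : ℝ → ℝ} (hg : MemLp g 2 volume) (h : ℝ) :
    MemLp (fun x => g (x + h)) 2 volume :=
  hg.comp_measurePreserving (measurePreserving_add_right volume h)

theorem memLp_Dq {g : ℝ → ℝ} (hg : MemLp g 2 volume) (h : ℝ) : MemLp (Dq h g) 2 volume := by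
  have := ((memLp_shift hg h).sub hg).const_mul h⁻¹
  refine this.ae_eq (ae_of_all _ fun x => ?_)
  simp only [Pi.sub_apply, Dq]
  ring

/-- `D_h g` is an average of translates of `g'`, so it is bounded by `g'` in `L²`. -/
theorem nsq_Dq_le {g g' : ℝ → ℝ} (hd : ∀ x, HasDerivAt g (g' x) x) (cg' : Continuous g')
    (mg : MemLp g 2 volume) (mg' : MemLp g' 2 volume) {h : ℝ} (hh : h ≠ 0) :
    nsq (Dq h g) ≤ nsq g' := by
  have rep : ∀ x, Dq h g x = ∫ r in (0 : ℝ)..1, g' (x + h * r) := by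
    intro x
    have hd' : ∀ r ∈ uIcc (0 : ℝ) 1, HasDerivAt (fun r => g (x + h * r) / h) (g' (x + h * r)) r := by
      intro r _
      have h1 : HasDerivAt (fun r => x + h * r) h r := by
        simpa using ((hasDerivAt_id r).const_mul h).const_add x
      have h2 := ((hd (x + h * r)).comp r h1).div_const h
      simpa [mul_div_assoc, div_self hh] using h2
    rw [intervalIntegral.integral_eq_sub_of_hasDerivAt hd'
      ((cg'.comp (by fun_prop)).intervalIntegrable _ _)]
    simp only [mul_one, mul_zero, add_zero, Dq]
    ring
  have jen : ∀ x, Dq h g x ^ 2 ≤ ∫ r in Icc (0 : ℝ) 1, g' (x + h * r) ^ 2 := by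
    intro x
    rw [integral_Icc_eq_integral_Ioc, ← intervalIntegral.integral_of_le zero_le_one]
    have c1 : Continuous fun r => g' (x + h * r) := cg'.comp (by fun_prop)
    have h0 : 0 ≤ ∫ r in (0 : ℝ)..1, (g' (x + h * r) - Dq h g x) ^ 2 :=
      intervalIntegral.integral_nonneg zero_le_one fun r _ => sq_nonneg _
    have e : (fun r => (g' (x + h * r) - Dq h g x) ^ 2) = fun r =>
        g' (x + h * r) ^ 2 - 2 * Dq h g x * g' (x + h * r) + Dq h g x ^ 2 := by
      funext r; ring
    rw [e, intervalIntegral.integral_add, intervalIntegral.integral_sub,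
      intervalIntegral.integral_const_mul, ← rep] at h0
    · simp only [intervalIntegral.integral_const, sub_zero, smul_eq_mul, one_mul] at h0
      nlinarith
    all_goals exact Continuous.intervalIntegrable (by fun_prop) _ _
  have tm : TM fun x r => g' (x + h * r) ^ 2 :=
    Continuous.measurable (by fun_prop)
  have sh : ∀ r, ∫ x, g' (x + h * r) ^ 2 = nsq g' := fun r =>
    integral_add_right_eq_self (fun x => g' x ^ 2) (h * r)
  have int : Integrable (Function.uncurry fun x r => g' (x + h * r) ^ 2) (slab 0 1) := by
    refine tm.integrable le_rfl (φ := fun _ => nsq g') (integrableOn_const (by simp))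
      (ae_of_all _ fun r => ⟨(memLp_shift mg' (h * r)).integrable_sq, ?_⟩)
    simp only [abs_pow, sq_abs, sh, le_refl]
  have i2 : Integrable fun x => ∫ r in Icc (0 : ℝ) 1, g' (x + h * r) ^ 2 :=
    Integrable.integral_prod_left (f := Function.uncurry fun x r => g' (x + h * r) ^ 2) int
  refine (nsq_le_of_le (memLp_Dq mg h) i2 jen).trans (le_of_eq ?_)
  rw [integral_integral_swap (f := fun x r => g' (x + h * r) ^ 2) int]
  simp [sh]

theorem tendsto_Dq {g : ℝ → ℝ} {g' x : ℝ} (hd : HasDerivAt g g' x) {h : ℕ → ℝ}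
    (h0 : ∀ n, h n ≠ 0) (hl : Tendsto h atTop (nhds 0)) :
    Tendsto (fun n => Dq (h n) g x) atTop (nhds g') := by
  have hz : Tendsto h atTop (nhdsWithin 0 {0}ᶜ) :=
    tendsto_nhdsWithin_iff.mpr ⟨hl, Eventually.of_forall h0⟩
  refine (hd.tendsto_slope_zero.comp hz).congr fun n => ?_
  simp [Dq, div_eq_inv_mul]

theorem nsq_Dq_sub_tendsto {g g' : ℝ → ℝ} (hd : ∀ x, HasDerivAt g (g' x) x) (cg' : Continuous g')
    (mg : MemLp g 2 volume) (mg' : MemLp g' 2 volume) {h : ℕ → ℝ} (h0 : ∀ n, h n ≠ 0)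
    (hl : Tendsto h atTop (nhds 0)) :
    Tendsto (fun n => nsq (fun x => Dq (h n) g x - g' x)) atTop (nhds 0) :=
  nsq_sub_tendsto (fun _ => continuous_Dq
    (continuous_iff_continuousAt.mpr fun x => (hd x).continuousAt) _) cg'
    (fun _ => memLp_Dq mg _) mg' (fun x => tendsto_Dq (hd x) h0 hl)
    fun n => nsq_Dq_le hd cg' mg mg' (h0 n)

/-- Discrete integration by parts. -/
theorem ibp_Dq {f g : ℝ → ℝ} (hf : MemLp f 2 volume) (hg : MemLp g 2 volume) (h : ℝ) :
    ∫ x, f x * Dq h g x = - ∫ x, Dq (-h) f x * g x := by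
  have i1 := int_mul hf (memLp_shift hg h)
  have i2 := int_mul hf hg
  have i3 := int_mul (memLp_shift hf (-h)) hg
  have e1 : (fun x => f x * Dq h g x) = fun x => h⁻¹ * (f x * g (x + h) - f x * g x) := by
    funext x; unfold Dq; ring
  have e2 : (fun x => Dq (-h) f x * g x) = fun x => (-h⁻¹) * (f (x + -h) * g x - f x * g x) := by
    funext x; unfold Dq; rw [div_neg, div_eq_mul_inv]; ring
  have e3 : ∫ x, f x * g (x + h) = ∫ x, f (x + -h) * g x := by
    rw [← integral_add_right_eq_self (fun x => f (x + -h) * g x) h]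
    simp
  rw [e1, e2, integral_const_mul, integral_const_mul, integral_sub i1 i2, integral_sub i3 i2, e3]
  ring

/-- Convergence of quadratic functionals with bounded weight along `f + eₙ` with `eₙ → 0`. -/
theorem tendsto_quad {w f : ℝ → ℝ} {en : ℕ → ℝ → ℝ} {P : ℝ} (hw : ∀ x, |w x| ≤ P)
    (cw : Continuous w) (cf : Continuous f) (hf : MemLp f 2 volume) (ce : ∀ n, Continuous (en n))
    (he : ∀ n, MemLp (en n) 2 volume) (h : Tendsto (fun n => nsq (en n)) atTop (nhds 0)) :
    Tendsto (fun n => ∫ x, w x * (f x + en n x) ^ 2) atTop (nhds (∫ x, w x * f x ^ 2)) := by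
  have mwf : MemLp (fun x => w x * f x) 2 volume := memLp_bdd_mul cw cf hf P hw
  have mwe : ∀ n, MemLp (fun x => w x * en n x) 2 volume := fun n =>
    memLp_bdd_mul cw (ce n) (he n) P hw
  have t1 := tendsto_int_mul he mwf h
  have t2 : Tendsto (fun n => ∫ x, (w x * en n x) * en n x) atTop (nhds 0) := by
    have hP : Tendsto (fun n => P * nsq (en n)) atTop (nhds 0) := by simpa using h.const_mul P
    refine squeeze_zero_norm (fun n => ?_) hP
    refine (norm_integral_le_integral_norm _).trans ?_
    unfold nsq
    rw [← integral_const_mul]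
    refine integral_mono ((mwe n).integrable_mul (he n)).norm ((he n).integrable_sq.const_mul P)
      fun x => ?_
    simp only [norm_mul, Real.norm_eq_abs]
    rw [mul_assoc, ← sq, sq_abs]
    exact mul_le_mul_of_nonneg_right (hw x) (sq_nonneg _)
  have t3 := ((t1.const_mul 2).add t2).const_add (∫ x, w x * f x ^ 2)
  simp only [mul_zero, add_zero] at t3
  refine t3.congr fun n => ?_
  have i1 : Integrable fun x => w x * f x ^ 2 := by
    have := mwf.integrable_mul hf
    refine this.congr (ae_of_all _ fun x => ?_)
    simp only [Pi.mul_apply]; ring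
  have i2 := int_mul (he n) mwf
  have i3 := int_mul (mwe n) (he n)
  rw [← integral_const_mul, ← integral_add (i2.const_mul 2) i3,
    ← integral_add (g := fun x => 2 * (en n x * (w x * f x)) + w x * en n x * en n x)
      i1 ((i2.const_mul 2).add i3)]
  congr 1; funext x
  ring

/-! ### The effective flux with difference quotients -/

/-- The effective flux `sg` with `u_x` replaced by a difference quotient. -/
noncomputable def Sh (μ R h : ℝ) (v u θ : ℝ → ℝ) (x : ℝ) : ℝ :=
  (μ * Dq h u x - R * (θ x - v x)) / v x

/-- The error `Sh - sg`. -/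
noncomputable def eS (μ h : ℝ) (v u : ℝ → ℝ) (x : ℝ) : ℝ :=
  μ * (v x)⁻¹ * (Dq h u x - deriv u x)

/-- The spatial derivative of `eS`. -/
noncomputable def eSx (μ h : ℝ) (v u : ℝ → ℝ) (x : ℝ) : ℝ :=
  μ * (v x)⁻¹ * (Dq h (deriv u) x - deriv (deriv u) x)
    - μ * (v x)⁻¹ ^ 2 * (Dq h u x - deriv u x) * deriv v x

/-- The time derivative of the density `v Sh² / 2`. -/
noncomputable def zh (μ κ R c h : ℝ) (v u θ : ℝ → ℝ) (x : ℝ) : ℝ :=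
  Sh μ R h v u θ x * (μ * Dq h (sgx μ R v u θ) x - R * (tt μ κ R c v u θ x - deriv u x))
    - Sh μ R h v u θ x ^ 2 * deriv u x / 2

/-- The time derivative of `∫ v sg² / 2`. -/
noncomputable def zH (μ κ R c : ℝ) (v u θ : ℝ → ℝ) : ℝ :=
  -μ * nsq (sgx μ R v u θ)
    - R * (∫ x, sg μ R v u θ x * (tt μ κ R c v u θ x - deriv u x))
    - (∫ x, deriv u x * sg μ R v u θ x ^ 2) / 2

namespace Sl
variable {K : ℝ} {v u θ : ℝ → ℝ} (S : Sl K v u θ)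
include S

theorem Sh_eq (μ R h x : ℝ) : Sh μ R h v u θ x = sg μ R v u θ x + eS μ h v u x := by
  have := S.v_ne x
  unfold Sh sg eS
  field_simp
  ring

theorem cont_er (μ h : ℝ) : Continuous (eS μ h v u) := by
  unfold eS
  exact (continuous_const.mul (S.contv.inv₀ S.v_ne)).mul ((continuous_Dq S.contu h).sub S.contu')

theorem mr (h : ℝ) : MemLp (fun x => Dq h u x - deriv u x) 2 volume := (memLp_Dq S.mu h).sub S.mu'

theorem coef_abs (μ x : ℝ) : |μ * (v x)⁻¹| ≤ |μ| * K := by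
  have := S.inv_v x
  have h0 : 0 < (v x)⁻¹ := inv_pos.mpr (S.v_pos x)
  rw [abs_mul, abs_of_pos h0]
  gcongr

theorem mer (μ h : ℝ) : MemLp (eS μ h v u) 2 volume :=
  memLp_bdd_mul (continuous_const.mul (S.contv.inv₀ S.v_ne))
    ((continuous_Dq S.contu h).sub S.contu') (S.mr h) (|μ| * K) (S.coef_abs μ)

theorem er_sq_le (μ h x : ℝ) :
    eS μ h v u x ^ 2 ≤ (|μ| * K) ^ 2 * (Dq h u x - deriv u x) ^ 2 := by
  have h1 := S.coef_abs μ x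
  unfold eS
  rw [mul_pow, ← sq_abs (μ * (v x)⁻¹)]
  gcongr

theorem nsq_er (μ h : ℝ) : nsq (eS μ h v u) ≤ (|μ| * K) ^ 2 * nsq (fun x => Dq h u x - deriv u x) := by
  refine (nsq_le_of_le (S.mer μ h) ((S.mr h).integrable_sq.const_mul _) (S.er_sq_le μ h)).trans
    (le_of_eq (integral_const_mul _ _))

theorem nsq_r {h : ℝ} (hh : h ≠ 0) : nsq (fun x => Dq h u x - deriv u x) ≤ 4 * nsq (deriv u) := by
  have := nsq_sub_le (memLp_Dq S.mu h) S.mu'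
  linarith [nsq_Dq_le S.du S.contu' S.mu S.mu' hh]

theorem er_tendsto (μ : ℝ) {h : ℕ → ℝ} (h0 : ∀ n, h n ≠ 0) (hl : Tendsto h atTop (nhds 0)) :
    Tendsto (fun n => nsq (eS μ (h n) v u)) atTop (nhds 0) := by
  have := (nsq_Dq_sub_tendsto S.du S.contu' S.mu S.mu' h0 hl).const_mul ((|μ| * K) ^ 2)
  rw [mul_zero] at this
  exact squeeze_zero (fun n => nsq_nonneg _) (fun n => S.nsq_er μ (h n)) this

theorem mSh (μ R h : ℝ) : MemLp (Sh μ R h v u θ) 2 volume :=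
  ((S.msg μ R).add (S.mer μ h)).ae_eq (ae_of_all _ fun x => (S.Sh_eq μ R h x).symm)

theorem cont_Sh (μ R h : ℝ) : Continuous (Sh μ R h v u θ) := by
  have e : Sh μ R h v u θ = fun x => sg μ R v u θ x + eS μ h v u x :=
    funext fun x => S.Sh_eq μ R h x
  rw [e]
  exact (S.cont_sg μ R).add (S.cont_er μ h)

theorem v_abs (x : ℝ) : |v x| ≤ K := by
  rw [abs_of_pos (S.v_pos x)]; exact S.v_hi x

/-- Convergence of the regularised energies at a fixed time. -/
theorem Z_tendsto (μ R : ℝ) {h : ℕ → ℝ} (h0 : ∀ n, h n ≠ 0) (hl : Tendsto h atTop (nhds 0)) :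
    Tendsto (fun n => ∫ x, v x * Sh μ R (h n) v u θ x ^ 2) atTop
      (nhds (∫ x, v x * sg μ R v u θ x ^ 2)) := by
  have := tendsto_quad S.v_abs S.contv (S.cont_sg μ R) (S.msg μ R) (fun n => S.cont_er μ (h n))
    (fun n => S.mer μ (h n)) (S.er_tendsto μ h0 hl)
  simpa only [S.Sh_eq] using this

end Sl

namespace Sl2
variable {K : ℝ} {v u θ : ℝ → ℝ} (S : Sl2 K v u θ)
include S

theorem dr (h x : ℝ) : HasDerivAt (fun x => Dq h u x - deriv u x)
    (Dq h (deriv u) x - deriv (deriv u) x) x := by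
  have h1 : HasDerivAt (fun x => u (x + h)) (deriv u (x + h)) x := (S.du (x + h)).comp_add_const x h
  exact ((h1.sub (S.du x)).div_const h).sub (S.du' x)

theorem mr' (h : ℝ) : MemLp (fun x => Dq h (deriv u) x - deriv (deriv u) x) 2 volume :=
  (memLp_Dq S.mu' h).sub S.mu''

theorem nsq_r' {h : ℝ} (hh : h ≠ 0) :
    nsq (fun x => Dq h (deriv u) x - deriv (deriv u) x) ≤ 4 * nsq (deriv (deriv u)) := by
  have := nsq_sub_le (memLp_Dq S.mu' h) S.mu''
  linarith [nsq_Dq_le S.du' S.contu'' S.mu' S.mu'' hh]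

theorem der (μ h x : ℝ) : HasDerivAt (eS μ h v u) (eSx μ h v u x) x := by
  have h1 := (((S.dv x).inv (S.v_ne x)).const_mul μ).mul (S.dr h x)
  refine h1.congr_deriv ?_
  have := S.v_ne x
  unfold eSx
  rw [Pi.inv_apply]
  field_simp
  ring

theorem cont_erx (μ h : ℝ) : Continuous (eSx μ h v u) := by
  have c1 := continuous_Dq S.contu h
  have c2 := continuous_Dq S.contu' h
  have c3 : Continuous fun x => (v x)⁻¹ := S.contv.inv₀ S.v_ne
  unfold eSx
  exact ((continuous_const.mul c3).mul (c2.sub S.contu'')).sub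
    (((continuous_const.mul (c3.pow 2)).mul (c1.sub S.contu')).mul S.contv')

/-- Pointwise bound of `eSx`, the difference quotient error being controlled in `L^∞`. -/
theorem erx_sq_le (μ h x : ℝ) : eSx μ h v u x ^ 2 ≤
    2 * (μ * K) ^ 2 * (Dq h (deriv u) x - deriv (deriv u) x) ^ 2 +
    2 * (μ * K ^ 2) ^ 2 * (nsq (fun x => Dq h u x - deriv u x) +
      nsq (fun x => Dq h (deriv u) x - deriv (deriv u) x)) * deriv v x ^ 2 := by
  have sup := sq_le_of_memLp (S.dr h) (S.mr h) (S.mr' h) x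
  change _ ≤ nsq (fun x => Dq h u x - deriv u x) +
      nsq (fun x => Dq h (deriv u) x - deriv (deriv u) x) at sup
  set N := nsq (fun x => Dq h u x - deriv u x) +
      nsq (fun x => Dq h (deriv u) x - deriv (deriv u) x)
  have i1 := S.inv_v x
  have i0 : 0 < (v x)⁻¹ := inv_pos.mpr (S.v_pos x)
  unfold eSx
  set p := Dq h (deriv u) x - deriv (deriv u) x
  set r := Dq h u x - deriv u x
  have e1 : (μ * (v x)⁻¹ * p) ^ 2 ≤ (μ * K) ^ 2 * p ^ 2 := by
    rw [mul_pow, mul_pow, mul_pow]; gcongr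
  have e2 : (μ * (v x)⁻¹ ^ 2 * r * deriv v x) ^ 2 ≤ (μ * K ^ 2) ^ 2 * N * deriv v x ^ 2 := by
    rw [mul_pow, mul_pow, mul_pow, mul_pow]; gcongr
  nlinarith [sq_nonneg (μ * (v x)⁻¹ * p + μ * (v x)⁻¹ ^ 2 * r * deriv v x)]

theorem merx (μ h : ℝ) : MemLp (eSx μ h v u) 2 volume := by
  rw [memLp_two_iff_integrable_sq (S.cont_erx μ h).aestronglyMeasurable]
  refine Integrable.mono' (((S.mr' h).integrable_sq.const_mul (2 * (μ * K) ^ 2)).add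
    (S.mv'.integrable_sq.const_mul (2 * (μ * K ^ 2) ^ 2 * (nsq (fun x => Dq h u x - deriv u x) +
      nsq (fun x => Dq h (deriv u) x - deriv (deriv u) x))))) ((S.cont_erx μ h).pow 2).aestronglyMeasurable
    (ae_of_all _ fun x => ?_)
  rw [Real.norm_of_nonneg (sq_nonneg _)]
  exact S.erx_sq_le μ h x

theorem nsq_erx (μ h : ℝ) : nsq (eSx μ h v u) ≤
    2 * (μ * K) ^ 2 * nsq (fun x => Dq h (deriv u) x - deriv (deriv u) x) +
    2 * (μ * K ^ 2) ^ 2 * (nsq (fun x => Dq h u x - deriv u x) +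
      nsq (fun x => Dq h (deriv u) x - deriv (deriv u) x)) * nsq (deriv v) := by
  have i1 := (S.mr' h).integrable_sq
  have i2 := S.mv'.integrable_sq
  refine (nsq_le_of_le (S.merx μ h) ((i1.const_mul _).add (i2.const_mul _))
    (S.erx_sq_le μ h)).trans (le_of_eq ?_)
  rw [integral_add' (i1.const_mul _) (i2.const_mul _), integral_const_mul, integral_const_mul]
  rfl

theorem erx_tendsto (μ : ℝ) {h : ℕ → ℝ} (h0 : ∀ n, h n ≠ 0) (hl : Tendsto h atTop (nhds 0)) :
    Tendsto (fun n => nsq (eSx μ (h n) v u)) atTop (nhds 0) := by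
  have t1 := nsq_Dq_sub_tendsto S.du S.contu' S.mu S.mu' h0 hl
  have t2 := nsq_Dq_sub_tendsto S.du' S.contu'' S.mu' S.mu'' h0 hl
  have t3 := (t2.const_mul (2 * (μ * K) ^ 2)).add
    (((t1.add t2).const_mul (2 * (μ * K ^ 2) ^ 2)).mul_const (nsq (deriv v)))
  simp only [mul_zero, add_zero, zero_mul] at t3
  exact squeeze_zero (fun n => nsq_nonneg _) (fun n => S.nsq_erx μ (h n)) t3

theorem mttu (μ κ R c : ℝ) : MemLp (fun x => tt μ κ R c v u θ x - deriv u x) 2 volume :=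
  (S.mtt μ κ R c).sub S.mu'

theorem u'_bdd : ∃ P, ∀ x, |deriv u x| ≤ P :=
  ⟨_, fun x => Real.abs_le_sqrt (S.u'_sq_le x)⟩

theorem sq_mul_int {f : ℝ → ℝ} (cf : Continuous f) (hf : MemLp f 2 volume) :
    Integrable fun x => deriv u x * f x ^ 2 := by
  obtain ⟨P, hP⟩ := S.u'_bdd
  refine (int_mul (memLp_bdd_mul S.contu' cf hf P hP) hf).congr (ae_of_all _ fun x => ?_)
  simp only; ring

theorem Dq_Sh (μ R h k x : ℝ) : Dq k (Sh μ R h v u θ) x =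
    Dq k (sg μ R v u θ) x + Dq k (eS μ h v u) x := by
  unfold Dq
  rw [S.Sh_eq, S.Sh_eq]
  ring

theorem zh_integral (μ κ R c h : ℝ) : ∫ x, zh μ κ R c h v u θ x =
    -μ * (∫ x, Dq (-h) (Sh μ R h v u θ) x * sgx μ R v u θ x)
    - R * (∫ x, Sh μ R h v u θ x * (tt μ κ R c v u θ x - deriv u x))
    - (∫ x, deriv u x * Sh μ R h v u θ x ^ 2) / 2 := by
  have m1 := S.mSh μ R h
  have m2 := memLp_Dq (S.msgx μ R) h
  have i1 := int_mul m1 m2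
  have i2 := int_mul m1 (S.mttu μ κ R c)
  have i3 := S.sq_mul_int (S.cont_Sh μ R h) m1
  have e : zh μ κ R c h v u θ = fun x => (μ * (Sh μ R h v u θ x * Dq h (sgx μ R v u θ) x)
      - R * (Sh μ R h v u θ x * (tt μ κ R c v u θ x - deriv u x)))
      - (deriv u x * Sh μ R h v u θ x ^ 2) / 2 := by
    funext x; unfold zh; ring
  rw [e, integral_sub (f := fun x => μ * (Sh μ R h v u θ x * Dq h (sgx μ R v u θ) x)
      - R * (Sh μ R h v u θ x * (tt μ κ R c v u θ x - deriv u x)))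
      ((i1.const_mul _).sub (i2.const_mul _)) (i3.div_const 2),
    integral_sub (i1.const_mul _) (i2.const_mul _), integral_const_mul, integral_const_mul,
    integral_div, ibp_Dq m1 (S.msgx μ R)]
  ring

theorem mDq_Sh (μ R h k : ℝ) : MemLp (Dq k (Sh μ R h v u θ)) 2 volume := memLp_Dq (S.mSh μ R h) k

theorem zh_tendsto (μ κ R c : ℝ) {h : ℕ → ℝ} (h0 : ∀ n, h n ≠ 0) (hl : Tendsto h atTop (nhds 0)) :
    Tendsto (fun n => ∫ x, zh μ κ R c (h n) v u θ x) atTop (nhds (zH μ κ R c v u θ)) := by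
  have h0' : ∀ n, -h n ≠ 0 := fun n => neg_ne_zero.mpr (h0 n)
  have hl' : Tendsto (fun n => -h n) atTop (nhds 0) := by simpa using hl.neg
  have msgx := S.msgx μ R
  have A1 : Tendsto (fun n => ∫ x, (Dq (-h n) (sg μ R v u θ) x - sgx μ R v u θ x) *
      sgx μ R v u θ x) atTop (nhds 0) :=
    tendsto_int_mul (en := fun n x => Dq (-h n) (sg μ R v u θ) x - sgx μ R v u θ x)
      (fun n => (memLp_Dq (S.msg μ R) _).sub msgx) msgx
      (nsq_Dq_sub_tendsto (S.dsg μ R) (S.cont_sgx μ R) (S.msg μ R) msgx h0' hl')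
  have A2 : Tendsto (fun n => ∫ x, Dq (-h n) (eS μ (h n) v u) x * sgx μ R v u θ x) atTop
      (nhds 0) :=
    tendsto_int_mul (fun n => memLp_Dq (S.mer μ (h n)) _) msgx
      (squeeze_zero (fun n => nsq_nonneg _) (fun n => nsq_Dq_le (S.der μ (h n)) (S.cont_erx μ (h n))
        (S.mer μ (h n)) (S.merx μ (h n)) (h0' n)) (S.erx_tendsto μ h0 hl))
  have A3 : Tendsto (fun n => ∫ x, eS μ (h n) v u x * (tt μ κ R c v u θ x - deriv u x)) atTop
      (nhds 0) :=
    tendsto_int_mul (fun n => S.mer μ (h n)) (S.mttu μ κ R c) (S.er_tendsto μ h0 hl)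
  obtain ⟨P, hP⟩ := S.u'_bdd
  have A4 := tendsto_quad hP S.contu' (S.cont_sg μ R) (S.msg μ R) (fun n => S.cont_er μ (h n))
    (fun n => S.mer μ (h n)) (S.er_tendsto μ h0 hl)
  have B1 := ((((A1.add A2).add_const (nsq (sgx μ R v u θ))).const_mul (-μ)).sub
    ((A3.add_const (∫ x, sg μ R v u θ x * (tt μ κ R c v u θ x - deriv u x))).const_mul R)).sub
    (A4.div_const 2)
  simp only [zero_add] at B1
  refine B1.congr fun n => ?_
  rw [S.zh_integral]
  have e1 : (∫ x, (Dq (-h n) (sg μ R v u θ) x - sgx μ R v u θ x) * sgx μ R v u θ x) +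
      (∫ x, Dq (-h n) (eS μ (h n) v u) x * sgx μ R v u θ x) + nsq (sgx μ R v u θ) =
      ∫ x, Dq (-h n) (Sh μ R (h n) v u θ) x * sgx μ R v u θ x := by
    have j1 := int_mul ((memLp_Dq (S.msg μ R) (-h n)).sub msgx) msgx
    have j2 := int_mul (memLp_Dq (S.mer μ (h n)) (-h n)) msgx
    have j3 := msgx.integrable_sq
    unfold nsq
    simp only [Pi.sub_apply] at j1
    rw [← integral_add j1 j2, ← integral_add (f := fun x =>
      (Dq (-h n) (sg μ R v u θ) x - sgx μ R v u θ x) * sgx μ R v u θ x +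
      Dq (-h n) (eS μ (h n) v u) x * sgx μ R v u θ x) (j1.add j2) j3]
    congr 1; funext x
    rw [S.Dq_Sh]; ring
  have e2 : (∫ x, eS μ (h n) v u x * (tt μ κ R c v u θ x - deriv u x)) +
      (∫ x, sg μ R v u θ x * (tt μ κ R c v u θ x - deriv u x)) =
      ∫ x, Sh μ R (h n) v u θ x * (tt μ κ R c v u θ x - deriv u x) := by
    rw [← integral_add (int_mul (S.mer μ (h n)) (S.mttu μ κ R c))
      (int_mul (S.msg μ R) (S.mttu μ κ R c))]
    congr 1; funext x
    rw [S.Sh_eq]; ring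
  have e3 : (∫ x, deriv u x * (sg μ R v u θ x + eS μ (h n) v u x) ^ 2) =
      ∫ x, deriv u x * Sh μ R (h n) v u θ x ^ 2 := by
    simp only [S.Sh_eq]
  rw [e1, e2, e3]

end Sl2

theorem abs_int_mul_le {f g : ℝ → ℝ} (hf : MemLp f 2 volume) (hg : MemLp g 2 volume) :
    |∫ x, f x * g x| ≤ (nsq f + nsq g) / 2 := by
  refine abs_le_of_sq_le_sq ((cauchy_schwarz hf hg).trans ?_)
    (by linarith [nsq_nonneg f, nsq_nonneg g])
  nlinarith [sq_nonneg (nsq f - nsq g)]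

/-- The time derivatives of the regularised energies are dominated uniformly in the step. -/
theorem zh_bound (μ κ R c K B : ℝ) (hB : 0 ≤ B) : ∃ a b : ℝ, ∀ v u θ : ℝ → ℝ, Sl2 K v u θ →
    Bd B v u θ → ∀ h : ℝ, h ≠ 0 → |∫ x, zh μ κ R c h v u θ x| ≤
      a + b * (nsq (deriv (deriv u)) + nsq (deriv (deriv θ))) := by
  obtain ⟨a0, b0, hdm⟩ := dm_bound μ κ R c K B hB
  obtain ⟨S0, hS0⟩ : ∃ S0, S0 = 2 * (K ^ 2 * (2 * μ ^ 2 * B + 2 * R ^ 2 * (4 * B))) +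
    2 * ((|μ| * K) ^ 2 * (4 * B)) := ⟨_, rfl⟩
  refine ⟨|μ| * (3 * a0 + 2 * (2 * (μ * K ^ 2) ^ 2 * (4 * B) * B)) / 2
      + |R| * (S0 + 2 * a0 + 2 * B) / 2 + (1 + B) * S0 / 2,
    |μ| * (3 * b0 + 2 * (2 * (μ * K) ^ 2 * 4 + 2 * (μ * K ^ 2) ^ 2 * 4 * B)) / 2
      + |R| * (2 * b0) / 2 + S0 / 2, ?_⟩
  intro v u θ S hb h hh
  have hW := hdm v u θ S hb
  rw [S.dm_integral, S.d0_integral] at hW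
  obtain ⟨b1, b2, b3, b4, b5, b6⟩ := hb
  have n1 := nsq_nonneg (deriv (deriv u))
  have n2 := nsq_nonneg (deriv (deriv θ))
  set n := nsq (deriv (deriv u)) + nsq (deriv (deriv θ)) with hn
  have p1 := nsq_nonneg (fun x => v x - 1); have p2 := nsq_nonneg u
  have p3 := nsq_nonneg (fun x => θ x - 1); have p4 := nsq_nonneg (deriv u)
  have p5 := nsq_nonneg (deriv θ); have p6 := nsq_nonneg (sg μ R v u θ)
  have p7 := nsq_nonneg (sgx μ R v u θ); have p8 := nsq_nonneg (qx v θ)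
  have p9 := nsq_nonneg (tt μ κ R c v u θ)
  have w1 : nsq (sgx μ R v u θ) ≤ a0 + b0 * n := by linarith
  have w2 : nsq (tt μ κ R c v u θ) ≤ a0 + b0 * n := by linarith
  have s1 : nsq (sg μ R v u θ) ≤ K ^ 2 * (2 * μ ^ 2 * B + 2 * R ^ 2 * (4 * B)) := by
    refine (S.nsq_sg μ R).trans ?_
    gcongr
    linarith [S.nsq_θ_sub_v]
  have s2 : nsq (eS μ h v u) ≤ (|μ| * K) ^ 2 * (4 * B) := by
    refine (S.nsq_er μ h).trans ?_
    gcongr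
    linarith [S.nsq_r hh]
  have eSh : Sh μ R h v u θ = fun x => sg μ R v u θ x + eS μ h v u x :=
    funext fun x => S.Sh_eq μ R h x
  have s3 : nsq (Sh μ R h v u θ) ≤ S0 := by
    have := nsq_add_le (S.msg μ R) (S.mer μ h)
    rw [eSh, hS0]; linarith
  have s4 : nsq (eSx μ h v u) ≤ 2 * (μ * K) ^ 2 * (4 * n) +
      2 * (μ * K ^ 2) ^ 2 * (4 * B + 4 * n) * B := by
    refine (S.nsq_erx μ h).trans ?_
    have r1 := S.nsq_r hh
    have r2 := S.nsq_r' hh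
    have := nsq_nonneg (deriv v)
    gcongr <;> linarith
  have s5 : nsq (Dq (-h) (Sh μ R h v u θ)) ≤ 2 * (a0 + b0 * n) + 2 * (2 * (μ * K) ^ 2 * (4 * n) +
      2 * (μ * K ^ 2) ^ 2 * (4 * B + 4 * n) * B) := by
    have hd : ∀ x, HasDerivAt (Sh μ R h v u θ) (sgx μ R v u θ x + eSx μ h v u x) x := by
      intro x
      rw [eSh]
      exact (S.dsg μ R x).add (S.der μ h x)
    have := nsq_Dq_le hd ((S.cont_sgx μ R).add (S.cont_erx μ h)) (S.mSh μ R h)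
      ((S.msgx μ R).add (S.merx μ h)) (neg_ne_zero.mpr hh)
    linarith [nsq_add_le (S.msgx μ R) (S.merx μ h)]
  have s6 : nsq (fun x => tt μ κ R c v u θ x - deriv u x) ≤ 2 * (a0 + b0 * n) + 2 * B := by
    linarith [nsq_sub_le (S.mtt μ κ R c) S.mu']
  have t1 := abs_int_mul_le (S.mDq_Sh μ R h (-h)) (S.msgx μ R)
  have t2 := abs_int_mul_le (S.mSh μ R h) (S.mttu μ κ R c)
  have t3 : |∫ x, deriv u x * Sh μ R h v u θ x ^ 2| ≤ (1 + B + n) * S0 := by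
    have : |∫ x, deriv u x * Sh μ R h v u θ x ^ 2| ≤ (1 + B + n) * nsq (Sh μ R h v u θ) := by
      unfold nsq
      rw [← integral_const_mul]
      refine (abs_integral_le_integral_abs).trans (integral_mono
        (S.sq_mul_int (S.cont_Sh μ R h) (S.mSh μ R h)).abs
        ((S.mSh μ R h).integrable_sq.const_mul _) fun x => ?_)
      simp only [abs_mul, abs_pow, sq_abs]
      refine mul_le_mul_of_nonneg_right ?_ (sq_nonneg _)
      have := S.u'_sq_le x
      rw [abs_le]
      constructor <;> nlinarith [sq_nonneg (deriv u x - 1), sq_nonneg (deriv u x + 1)]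
    refine this.trans ?_
    gcongr
  rw [S.zh_integral]
  have key : |-μ * (∫ x, Dq (-h) (Sh μ R h v u θ) x * sgx μ R v u θ x)
    - R * (∫ x, Sh μ R h v u θ x * (tt μ κ R c v u θ x - deriv u x))
    - (∫ x, deriv u x * Sh μ R h v u θ x ^ 2) / 2| ≤
      |μ| * |∫ x, Dq (-h) (Sh μ R h v u θ) x * sgx μ R v u θ x| +
      |R| * |∫ x, Sh μ R h v u θ x * (tt μ κ R c v u θ x - deriv u x)| +
      |∫ x, deriv u x * Sh μ R h v u θ x ^ 2| / 2 := by
    refine (abs_sub _ _).trans ?_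
    refine (add_le_add_left (abs_sub _ _) _).trans (le_of_eq ?_)
    rw [abs_mul, abs_mul, abs_neg, abs_div, abs_two]
  refine key.trans ?_
  have q1 := mul_le_mul_of_nonneg_left (t1.trans (show _ ≤ (2 * (a0 + b0 * n) +
      2 * (2 * (μ * K) ^ 2 * (4 * n) + 2 * (μ * K ^ 2) ^ 2 * (4 * B + 4 * n) * B)
      + (a0 + b0 * n)) / 2 by linarith)) (abs_nonneg μ)
  have q2 := mul_le_mul_of_nonneg_left (t2.trans (show _ ≤ (S0 + (2 * (a0 + b0 * n) + 2 * B)) / 2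
    by linarith)) (abs_nonneg R)
  linarith

namespace Sol
variable {μ κ R c K : ℝ} {v u θ : ℝ → ℝ → ℝ} (H : Sol μ κ R c K v u θ)
include H

theorem dm_slab_shift (h : ℝ) {s t : ℝ} (hs : 0 ≤ s) :
    Integrable (Function.uncurry fun x t => dm μ κ R c (v · t) (u · t) (θ · t) (x + h))
      (slab s t) := by
  have mp : MeasurePreserving (fun z : ℝ × ℝ => (z.1 + h, z.2)) (slab s t) (slab s t) :=
    (measurePreserving_add_right volume h).prod (MeasurePreserving.id _)
  have i := H.dm_slab (t := t) hs
  exact (mp.integrable_comp i.aestronglyMeasurable).mpr i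

/-- For a fixed step, the time derivative of the regularised energy density is dominated by the
majorant and its translate. -/
theorem zh_le (hK : 1 ≤ K) {h T : ℝ} (hh : h ≠ 0) (hT : 0 ≤ T) : ∃ C, ∀ τ ∈ Icc 0 T, ∀ x,
    |zh μ κ R c h (v · τ) (u · τ) (θ · τ) x| ≤ C * (dm μ κ R c (v · τ) (u · τ) (θ · τ) x +
      dm μ κ R c (v · τ) (u · τ) (θ · τ) (x + h)) := by
  obtain ⟨P, hP0, hP⟩ := H.abs_bounds hT
  set k := |h|⁻¹ with hk
  have hk0 : 0 ≤ k := by positivity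
  set Q := K * (|μ| * (2 * P * k) + |R| * (P + K + 1)) with hQ
  have hK0 : 0 ≤ K := by linarith
  have hQ0 : 0 ≤ Q := by positivity
  set A := 4 * μ ^ 2 * k ^ 2 + 8 * R ^ 2 with hA
  have hA0 : 0 ≤ A := by positivity
  refine ⟨(K ^ 2 * A + A) + Q / 2 * (K ^ 2 * A + 1), fun τ hτ x => ?_⟩
  have S := H.sl τ hτ.1
  obtain ⟨g1, g2, g3, g4, -, -, g7, -, g9⟩ := dm_ge μ κ R c (v · τ) (u · τ) (θ · τ) x
  obtain ⟨-, f2, -, -, -, -, f7, -, -⟩ := dm_ge μ κ R c (v · τ) (u · τ) (θ · τ) (x + h)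
  have n0 := dm_nonneg μ κ R c (v · τ) (u · τ) (θ · τ) x
  have n1 := dm_nonneg μ κ R c (v · τ) (u · τ) (θ · τ) (x + h)
  obtain ⟨D, hD⟩ : ∃ D, D = dm μ κ R c (v · τ) (u · τ) (θ · τ) x +
      dm μ κ R c (v · τ) (u · τ) (θ · τ) (x + h) := ⟨_, rfl⟩
  rw [← hD]
  have hD0 : 0 ≤ D := by linarith
  have dq : ∀ f : ℝ → ℝ, f x ^ 2 ≤ dm μ κ R c (v · τ) (u · τ) (θ · τ) x →
      f (x + h) ^ 2 ≤ dm μ κ R c (v · τ) (u · τ) (θ · τ) (x + h) → Dq h f x ^ 2 ≤ 2 * k ^ 2 * D := by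
    intro f h1 h2
    have : Dq h f x ^ 2 = k ^ 2 * (f (x + h) - f x) ^ 2 := by
      unfold Dq; rw [hk, inv_pow, sq_abs, div_pow]; ring
    rw [this]
    have h3 : (f (x + h) - f x) ^ 2 ≤ 2 * D := by nlinarith [sq_nonneg (f (x + h) + f x)]
    calc _ ≤ k ^ 2 * (2 * D) := by gcongr
      _ = _ := by ring
  have comb : ∀ a b : ℝ, a ^ 2 ≤ 2 * k ^ 2 * D → b ^ 2 ≤ 4 * D →
      (μ * a - R * b) ^ 2 ≤ A * D := by
    intro a b h1 h2
    have e1 := mul_le_mul_of_nonneg_left h1 (sq_nonneg μ)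
    have e2 := mul_le_mul_of_nonneg_left h2 (sq_nonneg R)
    have e3 := sq_nonneg (μ * a + R * b)
    rw [hA]
    nlinarith
  have c1 := comb (Dq h (u · τ) x) (θ x τ - v x τ) (dq _ g2 f2)
    (by nlinarith [sq_nonneg ((θ x τ - 1) + (v x τ - 1))])
  have c2 := comb (Dq h (sgx μ R (v · τ) (u · τ) (θ · τ)) x)
    (tt μ κ R c (v · τ) (u · τ) (θ · τ) x - deriv (u · τ) x) (dq _ g7 f7)
    (by nlinarith [sq_nonneg (tt μ κ R c (v · τ) (u · τ) (θ · τ) x + deriv (u · τ) x)])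
  have i1 := S.inv_v x
  have i0 : 0 < (v x τ)⁻¹ := inv_pos.mpr (S.v_pos x)
  have hS : Sh μ R h (v · τ) (u · τ) (θ · τ) x =
      (v x τ)⁻¹ * (μ * Dq h (u · τ) x - R * (θ x τ - v x τ)) := by
    unfold Sh; rw [div_eq_inv_mul]
  have c3 : Sh μ R h (v · τ) (u · τ) (θ · τ) x ^ 2 ≤ K ^ 2 * A * D := by
    rw [hS, mul_pow, mul_assoc]
    gcongr
  have c4 : |Sh μ R h (v · τ) (u · τ) (θ · τ) x| ≤ Q := by
    rw [hS, abs_mul, abs_of_pos i0, hQ]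
    refine mul_le_mul i1 ?_ (abs_nonneg _) hK0
    refine (abs_sub _ _).trans ?_
    rw [abs_mul, abs_mul]
    have u1 := (hP τ hτ x).1
    have u2 := (hP τ hτ (x + h)).1
    have u3 := (hP τ hτ x).2
    have d1 : |Dq h (u · τ) x| ≤ 2 * P * k := by
      unfold Dq
      rw [abs_div, div_eq_mul_inv]
      gcongr
      exact (abs_sub _ _).trans (by linarith)
    have d2 : |θ x τ - v x τ| ≤ P + K + 1 := by
      have a1 := S.v_hi x
      have a2 := S.v_pos x
      rw [abs_le] at u3 ⊢
      constructor <;> linarith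
    gcongr
  have z0 : 0 ≤ K ^ 2 * A * D := by positivity
  have z1 : 0 ≤ A * D := by positivity
  have m1 := abs_mul_le_of_sq (D := (K ^ 2 * A + A) * D) (c3.trans (by linarith))
    (c2.trans (by linarith))
  have m2 := abs_mul_le_of_sq' (D := (K ^ 2 * A + 1) * D) (k := Sh μ R h (v · τ) (u · τ) (θ · τ) x / 2)
    (k' := Q / 2) (c3.trans (by linarith)) (show deriv (u · τ) x ^ 2 ≤ _ by linarith)
    (by rw [abs_div, abs_two]; linarith)
  have e : zh μ κ R c h (v · τ) (u · τ) (θ · τ) x = Sh μ R h (v · τ) (u · τ) (θ · τ) x *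
      (μ * Dq h (sgx μ R (v · τ) (u · τ) (θ · τ)) x
        - R * (tt μ κ R c (v · τ) (u · τ) (θ · τ) x - deriv (u · τ) x)) -
      Sh μ R h (v · τ) (u · τ) (θ · τ) x / 2 * (Sh μ R h (v · τ) (u · τ) (θ · τ) x *
        deriv (u · τ) x) := by
    unfold zh; ring
  rw [e]
  refine (abs_sub _ _).trans ?_
  linarith

theorem dzh (h x : ℝ) {t : ℝ} (ht : 0 ≤ t) :
    HasDerivAt (fun r => v x r * Sh μ R h (v · r) (u · r) (θ · r) x ^ 2 / 2)
      (zh μ κ R c h (v · t) (u · t) (θ · t) x) t := by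
  have d1 := H.dtv x t ht
  have d2 : HasDerivAt (fun r => μ * Dq h (u · r) x - R * (θ x r - v x r))
      (μ * Dq h (sgx μ R (v · t) (u · t) (θ · t)) x
        - R * (tt μ κ R c (v · t) (u · t) (θ · t) x - deriv (u · t) x)) t :=
    ((((H.dtu (x + h) t ht).sub (H.dtu x t ht)).div_const h).const_mul μ).sub
      (((H.dtθ x t ht).sub d1).const_mul R)
  have hv : v x t ≠ 0 := (H.sl t ht).v_ne x
  have d3 := (d1.mul ((d2.div d1 hv).pow 2)).div_const 2
  refine d3.congr_deriv ?_
  simp only [Pi.div_apply, Pi.pow_apply, zh, Sh]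
  generalize μ * Dq h (sgx μ R (v · t) (u · t) (θ · t)) x
    - R * (tt μ κ R c (v · t) (u · t) (θ · t) x - deriv (u · t) x) = a'
  generalize μ * Dq h (u · t) x - R * (θ x t - v x t) = a
  generalize deriv (u · t) x = b
  generalize v x t = w at hv
  norm_num
  field_simp
  ring

theorem Zh_energy (hK : 1 ≤ K) {h : ℝ} (hh : h ≠ 0) {s t : ℝ} (hs : 0 ≤ s) (hst : s ≤ t) :
    (∫ x, v x t * Sh μ R h (v · t) (u · t) (θ · t) x ^ 2 / 2 =
      (∫ x, v x s * Sh μ R h (v · s) (u · s) (θ · s) x ^ 2 / 2) +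
        ∫ τ in s..t, ∫ x, zh μ κ R c h (v · τ) (u · τ) (θ · τ) x) ∧
    IntervalIntegrable (fun τ => ∫ x, zh μ κ R c h (v · τ) (u · τ) (θ · τ) x) volume s t := by
  have hc : ∀ t, 0 ≤ t → Continuous fun x =>
      v x t * Sh μ R h (v · t) (u · t) (θ · t) x ^ 2 / 2 := fun t ht =>
    (((H.sl t ht).contv.mul (((H.sl t ht).cont_Sh μ R h).pow 2))).div_const 2
  have hg : ∀ t, 0 ≤ t → Integrable fun x =>
      v x t * Sh μ R h (v · t) (u · t) (θ · t) x ^ 2 / 2 := by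
    intro t ht
    have S := H.sl t ht
    refine ((int_mul (memLp_bdd_mul S.contv (S.cont_Sh μ R h) (S.mSh μ R h) K S.v_abs)
      (S.mSh μ R h)).div_const 2).congr (ae_of_all _ fun x => ?_)
    simp only; ring
  have hd := fun x τ (hτ : 0 ≤ τ) => H.dzh h x hτ
  have th : TM fun x τ => zh μ κ R c h (v · τ) (u · τ) (θ · τ) x :=
    (TM.of_cont hc fun x t ht => (hd x t ht).continuousAt).pdt hd
  obtain ⟨C, hC⟩ := H.zh_le hK hh (hs.trans hst)
  have hi : Integrable (Function.uncurry fun x τ => zh μ κ R c h (v · τ) (u · τ) (θ · τ) x)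
      (slab s t) := by
    refine (((H.dm_slab hs).add (H.dm_slab_shift h hs)).const_mul C).mono' (th.aesm hs) ?_
    filter_upwards [mem_slab s t] with z hz
    exact hC z.2 ⟨hs.trans hz.2.1, hz.2.2⟩ z.1
  exact ⟨slab_ftc hs hst hd hi (hg s hs) (hg t (hs.trans hst)), intervalIntegrable_of_slab hst hi⟩

/-- The energy identity for the effective flux, obtained from the regularised ones by letting the
step tend to zero. -/
theorem Z_energy (hK : 1 ≤ K) {s t : ℝ} (hs : 0 ≤ s) (hst : s ≤ t) :
    ((∫ x, v x t * sg μ R (v · t) (u · t) (θ · t) x ^ 2) / 2 =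
      (∫ x, v x s * sg μ R (v · s) (u · s) (θ · s) x ^ 2) / 2 +
        ∫ τ in s..t, zH μ κ R c (v · τ) (u · τ) (θ · τ)) ∧
    IntervalIntegrable (fun τ => zH μ κ R c (v · τ) (u · τ) (θ · τ)) volume s t := by
  set h : ℕ → ℝ := fun n => 1 / ((n : ℝ) + 1) with hh
  have h0 : ∀ n, h n ≠ 0 := fun n => by simp only [hh]; positivity
  have hl : Tendsto h atTop (nhds 0) := tendsto_one_div_add_atTop_nhds_zero_nat
  have ht := hs.trans hst
  obtain ⟨B, hB0, hB⟩ := H.bd t ht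
  obtain ⟨a, b, hab⟩ := zh_bound μ κ R c K B hB0
  have iφ : IntervalIntegrable (fun τ => a + b * (nsq (deriv (deriv fun x => u x τ))
      + nsq (deriv (deriv fun x => θ x τ)))) volume s t := by
    rw [intervalIntegrable_iff_integrableOn_Icc_of_le hst]
    exact (integrableOn_const (by simp)).add ((H.n2 s t hs).const_mul b)
  have E := fun n => H.Zh_energy hK (h0 n) hs hst
  have bnd : ∀ n, ∀ᵐ τ, τ ∈ uIoc s t → ‖∫ x, zh μ κ R c (h n) (v · τ) (u · τ) (θ · τ) x‖ ≤
      a + b * (nsq (deriv (deriv fun x => u x τ)) + nsq (deriv (deriv fun x => θ x τ))) := by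
    intro n
    filter_upwards [H.sl2] with τ h2 hτ
    rw [uIoc_of_le hst] at hτ
    have hτ0 : 0 ≤ τ := hs.trans hτ.1.le
    exact hab _ _ _ (h2 hτ0) (hB τ ⟨hτ0, hτ.2⟩) (h n) (h0 n)
  have lim : ∀ᵐ τ, τ ∈ uIoc s t → Tendsto (fun n => ∫ x, zh μ κ R c (h n) (v · τ) (u · τ) (θ · τ) x)
      atTop (nhds (zH μ κ R c (v · τ) (u · τ) (θ · τ))) := by
    filter_upwards [H.sl2] with τ h2 hτ
    rw [uIoc_of_le hst] at hτ
    exact (h2 (hs.trans hτ.1.le)).zh_tendsto μ κ R c h0 hl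
  have dct := intervalIntegral.tendsto_integral_filter_of_dominated_convergence
    (F := fun n τ => ∫ x, zh μ κ R c (h n) (v · τ) (u · τ) (θ · τ) x) _
    (Eventually.of_forall fun n => (E n).2.def'.aestronglyMeasurable)
    (Eventually.of_forall bnd) iφ lim
  have lt := ((H.sl t ht).Z_tendsto μ R h0 hl).div_const 2
  have ls := ((H.sl s hs).Z_tendsto μ R h0 hl).div_const 2
  refine ⟨tendsto_nhds_unique lt ((ls.add dct).congr fun n => ?_), ?_⟩
  · have := (E n).1
    rw [integral_div, integral_div] at this
    exact this.symm
  · have bnd' : ∀ᵐ τ ∂(volume.restrict (uIoc s t)), ‖zH μ κ R c (v · τ) (u · τ) (θ · τ)‖ ≤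
        a + b * (nsq (deriv (deriv fun x => u x τ)) + nsq (deriv (deriv fun x => θ x τ))) := by
      rw [ae_restrict_iff' measurableSet_uIoc]
      filter_upwards [lim, ae_all_iff.mpr bnd] with τ h1 h2 hτ
      exact le_of_tendsto (h1 hτ).norm (Eventually.of_forall fun n => h2 n hτ)
    have meas : AEStronglyMeasurable (fun τ => zH μ κ R c (v · τ) (u · τ) (θ · τ))
        (volume.restrict (uIoc s t)) :=
      aestronglyMeasurable_of_tendsto_ae atTop (fun n => (E n).2.def'.aestronglyMeasurable)
        ((ae_restrict_iff' measurableSet_uIoc).mpr lim)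
    rw [intervalIntegrable_iff] at iφ ⊢
    exact iφ.mono' meas bnd'

end Sol

/-! ### Uniform bound for the effective flux -/

/-- The dissipation inequality for the effective flux at a fixed time. The cubic term is absorbed
using `sup |σ|² ≤ ‖σ‖² + ‖σ_x‖²`. -/
theorem Z_slice {μ κ R c : ℝ} (hμ : 0 < μ) (hR : 0 < R) (hc : 0 < c) {K : ℝ} (hK : 1 ≤ K) :
    ∃ G : ℝ, 0 ≤ G ∧ ∀ v u θ : ℝ → ℝ, Sl2 K v u θ → ∀ Θ : ℝ, 0 ≤ Θ → (∀ x, θ x ≤ Θ) →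
      zH μ κ R c v u θ + μ / 2 * nsq (sgx μ R v u θ) ≤
        G * ((1 + Θ + nsq (deriv θ) + nsq (deriv u) + nsq (sg μ R v u θ)) *
          (nsq (sg μ R v u θ) + 1)) := by
  obtain ⟨a, ha⟩ : ∃ a, a = R / c + 1 / 2 := ⟨_, rfl⟩
  obtain ⟨b, hb⟩ : ∃ b, b = R ^ 2 / c + R := ⟨_, rfl⟩
  obtain ⟨k, hk⟩ : ∃ k, k = a * K / μ := ⟨_, rfl⟩
  obtain ⟨l, hl⟩ : ∃ l, l = R * κ / c := ⟨_, rfl⟩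
  have ha0 : 0 ≤ a := by rw [ha]; positivity
  have hb0 : 0 ≤ b := by rw [hb]; positivity
  have hK0 : 0 ≤ K := by linarith
  have hk0 : 0 ≤ k := by rw [hk]; positivity
  obtain ⟨g1, hg1⟩ : ∃ g, g = l ^ 2 / μ * K ^ 2 := ⟨_, rfl⟩
  obtain ⟨g2, hg2⟩ : ∃ g, g = μ / 4 + b / 2 + a * R / μ * K := ⟨_, rfl⟩
  obtain ⟨g3, hg3⟩ : ∃ g, g = k ^ 2 / μ := ⟨_, rfl⟩
  obtain ⟨g4, hg4⟩ : ∃ g, g = a * R / μ := ⟨_, rfl⟩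
  have h1 : 0 ≤ g1 := by rw [hg1]; positivity
  have h2 : 0 ≤ g2 := by rw [hg2]; positivity
  have h3 : 0 ≤ g3 := by rw [hg3]; positivity
  have h4 : 0 ≤ g4 := by rw [hg4]; positivity
  refine ⟨g1 + g2 + g3 + g4 + b / 2, by positivity, fun v u θ S Θ hΘ0 hΘ => ?_⟩
  have ms := S.msg μ R
  have msx := S.msgx μ R
  have mq := S.mq
  have mqx := S.mqx
  have mu := S.mu'
  have cub := S.sq_mul_int (S.cont_sg μ R) ms
  have I1 : (∫ x, sg μ R v u θ x * qx v θ x) = -∫ x, sgx μ R v u θ x * (deriv θ x / v x) :=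
    ibp (fun x => S.dsg μ R x) (fun x => S.dq x) ms msx mq mqx
  -- decomposition of the temperature term
  have I2 : (∫ x, sg μ R v u θ x * (tt μ κ R c v u θ x - deriv u x)) =
      κ / c * (∫ x, sg μ R v u θ x * qx v θ x) + 1 / c * (∫ x, deriv u x * sg μ R v u θ x ^ 2)
        - (R / c + 1) * (∫ x, sg μ R v u θ x * deriv u x) := by
    rw [← integral_const_mul, ← integral_const_mul, ← integral_const_mul,
      ← integral_add ((int_mul ms mqx).const_mul _) (cub.const_mul _),
      ← integral_sub (f := fun x => κ / c * (sg μ R v u θ x * qx v θ x)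
        + 1 / c * (deriv u x * sg μ R v u θ x ^ 2))
        (((int_mul ms mqx).const_mul _).add (cub.const_mul _)) ((int_mul ms mu).const_mul _)]
    refine integral_congr_ae (ae_of_all _ fun x => ?_)
    simp only [tt]
    field_simp
    ring
  have e : zH μ κ R c v u θ = -μ * nsq (sgx μ R v u θ)
      + l * (∫ x, sgx μ R v u θ x * (deriv θ x / v x))
      - a * (∫ x, deriv u x * sg μ R v u θ x ^ 2) + b * (∫ x, sg μ R v u θ x * deriv u x) := by
    unfold zH
    rw [I2, I1, ha, hb, hl]
    ring
  have nn := nsq_nonneg (sg μ R v u θ)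
  have np := nsq_nonneg (sgx μ R v u θ)
  have nw := nsq_nonneg (deriv θ)
  have nx := nsq_nonneg (deriv u)
  have t1 : l * (∫ x, sgx μ R v u θ x * (deriv θ x / v x)) ≤
      μ / 4 * nsq (sgx μ R v u θ) + g1 * nsq (deriv θ) := by
    rw [nsq, nsq, ← integral_const_mul, ← integral_const_mul, ← integral_const_mul,
      ← integral_add (msx.integrable_sq.const_mul _) (S.mθ'.integrable_sq.const_mul _)]
    refine integral_mono ((int_mul msx mq).const_mul _)
      ((msx.integrable_sq.const_mul _).add (S.mθ'.integrable_sq.const_mul _)) fun x => ?_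
    have q : (deriv θ x / v x) ^ 2 ≤ K ^ 2 * deriv θ x ^ 2 := by
      rw [div_eq_inv_mul, mul_pow]
      have i0 : 0 < (v x)⁻¹ := inv_pos.mpr (S.v_pos x)
      have i1 := S.inv_v x
      gcongr
    have q' := mul_le_mul_of_nonneg_left q (show 0 ≤ l ^ 2 / μ by positivity)
    simp only
    generalize deriv θ x / v x = z at *
    generalize sgx μ R v u θ x = y
    have sq : μ / 4 * y ^ 2 + l ^ 2 / μ * z ^ 2 - l * (y * z) =
        μ / 4 * (y - 2 * l * z / μ) ^ 2 := by field_simp; ring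
    have : 0 ≤ μ / 4 * (y - 2 * l * z / μ) ^ 2 := by positivity
    rw [hg1]
    linarith
  obtain ⟨M, hM⟩ : ∃ M, M = √(nsq (sg μ R v u θ) + nsq (sgx μ R v u θ)) := ⟨_, rfl⟩
  have hM2 : M ^ 2 = nsq (sg μ R v u θ) + nsq (sgx μ R v u θ) := by
    rw [hM]; exact Real.sq_sqrt (by positivity)
  have hM0 : 0 ≤ M := by rw [hM]; positivity
  have hsup : ∀ x, |sg μ R v u θ x| ≤ M := fun x => by
    rw [hM]
    exact Real.abs_le_sqrt (sq_le_of_memLp (fun x => S.dsg μ R x) ms msx x)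
  have t2 : -(a * (∫ x, deriv u x * sg μ R v u θ x ^ 2)) ≤
      (k * M + g4 * (Θ + K)) * nsq (sg μ R v u θ) := by
    rw [nsq, ← integral_const_mul, ← integral_const_mul, ← integral_neg]
    refine integral_mono (cub.const_mul _).neg (ms.integrable_sq.const_mul _) fun x => ?_
    have w1 := S.v_pos x
    have w2 := S.v_hi x
    have w3 := S.θ_pos x
    have hU : -deriv u x ≤ (K * M + R * (Θ + K)) / μ := by
      have hs : sg μ R v u θ x * v x = μ * deriv u x - R * (θ x - v x) := by
        unfold sg; field_simp
      have hv : -(sg μ R v u θ x * v x) ≤ K * M := by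
        refine (neg_le_abs _).trans ?_
        rw [abs_mul, abs_of_pos w1, mul_comm]
        exact mul_le_mul w2 (hsup x) (abs_nonneg _) hK0
      rw [le_div_iff₀ hμ]
      have r1 : 0 ≤ R * Θ := by positivity
      have r2 : 0 ≤ R * θ x := by positivity
      have r3 : R * v x ≤ R * K := by gcongr
      linarith
    have := mul_le_mul_of_nonneg_left hU (show 0 ≤ a * sg μ R v u θ x ^ 2 by positivity)
    have e' : a * sg μ R v u θ x ^ 2 * ((K * M + R * (Θ + K)) / μ) =
      (k * M + g4 * (Θ + K)) * sg μ R v u θ x ^ 2 := by rw [hk, hg4]; ring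
    simp only
    linarith
  have t3 : b * (∫ x, sg μ R v u θ x * deriv u x) ≤
      b / 2 * (nsq (sg μ R v u θ) + nsq (deriv u)) := by
    have := mul_le_mul_of_nonneg_left ((le_abs_self _).trans (abs_int_mul_le ms mu)) hb0
    linarith
  have t4 : k * M * nsq (sg μ R v u θ) ≤ μ / 4 * M ^ 2 + g3 * nsq (sg μ R v u θ) ^ 2 := by
    generalize nsq (sg μ R v u θ) = n at *
    have : μ / 4 * M ^ 2 + g3 * n ^ 2 - k * M * n = μ / 4 * (M - 2 * k * n / μ) ^ 2 := by
      rw [hg3]; field_simp; ring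
    have : 0 ≤ μ / 4 * (M - 2 * k * n / μ) ^ 2 := by positivity
    linarith
  rw [hM2] at t4
  rw [e]
  clear e I1 I2
  generalize nsq (sg μ R v u θ) = n at *
  generalize nsq (sgx μ R v u θ) = p at *
  generalize nsq (deriv θ) = w at *
  generalize nsq (deriv u) = X at *
  obtain ⟨E, hE⟩ : ∃ E, E = (1 + Θ + w + X + n) * (n + 1) := ⟨_, rfl⟩
  rw [← hE]
  have p1 : 0 ≤ Θ * n := by positivity
  have p2 : 0 ≤ w * n := by positivity
  have p3 : 0 ≤ X * n := by positivity
  have p4 : 0 ≤ n ^ 2 := by positivity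
  have E1 := mul_le_mul_of_nonneg_left (show w ≤ E by rw [hE]; linarith) h1
  have E2 := mul_le_mul_of_nonneg_left (show n ≤ E by rw [hE]; linarith) h2
  have E3 := mul_le_mul_of_nonneg_left (show n ^ 2 ≤ E by rw [hE]; linarith) h3
  have E4 := mul_le_mul_of_nonneg_left (show Θ * n ≤ E by rw [hE]; linarith) h4
  have E5 := mul_le_mul_of_nonneg_left (show X ≤ E by rw [hE]; linarith)
    (show 0 ≤ b / 2 by positivity)
  have e2 : g2 * n = μ / 4 * n + b / 2 * n + g4 * K * n := by rw [hg2, hg4]; ring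
  linarith


theorem Sol.nsq_sgx_intervalIntegrable {μ κ R c K : ℝ} {v u θ : ℝ → ℝ → ℝ}
    (H : Sol μ κ R c K v u θ) {s t : ℝ} (hs : 0 ≤ s) (hst : s ≤ t) :
    IntervalIntegrable (fun τ => nsq (sgx μ R (v · τ) (u · τ) (θ · τ))) volume s t := by
  refine H.intervalIntegrable (F := fun x t => sgx μ R (v · t) (u · t) (θ · t) x ^ 2)
    (H.tsgx.pow_const 2) hs hst 1 fun τ hτ x => ?_
  rw [abs_of_nonneg (sq_nonneg _), one_mul]
  exact (dm_ge μ κ R c (v · τ) (u · τ) (θ · τ) x).2.2.2.2.2.2.1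

/-- The uniform `L²` bound on the effective flux, with its dissipation on unit windows. The
hypotheses on the solution are the conclusions of `entropy_bounds` and `energy_bounds`. -/
theorem flux_bounds {μ κ R c K : ℝ} (hμ : 0 < μ) (hR : 0 < R) (hc : 0 < c)
    (hK : 1 ≤ K) {B C0 Ce : ℝ} (hB : 0 ≤ B) (hC0 : 0 ≤ C0) (hCe : 0 ≤ Ce) : ∃ C : ℝ, 0 ≤ C ∧
    ∀ v u θ : ℝ → ℝ → ℝ, Sol μ κ R c K v u θ → Bd B (v · 0) (u · 0) (θ · 0) →
    (∀ t, 0 ≤ t → nsq (u · t) ≤ C0 ∧ nsq (fun x => v x t - 1) ≤ C0 ∧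
      ∫ x, (θ x t - 1) ^ 2 / (θ x t + 3) ≤ C0 ∧ ∫ τ in (0 : ℝ)..t, Dh (u · τ) (θ · τ) ≤ C0) →
    (∀ t, 0 ≤ t → nsq (fun x => θ x t - 1) ≤ Ce ∧
      ∫ τ in t..(t + 1), (nsq (deriv (θ · τ)) + nsq (deriv (u · τ))) ≤ Ce) →
    ∀ t, 0 ≤ t → nsq (sg μ R (v · t) (u · t) (θ · t)) ≤ C ∧
      ∫ τ in t..(t + 1), nsq (sgx μ R (v · τ) (u · τ) (θ · τ)) ≤ C := by
  obtain ⟨G, hG, hsl⟩ := Z_slice (κ := κ) hμ hR hc hK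
  obtain ⟨C1, hC1, hsup⟩ := sup_bounds hC0
  have hK0 : 0 ≤ K := by linarith
  obtain ⟨q, hq⟩ : ∃ q, q = K ^ 2 * (2 * μ ^ 2 + 4 * R ^ 2 * (Ce + C0)) := ⟨_, rfl⟩
  have hq0 : 0 ≤ q := by rw [hq]; positivity
  obtain ⟨G', hG'⟩ : ∃ G', G' = G * ((1 + C1 + q) * (2 * K)) := ⟨_, rfl⟩
  have hG'0 : 0 ≤ G' := by rw [hG']; positivity
  obtain ⟨C2, hgr⟩ := uniform_gronwall (K * q / 2 * (1 + B) + K * q / 2 * (1 + Ce)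
    + G' * (1 + C0 + Ce))
  have l1 : 0 ≤ K * q / 2 * (1 + B) := by positivity
  have l2 : 0 ≤ K * q / 2 * (1 + Ce) := by positivity
  have l3 : 0 ≤ G' * (1 + C0 + Ce) := by positivity
  refine ⟨2 * K * |C2| + 2 / μ * |C2|, by positivity, ?_⟩
  intro v u θ H hb hE hF t ht
  have hD : ∀ t, 0 ≤ t → 0 ≤ Dh (u · t) (θ · t) := fun t ht => (H.sl t ht).Dh_nonneg
  have vint : ∀ t, 0 ≤ t → Integrable fun x => v x t * sg μ R (v · t) (u · t) (θ · t) x ^ 2 := by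
    intro t ht
    have S := H.sl t ht
    refine (int_mul (memLp_bdd_mul S.contv (S.cont_sg μ R) (S.msg μ R) K S.v_abs)
      (S.msg μ R)).congr (ae_of_all _ fun x => ?_)
    simp only; ring
  -- the weighted and unweighted norms of the effective flux are equivalent
  have hN : ∀ t, 0 ≤ t → nsq (sg μ R (v · t) (u · t) (θ · t)) ≤
      2 * K * ((∫ x, v x t * sg μ R (v · t) (u · t) (θ · t) x ^ 2) / 2) := by
    intro t ht
    have S := H.sl t ht
    have : nsq (sg μ R (v · t) (u · t) (θ · t)) ≤
        K * ∫ x, v x t * sg μ R (v · t) (u · t) (θ · t) x ^ 2 := by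
      rw [← integral_const_mul]
      refine nsq_le_of_le (S.msg μ R) ((vint t ht).const_mul K) fun x => ?_
      have h1 := S.v_lo x
      have h2 : 1 ≤ K * v x t := by
        have := mul_le_mul_of_nonneg_left h1 hK0
        rwa [mul_inv_cancel₀ (by linarith)] at this
      rw [← mul_assoc]
      exact le_mul_of_one_le_left (sq_nonneg _) h2
    linarith
  have hZN : ∀ t, 0 ≤ t → (∫ x, v x t * sg μ R (v · t) (u · t) (θ · t) x ^ 2) / 2 ≤
      K / 2 * nsq (sg μ R (v · t) (u · t) (θ · t)) := by
    intro t ht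
    have S := H.sl t ht
    have : (∫ x, v x t * sg μ R (v · t) (u · t) (θ · t) x ^ 2) ≤
        K * nsq (sg μ R (v · t) (u · t) (θ · t)) := by
      rw [nsq, ← integral_const_mul]
      exact integral_mono (vint t ht) ((S.msg μ R).integrable_sq.const_mul K) fun x =>
        mul_le_mul_of_nonneg_right (S.v_hi x) (sq_nonneg _)
    linarith
  have hNX : ∀ t, 0 ≤ t → nsq (sg μ R (v · t) (u · t) (θ · t)) ≤
      q * (1 + nsq (deriv (u · t))) := by
    intro t ht
    have S := H.sl t ht
    refine (S.nsq_sg μ R).trans ?_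
    have n1 := S.nsq_θ_sub_v
    have n2 := (hF t ht).1
    have n3 := (hE t ht).2.1
    have n4 : nsq (fun x => θ x t - v x t) ≤ 2 * (Ce + C0) := by linarith
    have n5 := mul_le_mul_of_nonneg_left n4 (show 0 ≤ 2 * R ^ 2 by positivity)
    have n6 := nsq_nonneg (deriv (u · t))
    have n7 : 0 ≤ 4 * R ^ 2 * (Ce + C0) * nsq (deriv (u · t)) := by positivity
    rw [hq, mul_assoc (K ^ 2)]
    refine mul_le_mul_of_nonneg_left ?_ (sq_nonneg K)
    have : 0 ≤ 2 * μ ^ 2 := by positivity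
    linarith
  have hZX : ∀ t, 0 ≤ t → (∫ x, v x t * sg μ R (v · t) (u · t) (θ · t) x ^ 2) / 2 ≤
      K * q / 2 * (1 + nsq (deriv (u · t))) := by
    intro t ht
    have := mul_le_mul_of_nonneg_left (hNX t ht) (show 0 ≤ K / 2 by positivity)
    linarith [hZN t ht]
  have hw : ∀ t, 0 ≤ t → ∫ τ in (0 : ℝ)..t, Dh (u · τ) (θ · τ) ≤ C0 := fun t ht =>
    (hE t ht).2.2.2
  have iWX : ∀ s t, 0 ≤ s → s ≤ t → IntervalIntegrable (fun τ => nsq (deriv (θ · τ)) +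
      nsq (deriv (u · τ))) volume s t := fun s t hs hst =>
    (H.nsq_θ'_intervalIntegrable hs hst).add (H.nsq_u'_intervalIntegrable hs hst)
  have i1D : ∀ s t, 0 ≤ s → s ≤ t → IntervalIntegrable (fun τ => 1 + Dh (u · τ) (θ · τ))
      volume s t := fun s t hs hst =>
    IntervalIntegrable.add (by simp) (H.Dh_intervalIntegrable hs hst)
  have hWX : ∀ τ, 0 ≤ nsq (deriv (θ · τ)) + nsq (deriv (u · τ)) := fun τ =>
    add_nonneg (nsq_nonneg _) (nsq_nonneg _)
  have hZ0 : ∀ t, 0 ≤ t → 0 ≤ (∫ x, v x t * sg μ R (v · t) (u · t) (θ · t) x ^ 2) / 2 :=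
    fun t ht => div_nonneg (integral_nonneg fun x =>
      mul_nonneg ((H.sl t ht).v_pos x).le (sq_nonneg _)) zero_le_two
  have key := hgr (fun t => (∫ x, v x t * sg μ R (v · t) (u · t) (θ · t) x ^ 2) / 2)
    (fun τ => zH μ κ R c (v · τ) (u · τ) (θ · τ))
    (fun τ => G' * ((1 + Dh (u · τ) (θ · τ)) + (nsq (deriv (θ · τ)) + nsq (deriv (u · τ)))))
    (fun τ => μ / 2 * nsq (sgx μ R (v · τ) (u · τ) (θ · τ)))
    hZ0
    (fun t ht => mul_nonneg hG'0 (by linarith [hD t ht, hWX t]))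
    (fun s t hs hst => (H.Z_energy hK hs hst).1)
    (fun s t hs hst => (H.Z_energy hK hs hst).2)
    (fun s t hs hst => ((i1D s t hs hst).add (iWX s t hs hst)).const_mul _)
    (fun s t hs hst => (H.nsq_sgx_intervalIntegrable hs hst).const_mul _)
    (ae_of_all _ fun t ht => mul_nonneg (by positivity) (nsq_nonneg _))
    ?_ ?_ ?_ ?_ t ht
  · obtain ⟨k1, k2⟩ := key
    have n0 : 0 ≤ 2 / μ * |C2| := by positivity
    have n1 : 0 ≤ 2 * K * |C2| := by positivity
    refine ⟨?_, ?_⟩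
    · have := mul_le_mul_of_nonneg_left (k1.trans (le_abs_self C2))
        (show 0 ≤ 2 * K by positivity)
      linarith [hN t ht]
    · rw [intervalIntegral.integral_const_mul] at k2
      have := mul_le_mul_of_nonneg_left (k2.trans (le_abs_self C2))
        (show 0 ≤ 2 / μ by positivity)
      rw [← mul_assoc, show 2 / μ * (μ / 2) = 1 by field_simp, one_mul] at this
      linarith
  · filter_upwards [H.sl2] with t h2 ht
    have S := h2 ht
    obtain ⟨s1, -, -⟩ := hsup K _ _ _ S.toSl (hE t ht).1 (hE t ht).2.2.1
    have hd := hD t ht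
    refine (hsl _ _ _ S _ (by positivity) s1).trans ?_
    have a1 := hN t ht
    have a2 := hNX t ht
    have a3 := hZ0 t ht
    have n1 := nsq_nonneg (deriv (u · t))
    have n2 := nsq_nonneg (deriv (θ · t))
    have n3 := nsq_nonneg (sg μ R (v · t) (u · t) (θ · t))
    generalize nsq (sg μ R (v · t) (u · t) (θ · t)) = n at *
    generalize nsq (deriv (u · t)) = X at *
    generalize nsq (deriv (θ · t)) = w at *
    generalize Dh (u · t) (θ · t) = D at *
    generalize (∫ x, v x t * sg μ R (v · t) (u · t) (θ · t) x ^ 2) / 2 = Z at *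
    have p1 : 0 ≤ C1 * (w + X) := by positivity
    have p2 : 0 ≤ q * (D + w) := by positivity
    have b1 : 1 + C1 * (1 + D) + w + X + n ≤ (1 + C1 + q) * ((1 + D) + (w + X)) := by linarith
    have b2 : n + 1 ≤ 2 * K * (Z + 1) := by linarith
    rw [hG']
    calc _ ≤ G * (((1 + C1 + q) * ((1 + D) + (w + X))) * (2 * K * (Z + 1))) := by gcongr
      _ = _ := by ring
  · have := hZX 0 le_rfl
    have : K * q / 2 * (1 + nsq (deriv (u · 0))) ≤ K * q / 2 * (1 + B) := by
      gcongr
      exact hb.bu'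
    linarith
  · intro s hs
    have hq2 : 0 ≤ K * q / 2 := by positivity
    have h1 : s ≤ s + 1 := by linarith
    have i := (IntervalIntegrable.add (f := fun _ => (1 : ℝ)) (by simp)
      (iWX s (s + 1) hs h1))
    refine (interval_mono h1 (i.const_mul (K * q / 2))
      (fun τ hτ => mul_nonneg hq2 (by linarith [hWX τ]))
      fun τ hτ => (hZX τ (hs.trans hτ.1)).trans ?_).trans ?_
    · refine mul_le_mul_of_nonneg_left ?_ hq2
      linarith [nsq_nonneg (deriv (θ · τ))]
    · rw [intervalIntegral.integral_const_mul, intervalIntegral.integral_add (by simp)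
        (iWX s (s + 1) hs h1)]
      simp only [intervalIntegral.integral_const, smul_eq_mul]
      have := mul_le_mul_of_nonneg_left (hF s hs).2 hq2
      linarith
  · intro s hs
    have h1 : s ≤ s + 1 := by linarith
    rw [intervalIntegral.integral_const_mul, intervalIntegral.integral_add (i1D s _ hs h1)
      (iWX s (s + 1) hs h1)]
    have := H.window_one_add zero_le_one hw hs
    simp only [one_mul] at this
    have := mul_le_mul_of_nonneg_left (add_le_add this (hF s hs).2) hG'0
    linarith

/-! ### High powers of the temperature deviation -/

theorem pow_odd_le (n : ℕ) (w : ℝ) :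
    |w| ^ (2 * n + 3) * (1 + |w|) ≤ 2 * (w ^ (2 * n + 4) + w ^ 2) := by
  have e1 : w ^ (2 * n + 4) = |w| ^ (2 * n + 4) :=
    (Even.pow_abs ⟨n + 2, by ring⟩ w).symm
  rw [e1, ← sq_abs w]
  have h0 := abs_nonneg w
  generalize |w| = a at *
  have h2 : 0 ≤ a ^ 2 := by positivity
  have h4 : 0 ≤ a ^ (2 * n + 4) := by positivity
  have h : a ^ (2 * n + 3) ≤ a ^ (2 * n + 4) + a ^ 2 := by
    rcases le_total a 1 with ha | ha
    · have := pow_le_pow_of_le_one h0 ha (show 2 ≤ 2 * n + 3 by omega)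
      linarith
    · have := pow_le_pow_right₀ ha (show 2 * n + 3 ≤ 2 * n + 4 by omega)
      linarith
  have e : a ^ (2 * n + 3) * (1 + a) = a ^ (2 * n + 3) + a ^ (2 * n + 4) := by ring
  linarith

/-- The heating term is at most linear in the temperature, with a coefficient controlled by the
supremum of the effective flux. -/
theorem heat_le {μ R K : ℝ} (hμ : 0 < μ) (hR : 0 < R) (hK : 1 ≤ K) {v u θ : ℝ → ℝ}
    (S : Sl K v u θ) {Q x : ℝ} (hQ : sg μ R v u θ x ^ 2 ≤ Q) :
    |(sg μ R v u θ x - R) * deriv u x| ≤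
      2 * (2 + K) * (1 + R ^ 2) / μ * (1 + Q) * (1 + |θ x - 1|) := by
  have w1 := S.v_pos x
  have w2 := S.v_hi x
  have hU : deriv u x = (v x * sg μ R v u θ x + R * ((θ x - 1) + (1 - v x))) / μ := by
    unfold sg; field_simp; ring
  have hs2 : |sg μ R v u θ x| ^ 2 ≤ Q := by rwa [sq_abs]
  rw [hU]
  generalize sg μ R v u θ x = s at *
  generalize θ x - 1 = w
  have hs0 := abs_nonneg s
  have hw0 := abs_nonneg w
  rw [abs_mul, abs_div, abs_of_pos hμ]
  have a1 : |s - R| ≤ |s| + R := (abs_sub _ _).trans (by rw [abs_of_pos hR])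
  have a2 : |v x * s + R * (w + (1 - v x))| ≤ (2 + K) * (|s| + R) * (1 + |w|) := by
    have b1 : |v x * s| ≤ K * |s| := by
      rw [abs_mul, abs_of_pos w1]; gcongr
    have b2 : |w + (1 - v x)| ≤ |w| + (1 + K) :=
      (abs_add_le _ _).trans (by
        have : |1 - v x| ≤ 1 + K := abs_le.mpr ⟨by linarith, by linarith⟩
        linarith)
    have b3 : |R * (w + (1 - v x))| ≤ R * (|w| + (1 + K)) := by
      rw [abs_mul, abs_of_pos hR]; gcongr
    refine (abs_add_le _ _).trans ((add_le_add b1 b3).trans ?_)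
    have c1 : 0 ≤ (2 + K) * |s| * |w| := by positivity
    have c2 : 0 ≤ (1 + K) * R * |w| := by positivity
    linarith
  have a3 : (|s| + R) ^ 2 ≤ 2 * ((1 + R ^ 2) * (1 + Q)) := by
    have c1 := sq_nonneg (|s| - R)
    have c2 : 0 ≤ R ^ 2 * Q := by have := (sq_nonneg _).trans hs2; positivity
    linarith
  calc _ ≤ (|s| + R) * ((2 + K) * (|s| + R) * (1 + |w|) / μ) := by gcongr
    _ = (2 + K) / μ * (1 + |w|) * (|s| + R) ^ 2 := by ring
    _ ≤ (2 + K) / μ * (1 + |w|) * (2 * ((1 + R ^ 2) * (1 + Q))) := by gcongr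
    _ = _ := by ring

/-- The growth rate of the integral of an even power of `θ - 1`. Heat conduction has a favourable
sign, and the heating contributes a rate linear in the exponent. -/
theorem power_slice {μ κ R c K : ℝ} (hμ : 0 < μ) (hκ : 0 < κ) (hR : 0 < R) (hc : 0 < c)
    (hK : 1 ≤ K) {v u θ : ℝ → ℝ} (S : Sl2 K v u θ) {Q : ℝ}
    (hQ : ∀ x, sg μ R v u θ x ^ 2 ≤ Q) (n : ℕ) :
    (∫ x, ((2 * n + 4 : ℕ) : ℝ) * (θ x - 1) ^ (2 * n + 3) * tt μ κ R c v u θ x) ≤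
      (2 * n + 4 : ℕ) * (4 * (2 + K) * (1 + R ^ 2) / (μ * c) * (1 + Q)) *
        ((∫ x, (θ x - 1) ^ (2 * n + 4)) + nsq fun x => θ x - 1) := by
  obtain ⟨P, hP0, hP⟩ := S.θ_abs
  obtain ⟨p, hp⟩ : ∃ p : ℝ, p = ((2 * n + 4 : ℕ) : ℝ) := ⟨_, rfl⟩
  have hp0 : 0 ≤ p := by rw [hp]; positivity
  rw [← hp]
  have cw : Continuous fun x => (θ x - 1) ^ (2 * n + 2) := (S.contθ.sub continuous_const).pow _
  have bw : ∀ x, |(θ x - 1) ^ (2 * n + 2)| ≤ P ^ (2 * n + 2) := fun x => by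
    rw [abs_pow]; exact pow_le_pow_left₀ (abs_nonneg _) (hP x) _
  have m1 : MemLp (fun x => (θ x - 1) ^ (2 * n + 2) * (θ x - 1)) 2 volume :=
    memLp_bdd_mul cw (S.contθ.sub continuous_const) S.mθ _ bw
  have m2 : MemLp (fun x => (θ x - 1) ^ (2 * n + 2) * deriv θ x) 2 volume :=
    memLp_bdd_mul cw S.contθ' S.mθ' _ bw
  have ih : Integrable fun x => p * (θ x - 1) ^ (2 * n + 3) * tt μ κ R c v u θ x :=
    ((int_mul m1 (S.mtt μ κ R c)).const_mul p).congr (ae_of_all _ fun x => by simp only; ring)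
  have i1 : Integrable fun x => (θ x - 1) ^ (2 * n + 4) :=
    (int_mul m1 S.mθ).congr (ae_of_all _ fun x => by simp only; ring)
  have i2 := S.mθ.integrable_sq
  rw [nsq, ← integral_add i1 i2, ← integral_const_mul]
  refine int_le_of_flux ih ((i1.add i2).const_mul _)
    (F := fun x => p * κ / c * (((θ x - 1) ^ (2 * n + 3)) * (deriv θ x / v x)))
    (F' := fun x => p * κ / c * (((θ x - 1) ^ (2 * n + 2) * (θ x - 1)) * qx v θ x +
      (2 * n + 3 : ℕ) * (((θ x - 1) ^ (2 * n + 2) * deriv θ x) * (deriv θ x / v x)))) ?_ ?_ ?_ ?_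
  · exact ((int_mul m1 S.mq).const_mul (p * κ / c)).congr (ae_of_all _ fun x => by simp only; ring)
  · exact ((int_mul m1 S.mqx).add ((int_mul m2 S.mq).const_mul _)).const_mul _
  · intro x
    have d := ((((S.dθ x).sub_const 1).pow (2 * n + 3)).mul (S.dq x)).const_mul (p * κ / c)
    refine d.congr_deriv ?_
    simp only [Pi.pow_apply, show 2 * n + 3 - 1 = 2 * n + 2 by omega]
    ring
  · intro x
    have hs := heat_le hμ hR hK S.toSl (hQ x)
    have ho := pow_odd_le n (θ x - 1)
    have hQ0 : 0 ≤ Q := (sq_nonneg _).trans (hQ x)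
    have q0 : 0 ≤ p * κ / c * ((2 * n + 3 : ℕ) *
        (((θ x - 1) ^ (2 * n + 2) * deriv θ x) * (deriv θ x / v x))) := by
      have : 0 ≤ (θ x - 1) ^ (2 * n + 2) := Even.pow_nonneg ⟨n + 1, by ring⟩ _
      have hv := S.v_pos x
      have e : ((θ x - 1) ^ (2 * n + 2) * deriv θ x) * (deriv θ x / v x) =
        (θ x - 1) ^ (2 * n + 2) * (deriv θ x ^ 2 / v x) := by ring
      rw [e]
      positivity
    have e1 : p * (θ x - 1) ^ (2 * n + 3) * tt μ κ R c v u θ x =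
        p * κ / c * (((θ x - 1) ^ (2 * n + 2) * (θ x - 1)) * qx v θ x) +
        p / c * ((θ x - 1) ^ (2 * n + 3) * ((sg μ R v u θ x - R) * deriv u x)) := by
      unfold tt; ring
    set b := 2 * (2 + K) * (1 + R ^ 2) / μ * (1 + Q) with hb
    have hb0 : 0 ≤ b := by positivity
    have e2 : (θ x - 1) ^ (2 * n + 3) * ((sg μ R v u θ x - R) * deriv u x) ≤
        b * (2 * ((θ x - 1) ^ (2 * n + 4) + (θ x - 1) ^ 2)) := by
      refine (le_abs_self _).trans ?_
      rw [abs_mul, abs_pow]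
      calc _ ≤ |θ x - 1| ^ (2 * n + 3) * (b * (1 + |θ x - 1|)) := by gcongr
        _ = b * (|θ x - 1| ^ (2 * n + 3) * (1 + |θ x - 1|)) := by ring
        _ ≤ _ := by gcongr
    have e3 := mul_le_mul_of_nonneg_left e2 (show 0 ≤ p / c by positivity)
    have e4 : p / c * (b * (2 * ((θ x - 1) ^ (2 * n + 4) + (θ x - 1) ^ 2))) =
        p * (4 * (2 + K) * (1 + R ^ 2) / (μ * c) * (1 + Q)) *
          ((θ x - 1) ^ (2 * n + 4) + (θ x - 1) ^ 2) := by
      rw [hb]; field_simp; ring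
    rw [e1]
    linarith

theorem Sol.power_energy {μ κ R c K : ℝ} {v u θ : ℝ → ℝ → ℝ}
    (H : Sol μ κ R c K v u θ) (n : ℕ) {s t : ℝ} (hs : 0 ≤ s) (hst : s ≤ t) :
    (∫ x, (θ x t - 1) ^ (2 * n + 4) = (∫ x, (θ x s - 1) ^ (2 * n + 4)) + ∫ τ in s..t,
      ∫ x, ((2 * n + 4 : ℕ) : ℝ) * (θ x τ - 1) ^ (2 * n + 3) *
        tt μ κ R c (v · τ) (u · τ) (θ · τ) x) ∧
    IntervalIntegrable (fun τ => ∫ x, ((2 * n + 4 : ℕ) : ℝ) * (θ x τ - 1) ^ (2 * n + 3) *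
        tt μ κ R c (v · τ) (u · τ) (θ · τ) x) volume s t := by
  have bw : ∀ {w P : ℝ}, |w| ≤ P → |w ^ (2 * n + 2)| ≤ P ^ (2 * n + 2) := fun h => by
    rw [abs_pow]; exact pow_le_pow_left₀ (abs_nonneg _) h _
  refine H.energy (g := fun x t => (θ x t - 1) ^ (2 * n + 4)) (h := fun x τ =>
    ((2 * n + 4 : ℕ) : ℝ) * (θ x τ - 1) ^ (2 * n + 3) * tt μ κ R c (v · τ) (u · τ) (θ · τ) x)
    (fun t ht => ((H.sl t ht).contθ.sub continuous_const).pow _)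
    (fun x t ht => ((H.dtθ x t ht).sub_const 1).pow (2 * n + 4)) ?_ ?_ hs hst
  · intro t ht
    obtain ⟨P, -, hP⟩ := (H.sl t ht).θ_abs
    refine ⟨P ^ (2 * n + 2), fun x => ?_⟩
    have e := (d0_ge (v · t) (u · t) (θ · t) x).2.2.1
    rw [show (θ x t - 1) ^ (2 * n + 4) = (θ x t - 1) ^ (2 * n + 2) * ((θ x t - 1) * (θ x t - 1)) by
      ring]
    exact abs_mul_le_of_sq' e e (bw (hP x))
  · intro T hT
    obtain ⟨P, hP0, hP⟩ := H.abs_bounds hT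
    refine ⟨((2 * n + 4 : ℕ) : ℝ) * P ^ (2 * n + 2), fun τ hτ x => ?_⟩
    obtain ⟨-, -, e, -, -, -, -, -, e'⟩ := dm_ge μ κ R c (v · τ) (u · τ) (θ · τ) x
    rw [show ((2 * n + 4 : ℕ) : ℝ) * (θ x τ - 1) ^ (2 * n + 3) *
      tt μ κ R c (v · τ) (u · τ) (θ · τ) x = (((2 * n + 4 : ℕ) : ℝ) * (θ x τ - 1) ^ (2 * n + 2)) *
        ((θ x τ - 1) * tt μ κ R c (v · τ) (u · τ) (θ · τ) x) by ring]
    refine abs_mul_le_of_sq' e e' ?_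
    rw [abs_mul, Nat.abs_cast]
    exact mul_le_mul_of_nonneg_left (bw (hP τ hτ x).2) (by positivity)

/-- A continuous function whose even power integrals grow at most like `A Q ^ p` is bounded
by `Q`. -/
theorem le_of_power_integrals {f : ℝ → ℝ} (hf : Continuous f) {A Q : ℝ} (hQ : 0 < Q)
    (hi : ∀ n : ℕ, Integrable fun x => f x ^ (2 * n + 4))
    (h : ∀ n : ℕ, ∫ x, f x ^ (2 * n + 4) ≤ A * Q ^ (2 * n + 4)) (x : ℝ) : f x ≤ Q := by
  by_contra! hx
  obtain ⟨q, hq1, hq2⟩ := exists_between hx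
  have hq0 : 0 < q := hQ.trans hq1
  obtain ⟨δ, hδ, hball⟩ := Metric.isOpen_iff.mp (isOpen_lt continuous_const hf) x hq2
  have key : ∀ n : ℕ, 2 * δ ≤ A * ((Q / q) ^ 2) ^ (n + 2) := by
    intro n
    have h1 : 2 * δ * q ^ (2 * n + 4) ≤ ∫ y in Metric.ball x δ, f y ^ (2 * n + 4) := by
      have e : ∫ y in Metric.ball x δ, q ^ (2 * n + 4) = 2 * δ * q ^ (2 * n + 4) := by
        rw [setIntegral_const, smul_eq_mul, Measure.real, Real.volume_ball,
          ENNReal.toReal_ofReal (by positivity)]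
      rw [← e]
      refine setIntegral_mono_on (integrableOn_const measure_ball_lt_top.ne)
        (hi n).integrableOn measurableSet_ball fun y hy => ?_
      exact pow_le_pow_left₀ hq0.le (hball hy).le _
    have h2 : ∫ y in Metric.ball x δ, f y ^ (2 * n + 4) ≤ ∫ y, f y ^ (2 * n + 4) :=
      setIntegral_le_integral (hi n) (ae_of_all _ fun y => Even.pow_nonneg ⟨n + 2, by ring⟩ _)
    have h3 := (h1.trans h2).trans (h n)
    rw [← le_div_iff₀ (by positivity)] at h3
    refine h3.trans (le_of_eq ?_)
    rw [← pow_mul, div_pow, mul_div_assoc, show 2 * (n + 2) = 2 * n + 4 by ring]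
  have hr : (Q / q) ^ 2 < 1 := by
    have : Q / q < 1 := (div_lt_one hq0).mpr hq1
    exact pow_lt_one₀ (by positivity) this two_ne_zero
  have lim : Tendsto (fun n : ℕ => A * ((Q / q) ^ 2) ^ (n + 2)) atTop (nhds (A * 0)) :=
    ((tendsto_pow_atTop_nhds_zero_of_lt_one (by positivity) hr).comp
      (tendsto_add_atTop_nat 2)).const_mul A
  have := ge_of_tendsto' lim key
  linarith

/-- Every time is preceded, within one unit, by a time at which the entropy dissipation is bounded:
either the initial time or, by averaging, some time in the preceding unit window. -/
theorem Sol.good_time {μ κ R c K : ℝ} {v u θ : ℝ → ℝ → ℝ} (H : Sol μ κ R c K v u θ) {B C0 : ℝ}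
    (hB : 0 ≤ B) (hC0 : 0 ≤ C0) (hb : Bd B (v · 0) (u · 0) (θ · 0))
    (hw : ∀ t, 0 ≤ t → ∫ τ in (0 : ℝ)..t, Dh (u · τ) (θ · τ) ≤ C0) {t : ℝ} (ht : 0 ≤ t) :
    ∃ s, 0 ≤ s ∧ s ≤ t ∧ t ≤ s + 1 ∧ Dh (u · s) (θ · s) ≤ C0 + 1 + 2 * B := by
  rcases le_total t 1 with h1 | h1
  · refine ⟨0, le_rfl, ht, by linarith, ?_⟩
    have := (H.sl 0 le_rfl).Dh_le
    linarith [hb.bu', hb.bθ']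
  · by_contra! hcon
    have h0 : 0 ≤ t - 1 := by linarith
    have hlow := intervalIntegral.integral_mono_on (show t - 1 ≤ t - 1 + 1 by linarith)
      (f := fun _ => C0 + 1) (by simp)
      (H.Dh_intervalIntegrable h0 (show t - 1 ≤ t - 1 + 1 by linarith)) fun s hs => by
        have := hcon s (h0.trans hs.1) (by linarith [hs.2]) (by linarith [hs.1])
        linarith
    have hup := H.Dh_window hw h0
    simp only [intervalIntegral.integral_const, smul_eq_mul] at hlow
    linarith

/-- The pointwise bound on the temperature from the bounds on entropy, energy and effective flux. -/
theorem temperature_of_bounds {μ κ R c K : ℝ} (hμ : 0 < μ) (hκ : 0 < κ) (hR : 0 < R) (hc : 0 < c)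
    (hK : 1 ≤ K) {B C0 Ce Cf : ℝ} (hB : 0 ≤ B) (hC0 : 0 ≤ C0) (hCe : 0 ≤ Ce) (hCf : 0 ≤ Cf) :
    ∃ C : ℝ, 0 < C ∧
    ∀ v u θ : ℝ → ℝ → ℝ, Sol μ κ R c K v u θ → Bd B (v · 0) (u · 0) (θ · 0) →
    (∀ t, 0 ≤ t → nsq (u · t) ≤ C0 ∧ nsq (fun x => v x t - 1) ≤ C0 ∧
      ∫ x, (θ x t - 1) ^ 2 / (θ x t + 3) ≤ C0 ∧ ∫ τ in (0 : ℝ)..t, Dh (u · τ) (θ · τ) ≤ C0) →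
    (∀ t, 0 ≤ t → nsq (fun x => θ x t - 1) ≤ Ce) →
    (∀ t, 0 ≤ t → nsq (sg μ R (v · t) (u · t) (θ · t)) ≤ Cf ∧
      ∫ τ in t..(t + 1), nsq (sgx μ R (v · τ) (u · τ) (θ · τ)) ≤ Cf) →
    ∀ x t, 0 ≤ t → θ x t ≤ C := by
  obtain ⟨C1, hC1, hsup⟩ := sup_bounds hC0
  obtain ⟨b, hb'⟩ : ∃ b, b = 4 * (2 + K) * (1 + R ^ 2) / (μ * c) := ⟨_, rfl⟩
  have hb0 : 0 ≤ b := by rw [hb']; positivity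
  obtain ⟨γ, hγ⟩ : ∃ γ, γ = b * (1 + 2 * Cf) := ⟨_, rfl⟩
  have hγ0 : 0 ≤ γ := by rw [hγ]; positivity
  obtain ⟨N, hN⟩ : ∃ N, N = C1 * (2 + C0 + 2 * B) + 1 := ⟨_, rfl⟩
  have hN1 : 1 ≤ N := by
    have : 0 ≤ C1 * (2 + C0 + 2 * B) := by positivity
    linarith
  have hN0 : 0 < N := by linarith
  refine ⟨1 + N * Real.exp γ, by positivity, ?_⟩
  intro v u θ H hb hE hF hG x t ht
  have hw : ∀ t, 0 ≤ t → ∫ τ in (0 : ℝ)..t, Dh (u · τ) (θ · τ) ≤ C0 := fun t ht =>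
    (hE t ht).2.2.2
  obtain ⟨s, hs, hst, hts, hD⟩ := H.good_time hB hC0 hb hw ht
  have hi : ∀ t, 0 ≤ t → ∀ n : ℕ, Integrable fun x => (θ x t - 1) ^ (2 * n + 4) := by
    intro t ht n
    have S := H.sl t ht
    obtain ⟨P, -, hP⟩ := S.θ_abs
    have mw : MemLp (fun x => (θ x t - 1) ^ (2 * n + 2) * (θ x t - 1)) 2 volume :=
      memLp_bdd_mul ((S.contθ.sub continuous_const).pow _) (S.contθ.sub continuous_const) S.mθ
        (P ^ (2 * n + 2)) fun x => by
          rw [abs_pow]; exact pow_le_pow_left₀ (abs_nonneg _) (hP x) _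
    exact (int_mul mw S.mθ).congr (ae_of_all _ fun x => by simp only; ring)
  have hNs : ∀ x, |θ x s - 1| ≤ N := by
    intro x
    have S := H.sl s hs
    obtain ⟨s1, -, -⟩ := hsup K _ _ _ S (hE s hs).1 (hE s hs).2.2.1
    have h1 := s1 x
    have h2 := S.θ_pos x
    have h3 : C1 * (1 + Dh (u · s) (θ · s)) ≤ C1 * (2 + C0 + 2 * B) :=
      mul_le_mul_of_nonneg_left (by linarith) (by linarith)
    rw [abs_le]
    constructor <;> linarith
  have iα : ∀ t, s ≤ t → IntervalIntegrable (fun τ => 1 + (Cf +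
      nsq (sgx μ R (v · τ) (u · τ) (θ · τ)))) volume s t := fun t hst =>
    IntervalIntegrable.add (by simp) (IntervalIntegrable.add (by simp)
      (H.nsq_sgx_intervalIntegrable hs hst))
  have α0 : ∀ τ, 0 ≤ 1 + (Cf + nsq (sgx μ R (v · τ) (u · τ) (θ · τ))) := fun τ => by
    have := nsq_nonneg (sgx μ R (v · τ) (u · τ) (θ · τ))
    positivity
  -- on a time interval of length one the exponent in Gronwall's inequality is linear in the power
  have hα : ∫ τ in s..t, (1 + (Cf + nsq (sgx μ R (v · τ) (u · τ) (θ · τ)))) ≤ 1 + 2 * Cf := by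
    have h1 : s ≤ s + 1 := by linarith
    have := intervalIntegral.integral_mono_interval (le_refl s) hst hts
      (ae_of_all _ α0) (iα (s + 1) h1)
    refine this.trans ?_
    rw [intervalIntegral.integral_add (by simp) (IntervalIntegrable.add (by simp)
      (H.nsq_sgx_intervalIntegrable hs h1)), intervalIntegral.integral_add (by simp)
      (H.nsq_sgx_intervalIntegrable hs h1)]
    simp only [intervalIntegral.integral_const, smul_eq_mul]
    linarith [(hG s hs).2]
  have key : ∀ n : ℕ, ∫ x, (θ x t - 1) ^ (2 * n + 4) ≤
      (2 * Ce) * (N * Real.exp γ) ^ (2 * n + 4) := by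
    intro n
    have p0 : (0 : ℝ) ≤ ((2 * n + 4 : ℕ) : ℝ) := by positivity
    have gr := gronwall_int (y := fun τ => ∫ x, (θ x τ - 1) ^ (2 * n + 4))
      (h := fun τ => ∫ x, ((2 * n + 4 : ℕ) : ℝ) * (θ x τ - 1) ^ (2 * n + 3) *
        tt μ κ R c (v · τ) (u · τ) (θ · τ) x)
      (α := fun τ => ((2 * n + 4 : ℕ) : ℝ) * b *
        (1 + (Cf + nsq (sgx μ R (v · τ) (u · τ) (θ · τ))))) (c := Ce) hst
      (fun τ hτ => (H.power_energy n hs hτ.1).1) (H.power_energy n hs hst).2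
      ((iα t hst).const_mul _) (fun τ _ => mul_nonneg (mul_nonneg p0 hb0) (α0 τ)) ?_
    · have hys : ∫ x, (θ x s - 1) ^ (2 * n + 4) ≤ N ^ (2 * n + 4) * Ce := by
        have S := H.sl s hs
        have h1 : ∫ x, (θ x s - 1) ^ (2 * n + 4) ≤
            N ^ (2 * n + 2) * nsq fun x => θ x s - 1 := by
          rw [nsq, ← integral_const_mul]
          refine integral_mono (hi s hs n) (S.mθ.integrable_sq.const_mul _) fun x => ?_
          have e : (θ x s - 1) ^ (2 * n + 2) ≤ N ^ (2 * n + 2) := by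
            rw [← Even.pow_abs ⟨n + 1, by ring⟩ (θ x s - 1)]
            exact pow_le_pow_left₀ (abs_nonneg _) (hNs x) _
          have := mul_le_mul_of_nonneg_right e (sq_nonneg (θ x s - 1))
          refine le_trans (le_of_eq ?_) this
          ring
        refine h1.trans (mul_le_mul ?_ (hF s hs) (nsq_nonneg _) (by positivity))
        exact pow_le_pow_right₀ hN1 (by omega)
      rw [intervalIntegral.integral_const_mul] at gr
      have he : ((2 * n + 4 : ℕ) : ℝ) * b * (∫ τ in s..t, (1 + (Cf +
          nsq (sgx μ R (v · τ) (u · τ) (θ · τ))))) ≤ ((2 * n + 4 : ℕ) : ℝ) * γ := by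
        rw [hγ, mul_assoc]
        gcongr
      have hN' : 1 ≤ N ^ (2 * n + 4) := one_le_pow₀ hN1
      have hNC := mul_le_mul_of_nonneg_right hN' hCe
      have hy0 : 0 ≤ ∫ x, (θ x s - 1) ^ (2 * n + 4) :=
        integral_nonneg fun x => Even.pow_nonneg ⟨n + 2, by ring⟩ _
      calc _ ≤ _ := le_of_add_le_of_nonneg_left gr hCe
        _ ≤ (2 * Ce * N ^ (2 * n + 4)) * Real.exp (((2 * n + 4 : ℕ) : ℝ) * γ) := by
          refine mul_le_mul ?_ (Real.exp_le_exp.mpr he) (Real.exp_pos _).le (by positivity)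
          linarith
        _ = _ := by rw [Real.exp_nat_mul, mul_pow]; ring
    · filter_upwards [H.sl2] with τ h2 hτ
      have hτ0 := hs.trans hτ.1
      have S := h2 hτ0
      have hsl := power_slice hμ hκ hR hc hK S (Q := nsq (sg μ R (v · τ) (u · τ) (θ · τ))
        + nsq (sgx μ R (v · τ) (u · τ) (θ · τ))) (fun x => sq_le_of_memLp (fun x => S.dsg μ R x)
        (S.msg μ R) (S.msgx μ R) x) n
      refine hsl.trans ?_
      rw [← hb']
      have y0 : 0 ≤ ∫ x, (θ x τ - 1) ^ (2 * n + 4) :=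
        integral_nonneg fun x => Even.pow_nonneg ⟨n + 2, by ring⟩ _
      have g1 := (hG τ hτ0).1
      have g2 := hF τ hτ0
      have z1 := nsq_nonneg (fun x => θ x τ - 1)
      have z2 := α0 τ
      rw [← mul_assoc]
      gcongr
  have : θ x t - 1 ≤ N * Real.exp γ := le_of_power_integrals ((H.sl t ht).contθ.sub continuous_const)
    (by positivity) (hi t ht) key x
  linarith

/-- uniform upper bound on the temperature. -/
theorem temperature_upper_bound
    (μ κ R cv M m K : ℝ) (hμ : 0 < μ) (hκ : 0 < κ) (hR : 0 < R) (hcv : 0 < cv)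
    (hM : 0 < M) (hm : 0 < m) (hK : 1 ≤ K) :
    ∃ C₃ : ℝ, 0 < C₃ ∧
      ∀ v u θ : ℝ → ℝ → ℝ,
        IsClassicalSolution μ κ R cv v u θ →
        InitBounded M m v u θ →
        VolBounded K v →
        ∀ x t : ℝ, 0 ≤ t → θ x t ≤ C₃ := by
  have hB : 0 ≤ M ^ 2 := sq_nonneg M
  obtain ⟨C0, hC0, h0⟩ := entropy_bounds hμ hκ hR hcv hK hB hm
  obtain ⟨Ce, hCe, he⟩ := energy_bounds hμ hκ hR hcv hK hB hC0
  obtain ⟨Cf, hCf, hf⟩ := flux_bounds (κ := κ) hμ hR hcv hK hB hC0 hCe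
  obtain ⟨C, hC, h⟩ := temperature_of_bounds hμ hκ hR hcv hK hB hC0 hCe hCf
  refine ⟨C, hC, fun v u θ hsol hinit hvol => ?_⟩
  have H := hsol.sol hcv hK hvol
  have hb := (bd_of_H1 (hsol.smooth_x_v 0 le_rfl) (hsol.smooth_x_u 0 le_rfl)
    (hsol.smooth_x_θ 0 le_rfl) hinit.1).1
  have b0 := h0 v u θ H hb hinit.2.2
  have be := he v u θ H hb b0
  exact h v u θ H hb b0 (fun t ht => (be t ht).1) (hf v u θ H hb b0 be)
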